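/- arXiv:0709.4518 — 2 statements merged into one kernel-verified Lean document; each statement's English description precedes it below -/
import Mathlib

section
/- Let I be a homogeneous ideal of S = K[x_1,…,x_n], K an infinite field, and let in(I) be the initial ideal of I with respect to the degree reverse lexicographic order induced by x_1 > ⋯ > x_n. If S/in(I) has the strong Lefschetz property, then S/I has the strong Lefschetz property. -/
/-! Combinatorics of simplicial complexes on subsets of ℕ (vertex set `[n] = Finset.Icc 1 n`). -/

/-- `Γ` is a simplicial complex on the vertex set `V`. -/
def SimplicialComplexOn (V : Finset ℕ) (Γ : Set (Finset ℕ)) : Prop :=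
  (∀ F ∈ Γ, F ⊆ V) ∧ (∀ v ∈ V, ({v} : Finset ℕ) ∈ Γ) ∧
    (∀ F ∈ Γ, ∀ G, G ⊆ F → G ∈ Γ)

/-- The dimension of a simplicial complex, as an integer (`dim Γ = max {|F| - 1 : F ∈ Γ}`). -/
noncomputable def sdim (Γ : Set (Finset ℕ)) : ℤ :=
  sSup ((fun F : Finset ℕ => (F.card : ℤ) - 1) '' Γ)

/-- A facet of `Γ` is a maximal face. -/
def IsFacet (Γ : Set (Finset ℕ)) (F : Finset ℕ) : Prop :=
  F ∈ Γ ∧ ∀ G ∈ Γ, F ⊆ G → F = G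

/-- A complex is pure if all of its facets have the same cardinality. -/
def PureComplex (Γ : Set (Finset ℕ)) : Prop :=
  ∀ F G, IsFacet Γ F → IsFacet Γ G → F.card = G.card

/-- `fvec Γ k` is the number of faces of `Γ` of cardinality `k`, i.e. `f_{k-1}(Γ)`. -/
noncomputable def fvec (Γ : Set (Finset ℕ)) (k : ℕ) : ℕ :=
  {F ∈ Γ | F.card = k}.ncard

/-- The `h`-vector of a `(d-1)`-dimensional complex:
`h_i = ∑_{j=0}^i (-1)^{i-j} binom(d-j, d-i) f_{j-1}`. -/
noncomputable def hvec (d : ℕ) (Γ : Set (Finset ℕ)) (i : ℕ) : ℤ :=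
  ∑ j ∈ Finset.range (i + 1),
    (-1 : ℤ) ^ (i - j) * (Nat.choose (d - j) (d - i) : ℤ) * (fvec Γ j : ℤ)

/-- The link of `Γ` with respect to a face `F`. -/
def linkOf (Γ : Set (Finset ℕ)) (F : Finset ℕ) : Set (Finset ℕ) :=
  {G | Disjoint G F ∧ G ∪ F ∈ Γ}

/-- The contraction of `Γ` with respect to `{i,j}`, identifying vertex `i` with `j`. -/
def contraction (Γ : Set (Finset ℕ)) (i j : ℕ) : Set (Finset ℕ) :=
  {F | F ∈ Γ ∧ i ∉ F} ∪ {G | ∃ F ∈ Γ, i ∈ F ∧ G = F.erase i ∪ {j}}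

/-- The Link condition: `lk_Γ({i}) ∩ lk_Γ({j}) = lk_Γ({i,j})`. -/
def LinkCondition (Γ : Set (Finset ℕ)) (i j : ℕ) : Prop :=
  linkOf Γ {i} ∩ linkOf Γ {j} = linkOf Γ {i, j}

open Classical in
/-- The shift operator `C_{ij}` on faces. -/
noncomputable def shiftMap (Γ : Set (Finset ℕ)) (i j : ℕ) (F : Finset ℕ) : Finset ℕ :=
  if i ∈ F ∧ j ∉ F ∧ F.erase i ∪ {j} ∉ Γ then F.erase i ∪ {j} else F

/-- `Shift_{ij}(Γ) = {C_{ij}(F) : F ∈ Γ}`. -/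
noncomputable def shiftComplex (Γ : Set (Finset ℕ)) (i j : ℕ) : Set (Finset ℕ) :=
  (shiftMap Γ i j) '' Γ

/-- The join `W * Σ = {F ∪ G : F ⊆ W, G ∈ Σ}` of a vertex set with a complex. -/
def joinW (W : Finset ℕ) (C : Set (Finset ℕ)) : Set (Finset ℕ) :=
  {H | ∃ F ⊆ W, ∃ G ∈ C, H = F ∪ G}

/-- Strong edge decomposability: boundaries of simplices and `{∅}` are strongly edge
decomposable, and recursively, a pure complex satisfying the Link condition w.r.t. an edge
`{i,j}` whose contraction and link are strongly edge decomposable is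
strongly edge decomposable. -/
inductive StronglyEdgeDecomposable : Set (Finset ℕ) → Prop
  | trivialComplex : StronglyEdgeDecomposable {(∅ : Finset ℕ)}
  | simplexBoundary (V : Finset ℕ) (hV : V.Nonempty) :
      StronglyEdgeDecomposable {F | F ⊆ V ∧ F ≠ V}
  | contract (Γ : Set (Finset ℕ)) (i j : ℕ) (hij : i < j)
      (hpure : PureComplex Γ) (hedge : ({i, j} : Finset ℕ) ∈ Γ)
      (hlc : LinkCondition Γ i j)
      (hcon : StronglyEdgeDecomposable (contraction Γ i j))
      (hlk : StronglyEdgeDecomposable (linkOf Γ {i, j})) :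
      StronglyEdgeDecomposable Γ

/-- A shifted complex: `F ∈ Γ`, `i ∈ F`, `i < j`, `j ∈ V` imply `(F \ {i}) ∪ {j} ∈ Γ`. -/
def ShiftedComplex (V : Finset ℕ) (Γ : Set (Finset ℕ)) : Prop :=
  ∀ F ∈ Γ, ∀ i ∈ F, ∀ j, i < j → j ∈ V → insert j (F.erase i) ∈ Γ

/-- A `d`-subset `F ⊆ [n]` is admissible if `n - k ∉ F` implies `[n-d+k, n-k-1] ⊆ F`. -/
def Admissible (n d : ℕ) (F : Finset ℕ) : Prop :=
  F ⊆ Finset.Icc 1 n ∧ F.card = d ∧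
    ∀ k < n, (n - k) ∉ F → Finset.Icc (n - d + k) (n - k - 1) ⊆ F

/-- `Δ(n,d)`, the complex generated by all admissible `d`-subsets of `[n]`; by a theorem of
Kalai this is the symmetric algebraic shifted complex `Δˢ(C(n,d))` of the boundary complex of
the cyclic `d`-polytope with `n` vertices. -/
def DeltaC (n d : ℕ) : Set (Finset ℕ) :=
  if d = 0 then {(∅ : Finset ℕ)} else {G | ∃ F, Admissible n d F ∧ G ⊆ F}

/-- The increasing enumeration of `V`, as a map `{1, …, |V|} → V ⊆ ℕ` (identity elsewhere). -/
noncomputable def vlabel (V : Finset ℕ) (i : ℕ) : ℕ :=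
  if h : i - 1 < V.card then (((V.orderIsoOfFin rfl) ⟨i - 1, h⟩ : V) : ℕ) else i

/-- `Δ(V,d)`: the complex `Δ(|V|,d)` relabeled order-isomorphically onto the vertex set `V`. -/
noncomputable def DeltaV (V : Finset ℕ) (d : ℕ) : Set (Finset ℕ) :=
  (fun G : Finset ℕ => G.image (vlabel V)) '' DeltaC V.card d
/-! Squeezed balls and spheres (Kalai). Monomials on `[m]` are represented as multisets. -/

/-- `U` is a shifted order ideal of monomials on `[m]`: it contains `1` and all variables
`x_1,…,x_m`, is closed under divisibility, and `u·x_i ∈ U`, `i < j ≤ m` imply `u·x_j ∈ U`.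
(A monomial is encoded as the multiset of its variable indices.) -/
def IsShiftedOrderIdeal (m : ℕ) (U : Set (Multiset ℕ)) : Prop :=
  (∀ u ∈ U, ∀ i ∈ u, i ∈ Finset.Icc 1 m) ∧ (0 : Multiset ℕ) ∈ U ∧
    (∀ i ∈ Finset.Icc 1 m, ({i} : Multiset ℕ) ∈ U) ∧
    (∀ u ∈ U, ∀ v, v ≤ u → v ∈ U) ∧
    (∀ u : Multiset ℕ, ∀ i j : ℕ, i < j → j ≤ m → (i ::ₘ u) ∈ U → (j ::ₘ u) ∈ U)

/-- For a monomial `u = x_{i_1}⋯x_{i_k}` (`i_1 ≤ … ≤ i_k`), the `(d+1)`-set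
`F_d(u) = {i_1, i_1+1} ∪ {i_2+2, i_2+3} ∪ ⋯ ∪ {i_k+2(k-1), i_k+2k-1} ∪ [n+2k-d, n]`. -/
noncomputable def Fd (n d : ℕ) (u : Multiset ℕ) : Finset ℕ :=
  (Finset.range (Multiset.card u)).biUnion
      (fun j => {(u.sort (· ≤ ·)).getD j 0 + 2 * j, (u.sort (· ≤ ·)).getD j 0 + 2 * j + 1}) ∪
    Finset.Icc (n + 2 * Multiset.card u - d) n

/-- The squeezed `d`-ball `B_d(U)`: the complex generated by `{F_d(u) : u ∈ U}`. -/
def squeezedBall (n d : ℕ) (U : Set (Multiset ℕ)) : Set (Finset ℕ) :=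
  {G | ∃ u ∈ U, G ⊆ Fd n d u}

/-- The boundary of a pure `d`-dimensional complex `B`: the subcomplex generated by the
`(d-1)`-dimensional faces (cardinality-`d` faces) contained in exactly one facet. -/
noncomputable def complexBoundary (d : ℕ) (B : Set (Finset ℕ)) : Set (Finset ℕ) :=
  {F | ∃ G, F ⊆ G ∧ G ∈ B ∧ G.card = d ∧
    {H | H ∈ B ∧ H.card = d + 1 ∧ G ⊆ H}.ncard = 1}

/-- The squeezed `(d-1)`-sphere `S_d(U) = ∂ B_d(U)`. -/
noncomputable def squeezedSphere (n d : ℕ) (U : Set (Multiset ℕ)) : Set (Finset ℕ) :=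
  complexBoundary d (squeezedBall n d U)

/-! The Stanley–Reisner ideal, the degree reverse lexicographic order, initial ideals and
generic initial ideals in the polynomial ring `K[x_1,…,x_n]`, realized as
`MvPolynomial (Fin n) K` with the variable `x_i` being `X ⟨i-1⟩`. -/

/-- The squarefree monomial `x_F = ∏_{i ∈ F} x_i` (variable `x_i`, `1 ≤ i ≤ n`, is `X ⟨i-1⟩`). -/
noncomputable def faceMonomial (K : Type*) [CommRing K] (n : ℕ) (F : Finset ℕ) :
    MvPolynomial (Fin n) K :=
  ∏ a ∈ Finset.univ.filter (fun a : Fin n => (a : ℕ) + 1 ∈ F), MvPolynomial.X a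

/-- The Stanley–Reisner ideal of a complex `Γ` on `[n]`, generated by the squarefree
monomials `x_F` with `F ⊆ [n]`, `F ∉ Γ`. -/
noncomputable def srIdeal (K : Type*) [CommRing K] (n : ℕ) (Γ : Set (Finset ℕ)) :
    Ideal (MvPolynomial (Fin n) K) :=
  Ideal.span {f | ∃ F : Finset ℕ, F ⊆ Finset.Icc 1 n ∧ F ∉ Γ ∧ f = faceMonomial K n F}

/-- The degree reverse lexicographic order (induced by `x_1 > x_2 > ⋯`, smaller index =
bigger variable): `u < v` iff `deg u < deg v`, or degrees agree and at the largest index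
where `u, v` differ, `u` has the larger exponent. -/
def DegRevLexLT {σ : Type*} [LinearOrder σ] (u v : σ →₀ ℕ) : Prop :=
  (u.sum fun _ e => e) < (v.sum fun _ e => e) ∨
    ((u.sum fun _ e => e) = (v.sum fun _ e => e) ∧
      ∃ k, v k < u k ∧ ∀ l, k < l → u l = v l)

/-- The initial ideal of `I` w.r.t. the degree reverse lexicographic order: the ideal
spanned by the leading monomials of the elements of `I`. -/
noncomputable def initialIdeal {σ : Type*} [LinearOrder σ] {K : Type*} [Field K]
    (I : Ideal (MvPolynomial σ K)) : Ideal (MvPolynomial σ K) :=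
  Ideal.span {m | ∃ f ∈ I, ∃ u ∈ f.support, m = MvPolynomial.monomial u (1 : K) ∧
    ∀ v ∈ f.support, v ≠ u → DegRevLexLT v u}

/-- The linear change of coordinates of `K[x_1,…,x_n]` associated with a matrix `M`,
`x_j ↦ ∑_i M_{ij} x_i`. -/
noncomputable def genLin {K : Type*} [CommRing K] {n : ℕ} (M : Matrix (Fin n) (Fin n) K) :
    MvPolynomial (Fin n) K →ₐ[K] MvPolynomial (Fin n) K :=
  MvPolynomial.aeval (fun j => ∑ a : Fin n, MvPolynomial.C (M a j) * MvPolynomial.X a)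

/-- `J` is the generic initial ideal (w.r.t. degrevlex) of `I`: there is a nonempty Zariski
open subset `U ⊆ GL_n(K)` (the nonvanishing locus of a nonzero polynomial in the matrix
entries) such that `in(φ(I)) = J` for every `φ ∈ U`. -/
def IsGin {K : Type*} [Field K] {n : ℕ} (I J : Ideal (MvPolynomial (Fin n) K)) : Prop :=
  ∃ p : MvPolynomial (Fin n × Fin n) K, p ≠ 0 ∧
    ∀ M : Matrix (Fin n) (Fin n) K, IsUnit M.det →
      MvPolynomial.eval (fun q => M q.1 q.2) p ≠ 0 →
      initialIdeal (Ideal.map (genLin M) I) = J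

/-- The set `G(J)` of (exponent vectors of) minimal monomial generators of a monomial
ideal `J`. -/
def minimalMonomialGens {σ : Type*} {K : Type*} [Field K] (J : Ideal (MvPolynomial σ K)) :
    Set (σ →₀ ℕ) :=
  {u | MvPolynomial.monomial u (1 : K) ∈ J ∧
    ∀ v : σ →₀ ℕ, v ≤ u → MvPolynomial.monomial v (1 : K) ∈ J → v = u}

/-- The squarefree operation `Φ` on exponent vectors:
`x_{i_1} x_{i_2} ⋯ x_{i_k} ↦ {i_1, i_2+1, …, i_k+k-1}` (`i_1 ≤ i_2 ≤ ⋯ ≤ i_k`). -/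
noncomputable def sqfreeOp {n : ℕ} (u : Fin n →₀ ℕ) : Finset ℕ :=
  (List.zipWith (· + ·)
      ((u.toMultiset.map (fun a : Fin n => (a : ℕ) + 1)).sort (· ≤ ·))
      (List.range (Multiset.card (u.toMultiset)))).toFinset

/-- `Δs` is the symmetric algebraic shifted complex of `Γ`: its Stanley–Reisner ideal is
`Φ(Gin(I_Γ))`, i.e. `Δs` consists of the `F ⊆ [n]` containing no `Φ(u)`, `u ∈ G(Gin(I_Γ))`. -/
def IsSymmetricShift (K : Type*) [Field K] (n : ℕ) (Γ Δs : Set (Finset ℕ)) : Prop :=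
  ∃ J : Ideal (MvPolynomial (Fin n) K), IsGin (srIdeal K n Γ) J ∧
    Δs = {F | F ⊆ Finset.Icc 1 n ∧ ∀ u ∈ minimalMonomialGens J, ¬ sqfreeOp u ⊆ F}

/-- The exponent vector (in `K[x_1,…,x_n]`) of a monomial given as a multiset. -/
noncomputable def multisetToExp (n : ℕ) (u : Multiset ℕ) : Fin n →₀ ℕ :=
  Finsupp.equivFunOnFinite.symm (fun a : Fin n => u.count ((a : ℕ) + 1))
/-! The exterior algebra `E = ⋀⟨e_1, e_2, …⟩` over `K`, exterior face ideals, the reverse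
lexicographic order, initial ideals and exterior algebraic shifting. We realize `E` as the
exterior algebra of the `K`-module `ℕ → K`, with `e_i` the image of `Pi.single i 1`. -/

/-- The exterior algebra `⋀ (ℕ → K)` hosting all the exterior face ideals. -/
abbrev ExtAlg (K : Type*) [Field K] := ExteriorAlgebra K (ℕ → K)

/-- The exterior monomial `e_F = e_{i_1} ∧ ⋯ ∧ e_{i_k}` for `F = {i_1 < ⋯ < i_k}`. -/
noncomputable def eMon (K : Type*) [Field K] (F : Finset ℕ) : ExtAlg K :=
  ((F.sort (· ≤ ·)).map (fun i => ExteriorAlgebra.ι K (Pi.single i (1 : K)))).prod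

/-- The exterior face ideal `J_Γ` of a complex `Γ` on the vertex set `V`, generated by the
monomials `e_F` with `F ⊆ V`, `F ∉ Γ`. -/
noncomputable def extFaceIdeal (K : Type*) [Field K] (V : Finset ℕ) (Γ : Set (Finset ℕ)) :
    Ideal (ExtAlg K) :=
  Ideal.span {x | ∃ F : Finset ℕ, F ⊆ V ∧ F ∉ Γ ∧ x = eMon K F}

/-- The alternating form computing the determinant of the coordinates indexed by `F`. -/
noncomputable def detCoeffAlt (K : Type*) [Field K] (F : Finset ℕ) :
    (ℕ → K) [⋀^Fin F.card]→ₗ[K] K :=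
  (Matrix.detRowAlternating).compLinearMap
    (LinearMap.funLeft K K (fun b : Fin F.card => ((F.orderIsoOfFin rfl b : F) : ℕ)))

/-- The coefficient functional of the basis monomial `e_F`: the linear functional on the
exterior algebra giving the coefficient of `e_F` in the monomial basis expansion. -/
noncomputable def extCoeff (K : Type*) [Field K] (F : Finset ℕ) : ExtAlg K →ₗ[K] K :=
  ExteriorAlgebra.liftAlternating
    (fun i => if h : i = F.card then (detCoeffAlt K F).domDomCongr (finCongr h.symm) else 0)

/-- The reverse lexicographic order (induced by `1 > 2 > ⋯`) on exterior monomials: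
`F < G` iff `|F| < |G|`, or the cardinalities agree and the largest element of the
symmetric difference `F Δ G` belongs to `F`. -/
def RevLexLT (F G : Finset ℕ) : Prop :=
  F.card < G.card ∨ (F.card = G.card ∧
    ∃ k, k ∈ F ∧ k ∉ G ∧ ∀ l, k < l → (l ∈ F ↔ l ∈ G))

/-- The initial ideal of an ideal `I` of the exterior algebra w.r.t. the reverse
lexicographic order: spanned by the leading monomials `e_F` of the elements of `I`. -/
noncomputable def extInitialIdeal (K : Type*) [Field K] (I : Ideal (ExtAlg K)) :
    Ideal (ExtAlg K) :=
  Ideal.span {x | ∃ y ∈ I, ∃ F : Finset ℕ, x = eMon K F ∧ extCoeff K F y ≠ 0 ∧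
    ∀ G : Finset ℕ, extCoeff K G y ≠ 0 → G ≠ F → RevLexLT G F}

/-- The linear change of coordinates of `span{e_i : i ∈ V}` (identity elsewhere)
associated with a `|V| × |V|` matrix `M`. -/
noncomputable def extLinMap (K : Type*) [Field K] (V : Finset ℕ)
    (M : Matrix (Fin V.card) (Fin V.card) K) : (ℕ → K) →ₗ[K] (ℕ → K) where
  toFun v k :=
    if h : k ∈ V then
      ∑ a : Fin V.card,
        M ((V.orderIsoOfFin rfl).symm ⟨k, h⟩) a * v ((V.orderIsoOfFin rfl a : V) : ℕ)
    else v k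
  map_add' x y := by
    funext k
    by_cases h : k ∈ V <;> simp [h, mul_add, Finset.sum_add_distrib]
  map_smul' c x := by
    funext k
    by_cases h : k ∈ V <;> simp [h, Finset.mul_sum, mul_left_comm]

/-- The algebra automorphism of the exterior algebra induced by `extLinMap`. -/
noncomputable def extAlgMap (K : Type*) [Field K] (V : Finset ℕ)
    (M : Matrix (Fin V.card) (Fin V.card) K) : ExtAlg K →ₐ[K] ExtAlg K :=
  ExteriorAlgebra.lift K ⟨(ExteriorAlgebra.ι K).comp (extLinMap K V M),
    fun _ => ExteriorAlgebra.ι_sq_zero _⟩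

/-- `Δe` is the exterior algebraic shifted complex of `Γ` (as complexes on the vertex set
`V`): `J_{Δe} = Gin(J_Γ)`, where the generic initial ideal is witnessed by a nonempty
Zariski open subset of `GL(V)` (the nonvanishing locus of a nonzero polynomial in the
matrix entries). -/
def IsExteriorShift (K : Type*) [Field K] (V : Finset ℕ) (Γ Δe : Set (Finset ℕ)) : Prop :=
  ∃ p : MvPolynomial (Fin V.card × Fin V.card) K, p ≠ 0 ∧
    ∀ M : Matrix (Fin V.card) (Fin V.card) K, IsUnit M.det →
      MvPolynomial.eval (fun q => M q.1 q.2) p ≠ 0 →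
      extInitialIdeal K (Ideal.map (extAlgMap K V M) (extFaceIdeal K V Γ)) =
        extFaceIdeal K V Δe

/-- The simplicial complex on `V` whose exterior face ideal is the (monomial) ideal `J`. -/
noncomputable def complexOfExtIdeal (K : Type*) [Field K] (V : Finset ℕ)
    (J : Ideal (ExtAlg K)) : Set (Finset ℕ) :=
  {F | F ⊆ V ∧ eMon K F ∉ J}

/-- Nongeneric exterior shifting `Δ_φ(Γ)`, defined by `J_{Δ_φ(Γ)} = in(φ(J_Γ))` for an
individual linear change of coordinates `φ` given by the matrix `M`. -/
noncomputable def DeltaPhi (K : Type*) [Field K] (V : Finset ℕ)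
    (M : Matrix (Fin V.card) (Fin V.card) K) (Γ : Set (Finset ℕ)) : Set (Finset ℕ) :=
  complexOfExtIdeal K V (extInitialIdeal K (Ideal.map (extAlgMap K V M) (extFaceIdeal K V Γ)))

/-- The shifting-theoretic upper bound relation for a `(d-1)`-dimensional complex `Γ` on the
vertex set `V`: `Δᵉ(Γ) ⊆ Δ(V,d)`. -/
def ShiftingUBR (K : Type*) [Field K] (V : Finset ℕ) (d : ℕ) (Γ : Set (Finset ℕ)) : Prop :=
  ∀ Δe, IsExteriorShift K V Γ Δe → Δe ⊆ DeltaV V d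
/-! Graded pieces, linear systems of parameters, the Cohen–Macaulay property and the strong
Lefschetz property for graded quotients `A = K[x_1,…,x_n]/I`. -/

/-- The degree-`k` homogeneous component of the graded quotient `S/I` (the image of the
degree-`k` homogeneous polynomials). -/
noncomputable def quotPiece {K : Type*} [Field K] {n : ℕ}
    (I : Ideal (MvPolynomial (Fin n) K)) (k : ℕ) :
    Submodule K (MvPolynomial (Fin n) K ⧸ I) :=
  (MvPolynomial.homogeneousSubmodule (Fin n) K k).map (Ideal.Quotient.mkₐ K I).toLinearMap

/-- `θ_1, …, θ_d` is a linear system of parameters of `S/I`: the `θ_a` are linear forms and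
the quotient `S/(I + (θ_1,…,θ_d))` has Krull dimension `≤ 0`. -/
def IsLSOP {K : Type*} [Field K] {n : ℕ} (I : Ideal (MvPolynomial (Fin n) K)) (d : ℕ)
    (θ : Fin d → MvPolynomial (Fin n) K) : Prop :=
  (∀ a, (θ a).IsHomogeneous 1) ∧
    ringKrullDim (MvPolynomial (Fin n) K ⧸ (I ⊔ Ideal.span (Set.range θ))) ≤ 0

set_option synthInstance.maxHeartbeats 1000000 in
/-- The graded quotient `A = S/I` is Cohen–Macaulay: a linear system of parameters of
length `d = dim A` forms a regular `A`-sequence. -/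
def IsCMIdeal {K : Type*} [Field K] {n : ℕ} (I : Ideal (MvPolynomial (Fin n) K)) : Prop :=
  ∃ d : ℕ, ringKrullDim (MvPolynomial (Fin n) K ⧸ I) = d ∧
    ∃ θ : Fin d → MvPolynomial (Fin n) K, IsLSOP I d θ ∧
      RingTheory.Sequence.IsRegular (MvPolynomial (Fin n) K ⧸ I)
        ((List.ofFn θ).map (⇑(Ideal.Quotient.mk I)))

/-- The graded quotient `A = S/I` has the strong Lefschetz property: `A` is Cohen–Macaulay
and there are an l.s.o.p. `θ_1, …, θ_d` (`d = dim A`) and a linear form `ω` such that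
`ω^{s-2i} : (A/θA)_i → (A/θA)_{s-i}` is bijective for `0 ≤ i ≤ s/2`, where
`s = max{k : (A/θA)_k ≠ 0}`. -/
def HasSLPIdeal {K : Type*} [Field K] {n : ℕ} (I : Ideal (MvPolynomial (Fin n) K)) : Prop :=
  IsCMIdeal I ∧
    ∃ d : ℕ, ringKrullDim (MvPolynomial (Fin n) K ⧸ I) = d ∧
      ∃ θ : Fin d → MvPolynomial (Fin n) K, IsLSOP I d θ ∧
        ∃ ω : MvPolynomial (Fin n) K, ω.IsHomogeneous 1 ∧
          ∃ s : ℕ,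
            (quotPiece (I ⊔ Ideal.span (Set.range θ)) s ≠ ⊥ ∧
              ∀ k, s < k → quotPiece (I ⊔ Ideal.span (Set.range θ)) k = ⊥) ∧
            ∀ i : ℕ, 2 * i ≤ s →
              Set.BijOn
                (fun x => (Ideal.Quotient.mk (I ⊔ Ideal.span (Set.range θ)) ω) ^ (s - 2 * i) * x)
                (quotPiece (I ⊔ Ideal.span (Set.range θ)) i)
                (quotPiece (I ⊔ Ideal.span (Set.range θ)) (s - i))

/-- A simplicial complex is Cohen–Macaulay over `K` if its Stanley–Reisner ring is. -/
def ComplexCM (K : Type*) [Field K] (n : ℕ) (Γ : Set (Finset ℕ)) : Prop :=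
  IsCMIdeal (srIdeal K n Γ)

/-- A `(d-1)`-dimensional complex `Γ` has the strong Lefschetz property if `h_d(Γ) > 0` and
its Stanley–Reisner ring has the strong Lefschetz property. -/
def ComplexSLP (K : Type*) [Field K] (n d : ℕ) (Γ : Set (Finset ℕ)) : Prop :=
  0 < hvec d Γ d ∧ HasSLPIdeal (srIdeal K n Γ)

/-- A `1`-dimensional simplicial sphere (a cycle): a complex all of whose faces are edges or
smaller, every vertex lying in exactly two edges, whose edge graph is connected. -/
def IsCycleComplex (V : Finset ℕ) (Γ : Set (Finset ℕ)) : Prop :=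
  SimplicialComplexOn V Γ ∧ (∀ F ∈ Γ, F.card ≤ 2) ∧
    (∀ v ∈ V, {e | e ∈ Γ ∧ e.card = 2 ∧ v ∈ e}.ncard = 2) ∧
    ∀ u ∈ V, ∀ v ∈ V,
      Relation.ReflTransGen (fun a b : ℕ => ({a, b} : Finset ℕ) ∈ Γ) u v

namespace GradedQuotient

open MvPolynomial Module

variable {K : Type*} [Field K] {n : ℕ}

/-- An ideal of the polynomial ring that is stable under taking homogeneous components. -/
def IsGraded (I : Ideal (MvPolynomial (Fin n) K)) : Prop :=
  ∀ f ∈ I, ∀ k : ℕ, homogeneousComponent k f ∈ I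

theorem homogeneousComponent_mul_of_isHomogeneous {x : MvPolynomial (Fin n) K} {d : ℕ}
    (hx : x.IsHomogeneous d) (f : MvPolynomial (Fin n) K) (k : ℕ) :
    homogeneousComponent (d + k) (x * f) = x * homogeneousComponent k f := by
  conv_lhs => rw [← sum_homogeneousComponent f, Finset.mul_sum, map_sum]
  have key : ∀ i, homogeneousComponent (d + k) (x * homogeneousComponent i f) =
      if i = k then x * homogeneousComponent k f else 0 := by
    intro i
    rw [homogeneousComponent_of_mem (n := d + i)
      ((mem_homogeneousSubmodule _ _).2 (hx.mul (homogeneousComponent_isHomogeneous i f)))]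
    by_cases h : i = k
    · simp [h]
    · rw [if_neg h, if_neg (by omega)]
  simp_rw [key, Finset.sum_ite_eq', Finset.mem_range]
  split_ifs with h
  · rfl
  · rw [homogeneousComponent_eq_zero _ _ (by omega), mul_zero]

theorem homogeneousComponent_mul_of_lt {x : MvPolynomial (Fin n) K} {d : ℕ}
    (hx : x.IsHomogeneous d) (f : MvPolynomial (Fin n) K) {k : ℕ} (hk : k < d) :
    homogeneousComponent k (x * f) = 0 := by
  conv_lhs => rw [← sum_homogeneousComponent f, Finset.mul_sum, map_sum]
  refine Finset.sum_eq_zero fun i _ => ?_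
  rw [homogeneousComponent_of_mem (n := d + i)
    ((mem_homogeneousSubmodule _ _).2 (hx.mul (homogeneousComponent_isHomogeneous i f))),
    if_neg (by omega)]

theorem IsGraded.span {s : Set (MvPolynomial (Fin n) K)}
    (hs : ∀ x ∈ s, ∃ d, x.IsHomogeneous d) : IsGraded (Ideal.span s) := by
  intro f hf k
  induction hf using Submodule.span_induction generalizing k with
  | mem x hx =>
    obtain ⟨d, hd⟩ := hs x hx
    rw [homogeneousComponent_of_mem ((mem_homogeneousSubmodule _ _).2 hd)]
    split_ifs
    · exact Ideal.subset_span hx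
    · exact zero_mem _
  | zero => simp
  | add x y _ _ hx hy => rw [map_add]; exact add_mem (hx k) (hy k)
  | smul a x _ hx =>
    rw [smul_eq_mul, ← sum_homogeneousComponent a, Finset.sum_mul, map_sum]
    refine sum_mem fun i _ => ?_
    by_cases h : i ≤ k
    · obtain ⟨j, rfl⟩ := Nat.exists_eq_add_of_le h
      rw [homogeneousComponent_mul_of_isHomogeneous (homogeneousComponent_isHomogeneous i a)]
      exact Ideal.mul_mem_left _ _ (hx j)
    · rw [homogeneousComponent_mul_of_lt (homogeneousComponent_isHomogeneous i a) _ (by omega)]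
      exact zero_mem _

theorem IsGraded.sup {I J : Ideal (MvPolynomial (Fin n) K)} (hI : IsGraded I)
    (hJ : IsGraded J) : IsGraded (I ⊔ J) := by
  intro f hf k
  obtain ⟨a, ha, b, hb, rfl⟩ := Submodule.mem_sup.1 hf
  rw [map_add]
  exact Submodule.add_mem_sup (hI a ha k) (hJ b hb k)

theorem mem_of_homogeneousComponent_mem {I : Ideal (MvPolynomial (Fin n) K)}
    {f : MvPolynomial (Fin n) K} (h : ∀ k, homogeneousComponent k f ∈ I) : f ∈ I := by
  rw [← sum_homogeneousComponent f]
  exact sum_mem fun k _ => h k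

instance finiteDimensional_homogeneousSubmodule (k : ℕ) :
    FiniteDimensional K (homogeneousSubmodule (Fin n) K k) :=
  Module.Finite.iff_fg.2 (homogeneousSubmodule_fg _ _ k)

/-- The degree `k` part of an ideal. -/
noncomputable def idealPiece (I : Ideal (MvPolynomial (Fin n) K)) (k : ℕ) :
    Submodule K (MvPolynomial (Fin n) K) :=
  I.restrictScalars K ⊓ homogeneousSubmodule (Fin n) K k

theorem mem_idealPiece {I : Ideal (MvPolynomial (Fin n) K)} {k : ℕ}
    {f : MvPolynomial (Fin n) K} : f ∈ idealPiece I k ↔ f ∈ I ∧ f.IsHomogeneous k := by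
  simp [idealPiece]

theorem idealPiece_le (I : Ideal (MvPolynomial (Fin n) K)) (k : ℕ) :
    idealPiece I k ≤ homogeneousSubmodule (Fin n) K k := inf_le_right

instance (I : Ideal (MvPolynomial (Fin n) K)) (k : ℕ) :
    FiniteDimensional K (idealPiece I k) :=
  Submodule.finiteDimensional_of_le (idealPiece_le I k)

instance (I : Ideal (MvPolynomial (Fin n) K)) (k : ℕ) :
    FiniteDimensional K (quotPiece I k) := by
  unfold quotPiece; infer_instance

/-- The Hilbert function of `S/I`. -/
noncomputable def hilb (I : Ideal (MvPolynomial (Fin n) K)) (k : ℕ) : ℕ :=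
  finrank K (quotPiece I k)

theorem mem_quotPiece {I : Ideal (MvPolynomial (Fin n) K)} {k : ℕ}
    {y : MvPolynomial (Fin n) K ⧸ I} :
    y ∈ quotPiece I k ↔ ∃ f : MvPolynomial (Fin n) K, f.IsHomogeneous k ∧
      Ideal.Quotient.mk I f = y := by
  simp [quotPiece, Submodule.mem_map]

theorem finrank_map_add_finrank_inf_ker {V W : Type*} [AddCommGroup V] [Module K V]
    [AddCommGroup W] [Module K W] (φ : V →ₗ[K] W) (U : Submodule K V)
    [FiniteDimensional K U] :
    finrank K (U.map φ) + finrank K (LinearMap.ker φ ⊓ U : Submodule K V) = finrank K U := by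
  have h := LinearMap.finrank_range_add_finrank_ker (φ.domRestrict U)
  rw [LinearMap.range_domRestrict] at h
  rw [← h, LinearMap.ker_domRestrict,
    ← LinearEquiv.finrank_eq (Submodule.comapSubtypeEquivOfLe (inf_le_right :
      LinearMap.ker φ ⊓ U ≤ U)), Submodule.comap_inf, Submodule.comap_subtype_self, inf_top_eq]

theorem hilb_add_finrank_idealPiece (I : Ideal (MvPolynomial (Fin n) K)) (k : ℕ) :
    hilb I k + finrank K (idealPiece I k) = finrank K (homogeneousSubmodule (Fin n) K k) := by
  rw [← finrank_map_add_finrank_inf_ker (Ideal.Quotient.mkₐ K I).toLinearMap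
    (homogeneousSubmodule (Fin n) K k)]
  have : LinearMap.ker (Ideal.Quotient.mkₐ K I).toLinearMap = I.restrictScalars K := by
    ext f
    simp [Ideal.Quotient.eq_zero_iff_mem]
  rw [this]
  rfl

theorem quotPiece_eq_bot_iff {I : Ideal (MvPolynomial (Fin n) K)} {k : ℕ} :
    quotPiece I k = ⊥ ↔ ∀ f : MvPolynomial (Fin n) K, f.IsHomogeneous k → f ∈ I := by
  rw [eq_bot_iff]
  constructor
  · intro h f hf
    have := h (mem_quotPiece.2 ⟨f, hf, rfl⟩)
    rwa [Submodule.mem_bot, Ideal.Quotient.eq_zero_iff_mem] at this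
  · rintro h y hy
    obtain ⟨f, hf, rfl⟩ := mem_quotPiece.1 hy
    rw [Submodule.mem_bot, Ideal.Quotient.eq_zero_iff_mem]
    exact h f hf

theorem hilb_eq_zero_iff {I : Ideal (MvPolynomial (Fin n) K)} {k : ℕ} :
    hilb I k = 0 ↔ quotPiece I k = ⊥ := Submodule.finrank_eq_zero

theorem mem_sup_span_singleton {I : Ideal (MvPolynomial (Fin n) K)}
    {x f : MvPolynomial (Fin n) K} :
    f ∈ I ⊔ Ideal.span {x} ↔ ∃ g, f - x * g ∈ I := by
  rw [Submodule.mem_sup]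
  constructor
  · rintro ⟨a, ha, b, hb, rfl⟩
    obtain ⟨g, rfl⟩ := Ideal.mem_span_singleton'.1 hb
    exact ⟨g, by rwa [mul_comm x, add_sub_cancel_right]⟩
  · rintro ⟨g, hg⟩
    exact ⟨_, hg, x * g, Ideal.mul_mem_right _ _ (Ideal.subset_span rfl), by ring⟩

theorem hilb_zero_sup {I : Ideal (MvPolynomial (Fin n) K)} (hI : IsGraded I)
    {x : MvPolynomial (Fin n) K} (hx : x.IsHomogeneous 1) :
    hilb (I ⊔ Ideal.span {x}) 0 = hilb I 0 := by
  have h1 := hilb_add_finrank_idealPiece I 0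
  have h2 := hilb_add_finrank_idealPiece (I ⊔ Ideal.span {x}) 0
  have : idealPiece (I ⊔ Ideal.span {x}) 0 = idealPiece I 0 := by
    ext f
    rw [mem_idealPiece, mem_idealPiece, mem_sup_span_singleton]
    refine and_congr_left fun hf => ⟨fun ⟨g, hg⟩ => ?_, fun h => ⟨0, by simpa⟩⟩
    have := hI _ hg 0
    rwa [map_sub, homogeneousComponent_mul_of_lt hx _ one_pos, sub_zero,
      homogeneousComponent_eq_self ((mem_homogeneousSubmodule _ _).2 hf)] at this
  rw [this] at h2
  omega

/-- The Hilbert function along multiplication by a linear form. -/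
theorem hilb_succ_add {I : Ideal (MvPolynomial (Fin n) K)} (hI : IsGraded I)
    {x : MvPolynomial (Fin n) K} (hx : x.IsHomogeneous 1) (k : ℕ) :
    ∃ U : Submodule K (MvPolynomial (Fin n) K), FiniteDimensional K U ∧
      (∀ f, f ∈ U ↔ x * f ∈ I ∧ f.IsHomogeneous k) ∧
      hilb I (k + 1) + finrank K U =
        hilb (I ⊔ Ideal.span {x}) (k + 1) + finrank K (homogeneousSubmodule (Fin n) K k) := by
  let ψ := (Ideal.Quotient.mkₐ K I).toLinearMap ∘ₗ LinearMap.mulLeft K x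
  let π := (Ideal.Quotient.factorₐ K (le_sup_left : I ≤ I ⊔ Ideal.span {x})).toLinearMap
  have hψ : ∀ f, ψ f = Ideal.Quotient.mk I (x * f) := fun f => rfl
  have hπ : ∀ f, π (Ideal.Quotient.mk I f) = Ideal.Quotient.mk _ f := fun f => rfl
  have h1 := finrank_map_add_finrank_inf_ker ψ (homogeneousSubmodule (Fin n) K k)
  have h2 := finrank_map_add_finrank_inf_ker π (quotPiece I (k + 1))
  have e1 : (quotPiece I (k + 1)).map π = quotPiece (I ⊔ Ideal.span {x}) (k + 1) := by
    ext y
    rw [Submodule.mem_map, mem_quotPiece]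
    constructor
    · rintro ⟨z, hz, rfl⟩
      obtain ⟨f, hf, rfl⟩ := mem_quotPiece.1 hz
      exact ⟨f, hf, rfl⟩
    · rintro ⟨f, hf, rfl⟩
      exact ⟨_, mem_quotPiece.2 ⟨f, hf, rfl⟩, rfl⟩
  have e2 : LinearMap.ker π ⊓ quotPiece I (k + 1) =
      (homogeneousSubmodule (Fin n) K k).map ψ := by
    ext y
    rw [Submodule.mem_inf, LinearMap.mem_ker, Submodule.mem_map]
    constructor
    · rintro ⟨hy, hz⟩
      obtain ⟨f, hf, rfl⟩ := mem_quotPiece.1 hz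
      rw [hπ, Ideal.Quotient.eq_zero_iff_mem, mem_sup_span_singleton] at hy
      obtain ⟨g, hg⟩ := hy
      refine ⟨homogeneousComponent k g, homogeneousComponent_mem _ _, ?_⟩
      rw [hψ, eq_comm, Ideal.Quotient.eq]
      have := hI _ hg (1 + k)
      rwa [map_sub, homogeneousComponent_mul_of_isHomogeneous hx, add_comm,
        homogeneousComponent_eq_self ((mem_homogeneousSubmodule _ _).2 hf)] at this
    · rintro ⟨f, hf, rfl⟩
      refine ⟨?_, mem_quotPiece.2 ⟨x * f, ?_, rfl⟩⟩
      · rw [hψ, hπ, Ideal.Quotient.eq_zero_iff_mem]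
        exact Ideal.mul_mem_right _ _ (Ideal.mem_sup_right (Ideal.subset_span rfl))
      · rw [add_comm]
        exact hx.mul ((mem_homogeneousSubmodule _ _).1 hf)
  refine ⟨LinearMap.ker ψ ⊓ homogeneousSubmodule (Fin n) K k,
    Submodule.finiteDimensional_of_le inf_le_right, fun f => ?_, ?_⟩
  · rw [Submodule.mem_inf, LinearMap.mem_ker, hψ, Ideal.Quotient.eq_zero_iff_mem,
      mem_homogeneousSubmodule]
  · rw [e1, e2] at h2
    unfold hilb
    omega

/-- Multiplication by `x` is injective on `S/I`. -/
def NZD (I : Ideal (MvPolynomial (Fin n) K)) (x : MvPolynomial (Fin n) K) : Prop :=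
  ∀ f, x * f ∈ I → f ∈ I

theorem idealPiece_le_of_mem_iff {I : Ideal (MvPolynomial (Fin n) K)}
    {x : MvPolynomial (Fin n) K} {k : ℕ} {U : Submodule K (MvPolynomial (Fin n) K)}
    (hU : ∀ f, f ∈ U ↔ x * f ∈ I ∧ f.IsHomogeneous k) : idealPiece I k ≤ U := by
  intro f hf
  rw [mem_idealPiece] at hf
  exact (hU f).2 ⟨Ideal.mul_mem_left _ _ hf.1, hf.2⟩

theorem hilb_succ_le {I : Ideal (MvPolynomial (Fin n) K)} (hI : IsGraded I)
    {x : MvPolynomial (Fin n) K} (hx : x.IsHomogeneous 1) (k : ℕ) :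
    hilb I (k + 1) ≤ hilb I k + hilb (I ⊔ Ideal.span {x}) (k + 1) := by
  obtain ⟨U, hfin, hU, h⟩ := hilb_succ_add hI hx k
  have h1 := Submodule.finrank_mono (idealPiece_le_of_mem_iff hU)
  have h2 := hilb_add_finrank_idealPiece I k
  omega

theorem nzd_iff_hilb {I : Ideal (MvPolynomial (Fin n) K)} (hI : IsGraded I)
    {x : MvPolynomial (Fin n) K} (hx : x.IsHomogeneous 1) :
    NZD I x ↔ ∀ k, hilb I (k + 1) = hilb I k + hilb (I ⊔ Ideal.span {x}) (k + 1) := by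
  constructor
  · intro hz k
    obtain ⟨U, hfin, hU, h⟩ := hilb_succ_add hI hx k
    have h1 : idealPiece I k = U := le_antisymm (idealPiece_le_of_mem_iff hU) fun f hf =>
      mem_idealPiece.2 ⟨hz f ((hU f).1 hf).1, ((hU f).1 hf).2⟩
    have h2 := hilb_add_finrank_idealPiece I k
    rw [h1] at h2
    omega
  · intro he f hf
    refine mem_of_homogeneousComponent_mem fun k => ?_
    obtain ⟨U, hfin, hU, h⟩ := hilb_succ_add hI hx k
    have h2 := hilb_add_finrank_idealPiece I k
    have h1 : idealPiece I k = U := Submodule.eq_of_le_of_finrank_eq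
      (idealPiece_le_of_mem_iff hU) (by have := he k; omega)
    have : homogeneousComponent k f ∈ U := by
      refine (hU _).2 ⟨?_, homogeneousComponent_isHomogeneous k f⟩
      rw [← homogeneousComponent_mul_of_isHomogeneous hx]
      exact hI _ hf _
    rw [← h1] at this
    exact (mem_idealPiece.1 this).1

/-- Partial sums of a sequence. -/
def partialSum (h : ℕ → ℕ) (k : ℕ) : ℕ := ∑ j ∈ Finset.range (k + 1), h j

theorem partialSum_mono {g h : ℕ → ℕ} (hgh : g ≤ h) : partialSum g ≤ partialSum h :=
  fun _ => Finset.sum_le_sum fun j _ => hgh j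

theorem partialSum_succ (h : ℕ → ℕ) (k : ℕ) :
    partialSum h (k + 1) = partialSum h k + h (k + 1) := Finset.sum_range_succ _ _

theorem partialSum_zero (h : ℕ → ℕ) : partialSum h 0 = h 0 := by simp [partialSum]

theorem partialSum_injective : Function.Injective partialSum := by
  intro g h hgh
  funext k
  cases k with
  | zero => rw [← partialSum_zero g, ← partialSum_zero h, hgh]
  | succ k =>
    have h1 := partialSum_succ g k
    have h2 := partialSum_succ h k
    rw [hgh, h2] at h1
    exact (Nat.add_left_cancel h1).symm

theorem iterate_partialSum_mono {g h : ℕ → ℕ} (hgh : g ≤ h) (d : ℕ) :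
    partialSum^[d] g ≤ partialSum^[d] h := by
  induction d with
  | zero => exact hgh
  | succ d ih => simpa only [Function.iterate_succ_apply'] using partialSum_mono ih

theorem hilb_le_partialSum {I : Ideal (MvPolynomial (Fin n) K)} (hI : IsGraded I)
    {x : MvPolynomial (Fin n) K} (hx : x.IsHomogeneous 1) :
    hilb I ≤ partialSum (hilb (I ⊔ Ideal.span {x})) := by
  intro k
  induction k with
  | zero => rw [partialSum_zero, hilb_zero_sup hI hx]
  | succ k ih =>
    rw [partialSum_succ]
    exact (hilb_succ_le hI hx k).trans (Nat.add_le_add_right ih _)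

theorem nzd_iff_hilb_eq_partialSum {I : Ideal (MvPolynomial (Fin n) K)} (hI : IsGraded I)
    {x : MvPolynomial (Fin n) K} (hx : x.IsHomogeneous 1) :
    NZD I x ↔ hilb I = partialSum (hilb (I ⊔ Ideal.span {x})) := by
  rw [nzd_iff_hilb hI hx]
  constructor
  · intro h
    funext k
    induction k with
    | zero => rw [partialSum_zero, hilb_zero_sup hI hx]
    | succ k ih => rw [h, partialSum_succ, ih]
  · intro h k
    rw [h, partialSum_succ]

/-- The list `l` is a regular sequence on `S/I`, except that the final quotient is allowed to
vanish. -/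
def RegSeq : Ideal (MvPolynomial (Fin n) K) → List (MvPolynomial (Fin n) K) → Prop
  | _, [] => True
  | I, x :: l => NZD I x ∧ RegSeq (I ⊔ Ideal.span {x}) l

theorem isGraded_sup_ofList {I : Ideal (MvPolynomial (Fin n) K)} (hI : IsGraded I)
    {l : List (MvPolynomial (Fin n) K)} (hl : ∀ x ∈ l, x.IsHomogeneous 1) :
    IsGraded (I ⊔ Ideal.ofList l) :=
  hI.sup (IsGraded.span fun x hx => ⟨1, hl x hx⟩)

theorem isGraded_sup_singleton {I : Ideal (MvPolynomial (Fin n) K)} (hI : IsGraded I)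
    {x : MvPolynomial (Fin n) K} {d : ℕ} (hx : x.IsHomogeneous d) :
    IsGraded (I ⊔ Ideal.span {x}) :=
  hI.sup (IsGraded.span fun y hy => ⟨d, by rw [Set.mem_singleton_iff.1 hy]; exact hx⟩)

theorem hilb_le_iterate_partialSum {I : Ideal (MvPolynomial (Fin n) K)} (hI : IsGraded I)
    {l : List (MvPolynomial (Fin n) K)} (hl : ∀ x ∈ l, x.IsHomogeneous 1) :
    hilb I ≤ partialSum^[l.length] (hilb (I ⊔ Ideal.ofList l)) := by
  induction l generalizing I with
  | nil => simp
  | cons x l ih =>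
    rw [List.forall_mem_cons] at hl
    rw [List.length_cons, Function.iterate_succ_apply', Ideal.ofList_cons, ← sup_assoc]
    exact (hilb_le_partialSum hI hl.1).trans
      (partialSum_mono (ih (isGraded_sup_singleton hI hl.1) hl.2))

/-- Linear forms are a regular sequence exactly when the Hilbert functions are related as they
would be for a polynomial extension. -/
theorem regSeq_iff_hilb {I : Ideal (MvPolynomial (Fin n) K)} (hI : IsGraded I)
    {l : List (MvPolynomial (Fin n) K)} (hl : ∀ x ∈ l, x.IsHomogeneous 1) :
    RegSeq I l ↔ hilb I = partialSum^[l.length] (hilb (I ⊔ Ideal.ofList l)) := by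
  induction l generalizing I with
  | nil => simp [RegSeq]
  | cons x l ih =>
    rw [List.forall_mem_cons] at hl
    have hI' := isGraded_sup_singleton hI hl.1
    rw [RegSeq, nzd_iff_hilb_eq_partialSum hI hl.1, ih hI' hl.2,
      List.length_cons, Function.iterate_succ_apply', Ideal.ofList_cons, ← sup_assoc]
    constructor
    · rintro ⟨h1, h2⟩
      rw [h1, ← h2]
    · intro h
      have h1 := hilb_le_partialSum hI hl.1
      have h2 := partialSum_mono (hilb_le_iterate_partialSum hI' hl.2)
      have h3 : hilb I = partialSum (hilb (I ⊔ Ideal.span {x})) :=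
        le_antisymm h1 (h2.trans h.ge)
      exact ⟨h3, partialSum_injective (h3.symm.trans h)⟩

theorem nzd_swap {I : Ideal (MvPolynomial (Fin n) K)} (hI : IsGraded I)
    {x y : MvPolynomial (Fin n) K} (hx : x.IsHomogeneous 1) (hy : y.IsHomogeneous 1)
    (h1 : NZD I x) (h2 : NZD (I ⊔ Ideal.span {x}) y) :
    NZD I y ∧ NZD (I ⊔ Ideal.span {y}) x := by
  have h : RegSeq I [x, y] := ⟨h1, h2, trivial⟩
  rw [regSeq_iff_hilb hI (by simp [hx, hy])] at h
  have h' : RegSeq I [y, x] := by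
    rw [regSeq_iff_hilb hI (by simp [hx, hy]), h]
    simp [sup_comm (Ideal.span {x})]
  exact ⟨h'.1, h'.2.1⟩

/-- A form avoiding the zero divisors of two quotients can be found in any linear system that is
not contained in an associated prime. -/
theorem exists_nzd_pair [Infinite K] (V : Submodule K (MvPolynomial (Fin n) K))
    {I J : Ideal (MvPolynomial (Fin n) K)} (hI : ∀ f, (∀ x ∈ V, x * f ∈ I) → f ∈ I)
    (hJ : ∀ f, (∀ x ∈ V, x * f ∈ J) → f ∈ J) : ∃ x ∈ V, NZD I x ∧ NZD J x := by
  classical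
  let S := MvPolynomial (Fin n) K
  let P : Set (Ideal S) := associatedPrimes S (S ⧸ I) ∪ associatedPrimes S (S ⧸ J)
  have hP : P.Finite := (associatedPrimes.finite S (S ⧸ I)).union (associatedPrimes.finite S (S ⧸ J))
  let W : Ideal S → Submodule K V := fun p => (p.restrictScalars K).comap V.subtype
  have key : ∀ I : Ideal S, (∀ f, (∀ x ∈ V, x * f ∈ I) → f ∈ I) →
      ∀ p ∈ associatedPrimes S (S ⧸ I), W p ≠ ⊤ := by
    intro I hI p hp htop
    rw [AssociatedPrimes.mem_iff, isAssociatedPrime_iff] at hp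
    obtain ⟨hprime, y, rfl⟩ := hp
    obtain ⟨f, rfl⟩ := Ideal.Quotient.mk_surjective y
    have hmem : f ∈ I := by
      refine hI f fun x hx => ?_
      have h : (⟨x, hx⟩ : V) ∈ W (Submodule.colon ⊥ {Ideal.Quotient.mk I f}) := by
        rw [htop]; trivial
      have h' : x ∈ Submodule.colon (⊥ : Submodule S (S ⧸ I)) {Ideal.Quotient.mk I f} := h
      rw [Submodule.mem_colon_singleton, Submodule.mem_bot] at h'
      exact Ideal.Quotient.eq_zero_iff_mem.1 h'
    refine hprime.ne_top ((Ideal.eq_top_iff_one _).2 ?_)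
    rw [Submodule.mem_colon_singleton, one_smul, Submodule.mem_bot]
    exact Ideal.Quotient.eq_zero_iff_mem.2 hmem
  have hz : ∀ I : Ideal S, ∀ x : S, (∀ p ∈ associatedPrimes S (S ⧸ I), x ∉ p) → NZD I x := by
    intro I x hx f hf
    by_contra hne
    have : x ∈ ⋃ p ∈ associatedPrimes S (S ⧸ I), (p : Set S) := by
      rw [biUnion_associatedPrimes_eq_zero_divisors]
      refine ⟨Ideal.Quotient.mk I f, by rwa [Ne, Ideal.Quotient.eq_zero_iff_mem], ?_⟩
      exact Ideal.Quotient.eq_zero_iff_mem.2 hf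
    simp only [Set.mem_iUnion] at this
    obtain ⟨p, hp, hxp⟩ := this
    exact hx p hp hxp
  have hcov := Subspace.biUnion_ne_univ_of_top_notMem (s := hP.toFinset.image W) (by
    simp only [Finset.mem_image, Set.Finite.mem_toFinset, not_exists, not_and]
    rintro p (hp | hp)
    · exact key I hI p hp
    · exact key J hJ p hp)
  obtain ⟨x, hx⟩ := (Set.ne_univ_iff_exists_notMem _).1 hcov
  have hx' : ∀ p ∈ P, (x : S) ∉ p := by
    intro p hp hxp
    refine hx (Set.mem_biUnion (x := W p) ?_ hxp)
    exact Finset.mem_coe.2 (Finset.mem_image_of_mem _ (hP.mem_toFinset.2 hp))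
  exact ⟨x, x.2, hz I x fun p hp => hx' p (Or.inl hp), hz J x fun p hp => hx' p (Or.inr hp)⟩

/-- There is a regular sequence of `d` linear forms on `S/I`. -/
def HasLinearRegSeq (I : Ideal (MvPolynomial (Fin n) K)) (d : ℕ) : Prop :=
  ∃ l : List (MvPolynomial (Fin n) K), l.length = d ∧ (∀ x ∈ l, x.IsHomogeneous 1) ∧ RegSeq I l

theorem HasLinearRegSeq.cons {I : Ideal (MvPolynomial (Fin n) K)} {d : ℕ}
    {x : MvPolynomial (Fin n) K} (hx : x.IsHomogeneous 1) (hz : NZD I x)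
    (h : HasLinearRegSeq (I ⊔ Ideal.span {x}) d) : HasLinearRegSeq I (d + 1) := by
  obtain ⟨l, hl, hlin, hreg⟩ := h
  exact ⟨x :: l, by simp [hl], List.forall_mem_cons.2 ⟨hx, hlin⟩, hz, hreg⟩

theorem HasLinearRegSeq.exists_cons {I : Ideal (MvPolynomial (Fin n) K)} {d : ℕ}
    (h : HasLinearRegSeq I (d + 1)) : ∃ x : MvPolynomial (Fin n) K, x.IsHomogeneous 1 ∧ NZD I x ∧
      HasLinearRegSeq (I ⊔ Ideal.span {x}) d := by
  obtain ⟨_ | ⟨x, l⟩, hl, hlin, hreg⟩ := h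
  · simp at hl
  · rw [List.forall_mem_cons] at hlin
    exact ⟨x, hlin.1, hreg.1, l, by simpa using hl, hlin.2, hreg.2⟩

/-- Dividing by any linear nonzerodivisor lowers the length of linear regular sequences by at
most one. -/
theorem HasLinearRegSeq.sup_span [Infinite K] {d : ℕ} {I : Ideal (MvPolynomial (Fin n) K)}
    (hI : IsGraded I) (h : HasLinearRegSeq I (d + 1)) {x : MvPolynomial (Fin n) K}
    (hx : x.IsHomogeneous 1) (hz : NZD I x) : HasLinearRegSeq (I ⊔ Ideal.span {x}) d := by
  induction d generalizing I x with
  | zero => exact ⟨[], rfl, by simp, trivial⟩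
  | succ d ih =>
    obtain ⟨y, hy, hyz, hd⟩ := h.exists_cons
    obtain ⟨z, hzlin, hzz, -⟩ := hd.exists_cons
    have hsocle : ∀ f, (∀ v ∈ homogeneousSubmodule (Fin n) K 1,
        v * f ∈ I ⊔ Ideal.span {y}) → f ∈ I ⊔ Ideal.span {y} := fun f hf =>
      hzz f (hf z ((mem_homogeneousSubmodule _ _).2 hzlin))
    obtain ⟨w, hw, hwx, hwy⟩ := exists_nzd_pair (homogeneousSubmodule (Fin n) K 1)
      (I := I ⊔ Ideal.span {x}) (J := I ⊔ Ideal.span {y}) (by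
        intro f hf
        obtain ⟨b, hb⟩ := mem_sup_span_singleton.1 (hf y ((mem_homogeneousSubmodule _ _).2 hy))
        have hb' : b ∈ I ⊔ Ideal.span {y} := by
          refine hsocle b fun v hv => mem_sup_span_singleton.2 ?_
          obtain ⟨c, hc⟩ := mem_sup_span_singleton.1 (hf v hv)
          refine ⟨c, hz _ ?_⟩
          have : x * (v * b - y * c) = y * (v * f - x * c) - v * (y * f - x * b) := by ring
          rw [this]
          exact sub_mem (Ideal.mul_mem_left _ _ hc) (Ideal.mul_mem_left _ _ hb)
        obtain ⟨b', hb'⟩ := mem_sup_span_singleton.1 hb'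
        refine mem_sup_span_singleton.2 ⟨b', hyz _ ?_⟩
        have : y * (f - x * b') = (y * f - x * b) + x * (b - y * b') := by ring
        rw [this]
        exact add_mem hb (Ideal.mul_mem_left _ _ hb')) hsocle
    rw [mem_homogeneousSubmodule] at hw
    have h1 := ih (isGraded_sup_singleton hI hy) hd hw hwy
    obtain ⟨hwI, hyw⟩ := nzd_swap hI hy hw hyz hwy
    obtain ⟨-, hxw⟩ := nzd_swap hI hx hw hz hwx
    rw [sup_right_comm] at h1
    have h2 := ih (isGraded_sup_singleton hI hw) (h1.cons hy hyw) hx hxw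
    rw [sup_right_comm] at h2
    exact h2.cons hw hwx

theorem exists_span_sup_ofList_eq {l : List (MvPolynomial (Fin n) K)}
    {x : MvPolynomial (Fin n) K} (hx : x ∈ Submodule.span K {y | y ∈ l}) :
    x = 0 ∨ ∃ l' : List (MvPolynomial (Fin n) K), l'.length + 1 = l.length ∧ l' ⊆ l ∧
      Ideal.ofList (x :: l') = Ideal.ofList l := by
  induction l generalizing x with
  | nil => left; simpa using hx
  | cons a l ih =>
    have hset : {y | y ∈ a :: l} = insert a {y | y ∈ l} := by ext; simp
    rw [hset, Submodule.mem_span_insert] at hx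
    obtain ⟨c, x', hx', rfl⟩ := hx
    have hmem : x' ∈ Ideal.ofList l :=
      Submodule.span_le_restrictScalars K (MvPolynomial (Fin n) K) _ hx'
    by_cases hc : c = 0
    · rw [hc, zero_smul, zero_add]
      refine (ih hx').imp_right ?_
      rintro ⟨l', hlen, hsub, heq⟩
      refine ⟨a :: l', by simp [hlen], List.cons_subset_cons _ hsub, ?_⟩
      rw [Ideal.ofList_cons, Ideal.ofList_cons, Ideal.ofList_cons, ← heq, Ideal.ofList_cons,
        sup_left_comm]
    · right
      refine ⟨l, rfl, List.subset_cons_self _ _, ?_⟩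
      rw [Ideal.ofList_cons, Ideal.ofList_cons]
      refine le_antisymm (sup_le ?_ le_sup_right) (sup_le ?_ le_sup_right)
      · rw [Ideal.span_singleton_le_iff_mem, smul_eq_C_mul]
        exact add_mem (Ideal.mul_mem_left _ _ (Ideal.mem_sup_left (Ideal.subset_span rfl)))
          (Ideal.mem_sup_right hmem)
      · rw [Ideal.span_singleton_le_iff_mem]
        have h : C c⁻¹ * (c • a + x') - C c⁻¹ * x' = a := by
          rw [mul_add, add_sub_cancel_right, smul_eq_C_mul, ← mul_assoc, ← C_mul,
            inv_mul_cancel₀ hc, C_1, one_mul]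
        generalize c • a + x' = z at h
        rw [← h]
        exact sub_mem (Ideal.mul_mem_left _ _ (Ideal.mem_sup_left (Ideal.subset_span rfl)))
          (Ideal.mul_mem_left _ _ (Ideal.mem_sup_right hmem))

theorem regSeq_of_eq_top {I : Ideal (MvPolynomial (Fin n) K)} (hI : I = ⊤)
    (l : List (MvPolynomial (Fin n) K)) : RegSeq I l := by
  induction l generalizing I with
  | nil => trivial
  | cons x l ih => exact ⟨fun f _ => by simp [hI], ih (by simp [hI])⟩

/-- If `S/I` has a linear regular sequence of length `d`, then any `d` linear forms cutting out a
quotient of finite length are a regular sequence. -/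
theorem regSeq_of_hasLinearRegSeq [Infinite K] {l : List (MvPolynomial (Fin n) K)}
    {I : Ideal (MvPolynomial (Fin n) K)} (hI : IsGraded I) (hl : ∀ x ∈ l, x.IsHomogeneous 1)
    (hd : HasLinearRegSeq I l.length) {N : ℕ}
    (hN : ∀ f : MvPolynomial (Fin n) K, f.IsHomogeneous N → f ∈ I ⊔ Ideal.ofList l) :
    RegSeq I l := by
  induction hlen : l.length generalizing l I with
  | zero => rw [List.length_eq_zero_iff.1 hlen]; trivial
  | succ d ih =>
    rw [hlen] at hd
    obtain ⟨y, hy, hyz, -⟩ := hd.exists_cons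
    have hann : ∀ f, (∀ x ∈ Submodule.span K {y | y ∈ l}, x * f ∈ I) → f ∈ I := by
      intro f hf
      have hle : I ⊔ Ideal.ofList l ≤ Submodule.colon I {f} := by
        refine sup_le ?_ (Ideal.span_le.2 ?_)
        · exact fun a ha => Submodule.mem_colon_singleton.2 (I.mul_mem_right f ha)
        · exact fun a ha => Submodule.mem_colon_singleton.2 (hf a (Submodule.subset_span ha))
      have hpow : ∀ m : ℕ, y ^ m * f ∈ I → f ∈ I := by
        intro m
        induction m with
        | zero => simp
        | succ m ihm => exact fun h => ihm (hyz _ (by rwa [← mul_assoc, ← pow_succ']))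
      refine hpow N ?_
      exact Submodule.mem_colon_singleton.1 (hle (hN (y ^ N) (by simpa using hy.pow N)))
    obtain ⟨x, hx, hxz, -⟩ := exists_nzd_pair _ hann hann
    have hxlin : x.IsHomogeneous 1 := by
      rw [← mem_homogeneousSubmodule]
      exact Submodule.span_le.2 (fun y hy => (mem_homogeneousSubmodule _ _).2 (hl y hy)) hx
    obtain rfl | ⟨l', hlen', hsub, heq⟩ := exists_span_sup_ofList_eq hx
    · exact regSeq_of_eq_top ((Ideal.eq_top_iff_one _).2 (hxz 1 (by simp))) l
    · have hl' : ∀ x ∈ l', x.IsHomogeneous 1 := fun z hz => hl z (hsub hz)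
      have hlen'' : l'.length = d := by omega
      have h1 : RegSeq I (x :: l') := by
        refine ⟨hxz, ih (isGraded_sup_singleton hI hxlin) hl' ?_ ?_ hlen''⟩
        · rw [hlen'']
          exact hd.sup_span hI hxlin hxz
        · rwa [sup_assoc, ← Ideal.ofList_cons, heq]
      rw [regSeq_iff_hilb hI (List.forall_mem_cons.2 ⟨hxlin, hl'⟩), heq, List.length_cons,
        hlen'] at h1
      exact (regSeq_iff_hilb hI hl).2 h1

theorem degree_eq_of_mem_support {f : MvPolynomial (Fin n) K} {k : ℕ} (hf : f.IsHomogeneous k)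
    {u : Fin n →₀ ℕ} (hu : u ∈ f.support) : u.degree = k := by
  by_contra h
  exact MvPolynomial.mem_support_iff.1 hu (hf.coeff_eq_zero h)

/-- The weight of a monomial for which the degree reverse lexicographic order is refined by
decreasing weight in degrees below `B`. -/
def revWeight (B : ℕ) (u : Fin n →₀ ℕ) : ℕ := ∑ i, u i * B ^ (i : ℕ)

theorem revWeight_lt {B : ℕ} {u v : Fin n →₀ ℕ} (huv : u.degree = v.degree) (hB : v.degree < B)
    (h : DegRevLexLT u v) : revWeight B v < revWeight B u := by
  obtain h | ⟨-, p, hp, hlt⟩ := h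
  · exact absurd huv h.ne
  set A := ∑ i : Fin n, if i < p then v i * B ^ (i : ℕ) else 0 with hA
  have hA' : A < B ^ (p : ℕ) := by
    have h1 : B * A ≤ v.degree * B ^ (p : ℕ) := by
      rw [hA, Finset.mul_sum, Finsupp.degree_eq_sum, Finset.sum_mul]
      refine Finset.sum_le_sum fun i _ => ?_
      split_ifs with hi
      · rw [mul_left_comm, ← pow_succ']
        exact Nat.mul_le_mul_left _ (Nat.pow_le_pow_right (by omega) hi)
      · simp
    have h2 : v.degree * B ^ (p : ℕ) < B * B ^ (p : ℕ) :=
      Nat.mul_lt_mul_of_pos_right hB (Nat.pow_pos (by omega))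
    exact lt_of_mul_lt_mul_left (h1.trans_lt h2) (Nat.zero_le B)
  have hle : revWeight B v + B ^ (p : ℕ) ≤ revWeight B u + A := by
    have h1 : B ^ (p : ℕ) = ∑ i : Fin n, if i = p then B ^ (i : ℕ) else 0 := by simp
    rw [h1, hA, revWeight, revWeight, ← Finset.sum_add_distrib, ← Finset.sum_add_distrib]
    refine Finset.sum_le_sum fun i _ => ?_
    rcases lt_trichotomy i p with hi | rfl | hi
    · simp [hi, hi.ne]
    · simp only [if_true, lt_irrefl, if_false, add_zero]
      rw [← Nat.succ_mul]
      exact Nat.mul_le_mul_right _ hp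
    · simp [hi.ne', not_lt_of_gt hi, hlt i hi]
  omega

theorem degRevLexLT_or {u v : Fin n →₀ ℕ} (huv : u.degree = v.degree) (hne : u ≠ v) :
    DegRevLexLT u v ∨ DegRevLexLT v u := by
  have hs : (Finset.univ.filter fun i => u i ≠ v i).Nonempty := by
    by_contra h
    rw [Finset.not_nonempty_iff_eq_empty, Finset.filter_eq_empty_iff] at h
    exact hne (Finsupp.ext fun i => not_not.1 (h (Finset.mem_univ i)))
  obtain ⟨p, hp, hmax⟩ := Finset.exists_max_image _ id hs
  have hp' : u p ≠ v p := (Finset.mem_filter.1 hp).2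
  have hgt : ∀ l, p < l → u l = v l := by
    intro l hl
    by_contra h
    exact absurd (hmax l (Finset.mem_filter.2 ⟨Finset.mem_univ _, h⟩)) (not_le_of_gt hl)
  rcases lt_or_gt_of_ne hp' with h | h
  · exact Or.inr (Or.inr ⟨huv.symm, p, h, fun l hl => (hgt l hl).symm⟩)
  · exact Or.inl (Or.inr ⟨huv, p, h, hgt⟩)

theorem degRevLexLT_add_left {u v : Fin n →₀ ℕ} (h : DegRevLexLT u v) (w : Fin n →₀ ℕ) :
    DegRevLexLT (w + u) (w + v) := by
  have hdeg : ∀ u : Fin n →₀ ℕ, (u.sum fun _ e => e) = u.degree := fun _ => rfl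
  unfold DegRevLexLT at h ⊢
  simp only [hdeg, map_add, Finsupp.add_apply] at h ⊢
  obtain h | ⟨h, p, hp, hl⟩ := h
  · exact Or.inl (by omega)
  · exact Or.inr ⟨by omega, p, by omega, fun l hpl => by rw [hl l hpl]⟩

/-- `u` is the leading exponent of `f`. -/
def IsLead (f : MvPolynomial (Fin n) K) (u : Fin n →₀ ℕ) : Prop :=
  u ∈ f.support ∧ ∀ v ∈ f.support, v ≠ u → DegRevLexLT v u

theorem initialIdeal_eq_span (I : Ideal (MvPolynomial (Fin n) K)) :
    initialIdeal I = Ideal.span ((fun u => monomial u (1 : K)) '' {u | ∃ f ∈ I, IsLead f u}) := by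
  unfold initialIdeal IsLead
  congr 1
  ext m
  constructor
  · rintro ⟨f, hf, u, hu, rfl, h⟩
    exact ⟨u, ⟨f, hf, hu, h⟩, rfl⟩
  · rintro ⟨u, ⟨f, hf, hu, h⟩, rfl⟩
    exact ⟨f, hf, u, hu, rfl, h⟩

theorem isGraded_initialIdeal (I : Ideal (MvPolynomial (Fin n) K)) :
    IsGraded (initialIdeal I) := by
  rw [initialIdeal_eq_span]
  refine IsGraded.span ?_
  rintro _ ⟨u, -, rfl⟩
  exact ⟨_, isHomogeneous_monomial _ rfl⟩

theorem exists_isLead {f : MvPolynomial (Fin n) K} (hf : f ≠ 0) {k : ℕ}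
    (hk : f.IsHomogeneous k) : ∃ u, IsLead f u := by
  obtain ⟨u, hu, hmin⟩ := Finset.exists_min_image f.support (revWeight (k + 1))
    (support_nonempty.2 hf)
  refine ⟨u, hu, fun v hv hne => ?_⟩
  have hdu := degree_eq_of_mem_support hk hu
  have hdv := degree_eq_of_mem_support hk hv
  refine (degRevLexLT_or (hdv.trans hdu.symm) hne).resolve_right fun h => ?_
  exact absurd (revWeight_lt (hdu.trans hdv.symm) (by omega) h) (not_lt_of_ge (hmin v hv))

theorem IsLead.monomial_mul {f : MvPolynomial (Fin n) K} {u : Fin n →₀ ℕ} (h : IsLead f u)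
    (w : Fin n →₀ ℕ) : IsLead (monomial w 1 * f) (w + u) := by
  refine ⟨?_, fun v hv hne => ?_⟩
  · rw [MvPolynomial.mem_support_iff, coeff_monomial_mul, one_mul]
    exact MvPolynomial.mem_support_iff.1 h.1
  · rw [MvPolynomial.mem_support_iff, coeff_monomial_mul', one_mul] at hv
    split_ifs at hv with hw
    · obtain ⟨v, rfl⟩ := exists_add_of_le hw
      rw [add_tsub_cancel_left] at hv
      exact degRevLexLT_add_left (h.2 v (MvPolynomial.mem_support_iff.2 hv) fun h => hne (by rw [h])) w
    · exact absurd rfl hv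

theorem IsLead.homogeneousComponent {f : MvPolynomial (Fin n) K} {u : Fin n →₀ ℕ}
    (h : IsLead f u) : IsLead (homogeneousComponent u.degree f) u := by
  refine ⟨?_, fun v hv hne => h.2 v ?_ hne⟩
  · rw [MvPolynomial.mem_support_iff, coeff_homogeneousComponent, if_pos rfl]
    exact MvPolynomial.mem_support_iff.1 h.1
  · rw [MvPolynomial.mem_support_iff, coeff_homogeneousComponent] at hv
    split_ifs at hv
    · exact MvPolynomial.mem_support_iff.2 hv
    · exact absurd rfl hv

/-- Every exponent occurring in an element of the initial ideal of a graded ideal is the leading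
exponent of a form of the ideal. -/
theorem exists_isLead_of_mem_initialIdeal {I : Ideal (MvPolynomial (Fin n) K)} (hI : IsGraded I)
    {g : MvPolynomial (Fin n) K} (hg : g ∈ initialIdeal I) {u : Fin n →₀ ℕ}
    (hu : u ∈ g.support) : ∃ f ∈ idealPiece I u.degree, IsLead f u := by
  rw [initialIdeal_eq_span, mem_ideal_span_monomial_image] at hg
  obtain ⟨v, ⟨f, hf, hv⟩, hle⟩ := hg u hu
  obtain ⟨w, rfl⟩ := exists_add_of_le hle
  have h := hv.monomial_mul w
  rw [add_comm] at h
  exact ⟨_, mem_idealPiece.2 ⟨hI _ (Ideal.mul_mem_left _ _ hf) _,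
    homogeneousComponent_isHomogeneous _ _⟩, h.homogeneousComponent⟩

/-- The Hilbert function of the initial ideal dominates that of the ideal. -/
theorem hilb_initialIdeal_le (I : Ideal (MvPolynomial (Fin n) K)) :
    hilb (initialIdeal I) ≤ hilb I := by
  classical
  intro k
  change hilb (initialIdeal I) k ≤ hilb I k
  have h1 := hilb_add_finrank_idealPiece I k
  have h2 := hilb_add_finrank_idealPiece (initialIdeal I) k
  suffices h : finrank K (idealPiece I k) ≤ finrank K (idealPiece (initialIdeal I) k) by omega
  let L : Finset (Fin n →₀ ℕ) := (Finset.univ.finsuppAntidiag k).filter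
    fun u => monomial u (1 : K) ∈ initialIdeal I
  have hL : ∀ u, u ∈ L ↔ u.degree = k ∧ monomial u (1 : K) ∈ initialIdeal I := by
    intro u
    simp [L, Finset.mem_finsuppAntidiag, Finsupp.degree_eq_sum]
  let φ : MvPolynomial (Fin n) K →ₗ[K] MvPolynomial (Fin n) K :=
    ∑ u ∈ L, monomial u ∘ₗ lcoeff K u
  have hφ : ∀ f, φ f = ∑ u ∈ L, monomial u (coeff u f) := by
    intro f
    simp [φ, LinearMap.sum_apply]
  have hmaps : ∀ f ∈ idealPiece I k, φ f ∈ idealPiece (initialIdeal I) k := by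
    intro f _
    rw [hφ]
    refine sum_mem fun u hu => mem_idealPiece.2 ⟨?_, ?_⟩
    · have : monomial u (coeff u f) = C (coeff u f) * monomial u 1 := by
        rw [C_mul_monomial, mul_one]
      rw [this]
      exact Ideal.mul_mem_left _ _ ((hL u).1 hu).2
    · exact isHomogeneous_monomial _ ((hL u).1 hu).1
  refine LinearMap.finrank_le_finrank_of_injective (f := φ.restrict hmaps) ?_
  rw [injective_iff_map_eq_zero]
  rintro ⟨f, hf⟩ h0
  have h0' : φ f = 0 := congrArg Subtype.val h0
  by_contra hne
  have hf0 : f ≠ 0 := fun h => hne (Subtype.ext h)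
  rw [mem_idealPiece] at hf
  obtain ⟨u, hu⟩ := exists_isLead hf0 hf.2
  have huL : u ∈ L := (hL u).2 ⟨degree_eq_of_mem_support hf.2 hu.1, by
    rw [initialIdeal_eq_span]
    exact Ideal.subset_span ⟨u, ⟨f, hf.1, hu⟩, rfl⟩⟩
  have := congrArg (coeff u) h0'
  rw [hφ, coeff_sum, Finset.sum_eq_single u (fun v _ hvu => by rw [coeff_monomial, if_neg hvu])
    (fun h => absurd huL h), coeff_monomial, if_pos rfl, coeff_zero] at this
  exact MvPolynomial.mem_support_iff.1 hu.1 this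

/-- Linear independence of a polynomial family of vectors is an open condition. -/
theorem exists_polynomial_linearIndependent {V ι : Type*} [AddCommGroup V] [Module K V]
    [Finite ι] (p : ι → K → V)
    (hp : ∀ j (φ : V →ₗ[K] K), ∃ P : Polynomial K, ∀ t, φ (p j t) = P.eval t)
    (h0 : LinearIndependent K fun j => p j 0) :
    ∃ q : Polynomial K, q ≠ 0 ∧ ∀ t, q.eval t ≠ 0 → LinearIndependent K fun j => p j t := by
  classical
  cases nonempty_fintype ι
  obtain ⟨L, hL⟩ := LinearMap.exists_leftInverse_of_injective
    (Fintype.linearCombination K fun j => p j 0)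
    (LinearMap.ker_eq_bot.2 h0.fintypeLinearCombination_injective)
  choose P hP using fun j i => hp j (LinearMap.proj i ∘ₗ L)
  have hdet : ∀ t, (Matrix.of P).det.eval t = (Matrix.of fun j => L (p j t)).det := by
    intro t
    rw [← Polynomial.coe_evalRingHom, RingHom.map_det]
    congr 1
    ext j i
    simpa using (hP j i t).symm
  refine ⟨(Matrix.of P).det, fun h => ?_, fun t ht => ?_⟩
  · have h1 := hdet 0
    have h2 : (Matrix.of fun j => L (p j 0)) = (1 : Matrix ι ι K) := by
      ext j i
      have h3 := LinearMap.congr_fun hL (Pi.single j 1)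
      rw [LinearMap.comp_apply, Fintype.linearCombination_apply_single, one_smul,
        LinearMap.id_apply] at h3
      simp [h3, Matrix.one_apply, Pi.single_apply, eq_comm]
    rw [h, h2, Matrix.det_one, Polynomial.eval_zero] at h1
    exact zero_ne_one h1
  · rw [hdet] at ht
    exact LinearIndependent.of_comp L (Matrix.linearIndependent_rows_of_det_ne_zero ht)

/-- The one-parameter family `x_i ↦ t^{B^i} x_i` of linear changes of coordinates. -/
noncomputable def torusHom (B : ℕ) (t : K) : MvPolynomial (Fin n) K →ₐ[K] MvPolynomial (Fin n) K :=
  aeval fun i => C (t ^ B ^ (i : ℕ)) * X i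

theorem torusHom_monomial (B : ℕ) (t : K) (u : Fin n →₀ ℕ) (a : K) :
    torusHom B t (monomial u a) = monomial u (t ^ revWeight B u * a) := by
  rw [torusHom, aeval_monomial, monomial_eq, Finsupp.prod_fintype _ _ (by simp),
    Finsupp.prod_fintype _ _ (by simp), algebraMap_eq, C_mul, revWeight]
  simp only [mul_pow, Finset.prod_mul_distrib, ← C_pow, ← pow_mul, map_prod,
    ← Finset.prod_pow_eq_pow_sum, mul_comm (B ^ _)]
  ring

theorem torusHom_isHomogeneous (B : ℕ) (t : K) {f : MvPolynomial (Fin n) K} {k : ℕ}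
    (hf : f.IsHomogeneous k) : (torusHom B t f).IsHomogeneous k := by
  rw [← support_sum_monomial_coeff f, map_sum]
  refine IsHomogeneous.sum _ _ _ fun u hu => ?_
  rw [torusHom_monomial]
  exact isHomogeneous_monomial _ (degree_eq_of_mem_support hf hu)

theorem torusHom_comp_inv (B : ℕ) {t : K} (ht : t ≠ 0) (f : MvPolynomial (Fin n) K) :
    torusHom B t (torusHom B t⁻¹ f) = f := by
  rw [← support_sum_monomial_coeff f, map_sum, map_sum]
  refine Finset.sum_congr rfl fun u _ => ?_
  rw [torusHom_monomial, torusHom_monomial, ← mul_assoc, ← mul_pow, mul_inv_cancel₀ ht, one_pow,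
    one_mul]

theorem torusHom_injective (B : ℕ) {t : K} (ht : t ≠ 0) :
    Function.Injective (torusHom (n := n) B t) :=
  Function.LeftInverse.injective (g := torusHom B t⁻¹) fun f => by
    simpa using torusHom_comp_inv B (inv_ne_zero ht) f

/-- The degree `k` part of `in(I) + (G)` is spanned by leading monomials and forms of `(G)`. -/
theorem idealPiece_initialIdeal_sup_le {I : Ideal (MvPolynomial (Fin n) K)} (hI : IsGraded I)
    {G : Set (MvPolynomial (Fin n) K)} (hG : ∀ g ∈ G, ∃ d, g.IsHomogeneous d) (k : ℕ) :
    idealPiece (initialIdeal I ⊔ Ideal.span G) k ≤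
      Submodule.span K ({m | ∃ u, ∃ f ∈ idealPiece I k, IsLead f u ∧ m = monomial u 1} ∪
        idealPiece (Ideal.span G) k) := by
  intro h hh
  obtain ⟨hh, hk⟩ := mem_idealPiece.1 hh
  obtain ⟨a, ha, b, hb, rfl⟩ := Submodule.mem_sup.1 hh
  rw [← homogeneousComponent_eq_self hk, map_add]
  refine add_mem ?_ (Submodule.subset_span (Or.inr (mem_idealPiece.2
    ⟨IsGraded.span hG b hb k, homogeneousComponent_isHomogeneous _ _⟩)))
  have ha' := isGraded_initialIdeal I a ha k
  have hak := homogeneousComponent_isHomogeneous k a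
  generalize homogeneousComponent k a = a at ha' hak
  rw [← support_sum_monomial_coeff a]
  refine sum_mem fun u hu => ?_
  obtain ⟨f, hf, hlead⟩ := exists_isLead_of_mem_initialIdeal hI ha' hu
  rw [degree_eq_of_mem_support hak hu] at hf
  have : monomial u (coeff u a) = coeff u a • monomial u (1 : K) := by
    rw [smul_monomial, smul_eq_mul, mul_one]
  rw [this]
  exact Submodule.smul_mem _ _ (Submodule.subset_span (Or.inl ⟨u, f, hf, hlead, rfl⟩))

theorem exists_deformation {I : Ideal (MvPolynomial (Fin n) K)} {k B : ℕ} (hB : k < B)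
    {f : MvPolynomial (Fin n) K} (hf : f ∈ idealPiece I k) {u : Fin n →₀ ℕ} (hu : IsLead f u) :
    ∃ p : K → MvPolynomial (Fin n) K, p 0 = monomial u 1 ∧
      (∀ φ : MvPolynomial (Fin n) K →ₗ[K] K, ∃ P : Polynomial K, ∀ t, φ (p t) = P.eval t) ∧
      ∀ t, t ≠ 0 → torusHom B t⁻¹ (p t) ∈ idealPiece I k := by
  classical
  have hk := (mem_idealPiece.1 hf).2
  have hu0 : coeff u f ≠ 0 := MvPolynomial.mem_support_iff.1 hu.1
  have hlt : ∀ v ∈ f.support, v ≠ u → revWeight B u < revWeight B v := fun v hv hne =>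
    revWeight_lt ((degree_eq_of_mem_support hk hv).trans (degree_eq_of_mem_support hk hu.1).symm)
      (by rw [degree_eq_of_mem_support hk hu.1]; exact hB) (hu.2 v hv hne)
  have hle : ∀ v ∈ f.support, revWeight B u ≤ revWeight B v := fun v hv => by
    by_cases h : v = u
    · rw [h]
    · exact (hlt v hv h).le
  let m : (Fin n →₀ ℕ) → MvPolynomial (Fin n) K := fun v =>
    monomial v ((coeff u f)⁻¹ * coeff v f)
  refine ⟨fun t => ∑ v ∈ f.support, t ^ (revWeight B v - revWeight B u) • m v, ?_, ?_, ?_⟩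
  · beta_reduce
    rw [Finset.sum_eq_single u]
    · simp [m, hu0]
    · intro v hv hne
      rw [zero_pow (by have := hlt v hv hne; omega), zero_smul]
    · exact fun h => absurd hu.1 h
  · intro φ
    refine ⟨∑ v ∈ f.support, Polynomial.C (φ (m v)) *
      Polynomial.X ^ (revWeight B v - revWeight B u), fun t => ?_⟩
    simp only [map_sum, map_smul, smul_eq_mul, Polynomial.eval_finsetSum, Polynomial.eval_mul,
      Polynomial.eval_C, Polynomial.eval_pow, Polynomial.eval_X]
    exact Finset.sum_congr rfl fun v _ => mul_comm _ _
  · intro t ht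
    have : torusHom B t⁻¹ (∑ v ∈ f.support, t ^ (revWeight B v - revWeight B u) • m v) =
        ((t⁻¹) ^ revWeight B u * (coeff u f)⁻¹) • f := by
      conv_rhs => rhs; rw [← support_sum_monomial_coeff f]
      rw [map_sum, Finset.smul_sum]
      refine Finset.sum_congr rfl fun v hv => ?_
      rw [map_smul, torusHom_monomial, smul_monomial, smul_monomial]
      congr 1
      obtain ⟨e, he⟩ := Nat.exists_eq_add_of_le (hle v hv)
      rw [he, add_tsub_cancel_left, pow_add]
      simp only [smul_eq_mul]
      have : t ^ e * t⁻¹ ^ e = 1 := by rw [← mul_pow, mul_inv_cancel₀ ht, one_pow]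
      linear_combination (t⁻¹ ^ revWeight B u * (coeff u f)⁻¹ * coeff v f) * this
    rw [this]
    exact Submodule.smul_mem _ _ hf

/-- Semicontinuity: the generic member of the torus family imposes at least as many conditions on
`S/I` as it does on `S/in(I)`. -/
theorem hilb_sup_torusHom_le {I : Ideal (MvPolynomial (Fin n) K)} (hI : IsGraded I)
    {G : Set (MvPolynomial (Fin n) K)} (hG : ∀ g ∈ G, ∃ d, g.IsHomogeneous d) {k B : ℕ}
    (hB : k < B) : ∃ q : Polynomial K, q ≠ 0 ∧ ∀ t, t ≠ 0 → q.eval t ≠ 0 →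
      hilb (I ⊔ Ideal.span (torusHom B t⁻¹ '' G)) k ≤ hilb (initialIdeal I ⊔ Ideal.span G) k := by
  classical
  let U := idealPiece (initialIdeal I ⊔ Ideal.span G) k
  obtain ⟨b, hbT, hspan, hind⟩ := exists_linearIndependent K
    ({m | ∃ u, ∃ f ∈ idealPiece I k, IsLead f u ∧ m = monomial u (1 : K)} ∪
        idealPiece (Ideal.span G) k)
  have hTU : ∀ m ∈ b, m ∈ U := by
    intro m hm
    obtain ⟨u, f, hf, hu, rfl⟩ | hm := hbT hm
    · rw [mem_idealPiece] at hf
      refine mem_idealPiece.2 ⟨Ideal.mem_sup_left ?_,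
        isHomogeneous_monomial _ (degree_eq_of_mem_support hf.2 hu.1)⟩
      rw [initialIdeal_eq_span]
      exact Ideal.subset_span ⟨u, ⟨f, hf.1, hu⟩, rfl⟩
    · have hm := mem_idealPiece.1 hm
      exact mem_idealPiece.2 ⟨Ideal.mem_sup_right hm.1, hm.2⟩
  have hfin : Finite b := by
    have : LinearIndependent K fun x : b => (⟨x, hTU x x.2⟩ : U) :=
      LinearIndependent.of_comp U.subtype hind
    exact this.finite
  cases nonempty_fintype b
  have hcard : finrank K U ≤ Fintype.card b := by
    rw [← finrank_span_eq_card hind, Subtype.range_coe]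
    have : U ≤ Submodule.span K b := by
      rw [hspan]; exact idealPiece_initialIdeal_sup_le hI hG k
    have : FiniteDimensional K (Submodule.span K b) :=
      FiniteDimensional.span_of_finite K (Set.toFinite b)
    exact Submodule.finrank_mono ‹_›
  have hex : ∀ m : b, ∃ p : K → MvPolynomial (Fin n) K, p 0 = m ∧
      (∀ φ : MvPolynomial (Fin n) K →ₗ[K] K, ∃ P : Polynomial K, ∀ t, φ (p t) = P.eval t) ∧
      ∀ t, t ≠ 0 → torusHom B t⁻¹ (p t) ∈
        idealPiece (I ⊔ Ideal.span (torusHom B t⁻¹ '' G)) k := by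
    rintro ⟨m, hm⟩
    obtain ⟨u, f, hf, hu, rfl⟩ | hm := hbT hm
    · obtain ⟨p, h0, hP, ht⟩ := exists_deformation hB hf hu
      refine ⟨p, h0, hP, fun t ht0 => ?_⟩
      have := mem_idealPiece.1 (ht t ht0)
      exact mem_idealPiece.2 ⟨Ideal.mem_sup_left this.1, this.2⟩
    · refine ⟨fun _ => m, rfl, fun φ => ⟨Polynomial.C (φ m), by simp⟩, fun t _ => ?_⟩
      have hm := mem_idealPiece.1 hm
      refine mem_idealPiece.2 ⟨Ideal.mem_sup_right ?_, torusHom_isHomogeneous _ _ hm.2⟩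
      have := Ideal.mem_map_of_mem (torusHom (n := n) B t⁻¹) hm.1
      rwa [Ideal.map_span] at this
  choose p h0 hP ht using hex
  obtain ⟨q, hq, hqt⟩ := exists_polynomial_linearIndependent p hP (by simpa only [h0] using hind)
  refine ⟨q, hq, fun t ht0 hqt0 => ?_⟩
  have hind' := (hqt t hqt0).map' (torusHom B t⁻¹).toLinearMap
    (LinearMap.ker_eq_bot.2 (torusHom_injective B (inv_ne_zero ht0)))
  have hle : Fintype.card b ≤
      finrank K (idealPiece (I ⊔ Ideal.span (torusHom B t⁻¹ '' G)) k) := by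
    refine LinearIndependent.fintype_card_le_finrank
      (b := fun m : b => (⟨_, ht m t ht0⟩ : idealPiece _ k)) ?_
    exact LinearIndependent.of_comp (Submodule.subtype _) hind'
  have h1 := hilb_add_finrank_idealPiece (initialIdeal I ⊔ Ideal.span G) k
  have h2 := hilb_add_finrank_idealPiece (I ⊔ Ideal.span (torusHom B t⁻¹ '' G)) k
  have h3 : finrank K U = finrank K (idealPiece (initialIdeal I ⊔ Ideal.span G) k) := rfl
  omega

theorem regSeq_iff_forall_getElem {I : Ideal (MvPolynomial (Fin n) K)}
    {l : List (MvPolynomial (Fin n) K)} :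
    RegSeq I l ↔ ∀ i (h : i < l.length), NZD (I ⊔ Ideal.ofList (l.take i)) l[i] := by
  induction l generalizing I with
  | nil => simp [RegSeq]
  | cons x l ih =>
    rw [RegSeq, ih]
    constructor
    · rintro ⟨h1, h2⟩ (_ | i) hi
      · simpa using h1
      · simpa [sup_assoc] using h2 i (by simpa using hi)
    · intro h
      refine ⟨?_, fun i hi => ?_⟩
      · have h0 := h 0 (by simp)
        rwa [List.take_zero, Ideal.ofList_nil, sup_bot_eq, List.getElem_cons_zero] at h0
      · have h1 := h (i + 1) (by simpa using hi)
        rwa [List.take_succ_cons, Ideal.ofList_cons, ← sup_assoc, List.getElem_cons_succ] at h1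

theorem mk_mem_ofList_map_smul_top {I : Ideal (MvPolynomial (Fin n) K)}
    {l : List (MvPolynomial (Fin n) K)} {f : MvPolynomial (Fin n) K} :
    Ideal.Quotient.mk I f ∈ (Ideal.ofList (l.map (Ideal.Quotient.mk I)) • ⊤ :
      Ideal (MvPolynomial (Fin n) K ⧸ I)) ↔ f ∈ I ⊔ Ideal.ofList l := by
  rw [smul_eq_mul, Ideal.mul_top, ← Ideal.map_ofList, Ideal.mem_quotient_iff_mem_sup, sup_comm]

theorem isWeaklyRegular_iff_regSeq {I : Ideal (MvPolynomial (Fin n) K)}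
    {l : List (MvPolynomial (Fin n) K)} :
    RingTheory.Sequence.IsWeaklyRegular (MvPolynomial (Fin n) K ⧸ I)
      (l.map (Ideal.Quotient.mk I)) ↔ RegSeq I l := by
  rw [RingTheory.Sequence.isWeaklyRegular_iff, regSeq_iff_forall_getElem]
  simp only [List.length_map, List.getElem_map, ← List.map_take,
    isSMulRegular_quotient_iff_mem_of_smul_mem]
  refine forall₂_congr fun i hi => ?_
  rw [Ideal.Quotient.mk_surjective.forall]
  refine forall_congr' fun f => ?_
  rw [smul_eq_mul (Ideal.Quotient.mk I l[i]), ← map_mul]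
  exact imp_congr mk_mem_ofList_map_smul_top mk_mem_ofList_map_smul_top

theorem isRegular_of_regSeq {I : Ideal (MvPolynomial (Fin n) K)}
    {l : List (MvPolynomial (Fin n) K)} (h : RegSeq I l) (hne : I ⊔ Ideal.ofList l ≠ ⊤) :
    RingTheory.Sequence.IsRegular (MvPolynomial (Fin n) K ⧸ I)
      (l.map (Ideal.Quotient.mk I)) := by
  refine ⟨isWeaklyRegular_iff_regSeq.2 h, fun htop => hne ?_⟩
  rw [Ideal.eq_top_iff_one, ← mk_mem_ofList_map_smul_top]
  exact htop ▸ Submodule.mem_top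

theorem ofList_ofFn {d : ℕ} (θ : Fin d → MvPolynomial (Fin n) K) :
    Ideal.ofList (List.ofFn θ) = Ideal.span (Set.range θ) := by
  exact congrArg Ideal.span (Set.ext fun x => List.mem_ofFn' θ x)

theorem length_le_ringKrullDim {I : Ideal (MvPolynomial (Fin n) K)}
    {l : List (MvPolynomial (Fin n) K)} (h : RegSeq I l) (hne : I ⊔ Ideal.ofList l ≠ ⊤) :
    (l.length : WithBot ℕ∞) ≤ ringKrullDim (MvPolynomial (Fin n) K ⧸ I) := by
  induction l generalizing I with
  | nil =>
    rw [Ideal.ofList_nil, sup_bot_eq] at hne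
    have := Ideal.Quotient.nontrivial_iff.2 hne
    simpa using ringKrullDim_nonneg_of_nontrivial (R := MvPolynomial (Fin n) K ⧸ I)
  | cons x l ih =>
    rw [Ideal.ofList_cons, ← sup_assoc] at hne
    have h1 := ih h.2 hne
    have hr : Ideal.Quotient.mk I x ∈ nonZeroDivisors (MvPolynomial (Fin n) K ⧸ I) := by
      rw [mem_nonZeroDivisors_iff_right]
      intro y hy
      obtain ⟨f, rfl⟩ := Ideal.Quotient.mk_surjective y
      rw [← map_mul, Ideal.Quotient.eq_zero_iff_mem] at hy
      exact Ideal.Quotient.eq_zero_iff_mem.2 (h.1 f (by rwa [mul_comm]))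
    have h2 := ringKrullDim_succ_le_of_surjective
      (Ideal.Quotient.factor (le_sup_left : I ≤ I ⊔ Ideal.span {x}))
      (Ideal.Quotient.factor_surjective _) hr (by
        rw [Ideal.Quotient.factor_mk, Ideal.Quotient.eq_zero_iff_mem]
        exact Ideal.mem_sup_right (Ideal.subset_span rfl))
    refine le_trans ?_ h2
    rw [List.length_cons, Nat.cast_add, Nat.cast_one]
    gcongr

/-- A form of positive degree in `I + (l)` is, modulo `I`, a combination of the linear forms in `l`
with coefficients of one degree less. -/
theorem mem_of_mem_sup_ofList {I : Ideal (MvPolynomial (Fin n) K)} (hI : IsGraded I)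
    {l : List (MvPolynomial (Fin n) K)} (hl : ∀ x ∈ l, x.IsHomogeneous 1) {k : ℕ}
    {M : AddSubgroup (MvPolynomial (Fin n) K)} (hIM : ∀ f ∈ idealPiece I (k + 1), f ∈ M)
    (hM : ∀ x ∈ l, ∀ g : MvPolynomial (Fin n) K, g.IsHomogeneous k → x * g ∈ M)
    {f : MvPolynomial (Fin n) K} (hf : f.IsHomogeneous (k + 1)) (hfl : f ∈ I ⊔ Ideal.ofList l) :
    f ∈ M := by
  induction l generalizing I with
  | nil => exact hIM f (mem_idealPiece.2 ⟨by simpa using hfl, hf⟩)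
  | cons x l ih =>
    rw [List.forall_mem_cons] at hl hM
    rw [Ideal.ofList_cons, ← sup_assoc] at hfl
    refine ih (isGraded_sup_singleton hI hl.1) hl.2 (fun a ha => ?_) hM.2 hfl
    obtain ⟨ha, hak⟩ := mem_idealPiece.1 ha
    obtain ⟨g, hg⟩ := mem_sup_span_singleton.1 ha
    have hg' := hI _ hg (k + 1)
    rw [map_sub, homogeneousComponent_eq_self hak, add_comm k,
      homogeneousComponent_mul_of_isHomogeneous hl.1] at hg'
    have hgk := homogeneousComponent_isHomogeneous k g
    have h1 : a - x * homogeneousComponent k g ∈ M :=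
      hIM _ (mem_idealPiece.2 ⟨hg', hak.sub (by rw [add_comm]; exact hl.1.mul hgk)⟩)
    simpa using add_mem h1 (hM.1 _ hgk)

/-- A `K`-algebra that is a finite module over a subalgebra with `d` generators has Krull dimension
at most `d`. -/
theorem ringKrullDim_le_of_finite {A : Type*} [CommRing A] [Algebra K A] {d : ℕ} (y : Fin d → A)
    {T : Set A} (hT : T.Finite) (h : ∀ M : Submodule K A, T ⊆ M →
      (∀ i, ∀ a ∈ M, y i * a ∈ M) → M = ⊤) : ringKrullDim A ≤ d := by
  let R := MvPolynomial (Fin d) K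
  let φ : R →ₐ[K] A := aeval y
  let alg : Algebra R A := φ.toRingHom.toAlgebra
  have hsmul : ∀ (r : R) (a : A), r • a = φ r * a := fun _ _ => rfl
  let M : Submodule K A :=
    { (Submodule.span R T).toAddSubmonoid with
      smul_mem' := fun c a ha => by
        have := (Submodule.span R T).smul_mem (C c) ha
        rwa [hsmul, aeval_C, ← Algebra.smul_def] at this }
  have hM : M = ⊤ := by
    refine h M Submodule.subset_span fun i a ha => ?_
    have := (Submodule.span R T).smul_mem (X i) ha
    rwa [hsmul, aeval_X] at this
  have htop : Submodule.span R T = ⊤ := by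
    refine eq_top_iff.2 fun a _ => ?_
    have : a ∈ M := hM ▸ Submodule.mem_top
    exact this
  have hfin : Module.Finite R A := ⟨⟨hT.toFinset, by rw [hT.coe_toFinset]; exact htop⟩⟩
  have hint : Algebra.IsIntegral R A := inferInstance
  calc ringKrullDim A ≤ ringKrullDim R := by
        refine Order.krullDim_le_of_strictMono (PrimeSpectrum.comap (algebraMap R A)) ?_
        intro p q hpq
        exact Ideal.IsIntegral.comap_lt_comap (R := R) (I := p.asIdeal) (J := q.asIdeal) hpq
    _ = d := by
        rw [MvPolynomial.ringKrullDim_of_isNoetherianRing, ringKrullDim_eq_zero_of_field,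
          zero_add, Nat.card_fin]

/-- If `S/(I + (l))` has finite length, the Krull dimension of `S/I` is at most the number of
linear forms in `l`. -/
theorem ringKrullDim_le_length {I : Ideal (MvPolynomial (Fin n) K)} (hI : IsGraded I)
    {l : List (MvPolynomial (Fin n) K)} (hl : ∀ x ∈ l, x.IsHomogeneous 1) {N : ℕ}
    (hN : ∀ k, N < k → ∀ f : MvPolynomial (Fin n) K, f.IsHomogeneous k →
      f ∈ I ⊔ Ideal.ofList l) :
    ringKrullDim (MvPolynomial (Fin n) K ⧸ I) ≤ l.length := by
  refine ringKrullDim_le_of_finite (K := K) (fun i : Fin l.length => Ideal.Quotient.mk I l[i])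
    (T := (fun u => Ideal.Quotient.mk I (monomial u 1)) '' {u : Fin n →₀ ℕ | u.degree ≤ N})
    ((Finsupp.finite_of_degree_le N).image _) fun M hTM hM => ?_
  let M' := M.comap (Ideal.Quotient.mkₐ K I).toLinearMap
  have hM' : ∀ f, f ∈ M' ↔ Ideal.Quotient.mk I f ∈ M := fun _ => Iff.rfl
  have hform : ∀ k, ∀ f : MvPolynomial (Fin n) K, f.IsHomogeneous k → f ∈ M' := by
    intro k
    induction k with
    | zero =>
      intro f hf
      rw [← support_sum_monomial_coeff f]
      refine sum_mem fun u hu => ?_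
      rw [← mul_one (coeff u f), ← smul_eq_mul, ← smul_monomial]
      exact M'.smul_mem _ (hTM ⟨u, by simp [degree_eq_of_mem_support hf hu], rfl⟩)
    | succ k ih =>
      intro f hf
      by_cases hk : k + 1 ≤ N
      · rw [← support_sum_monomial_coeff f]
        refine sum_mem fun u hu => ?_
        rw [← mul_one (coeff u f), ← smul_eq_mul, ← smul_monomial]
        exact M'.smul_mem _ (hTM ⟨u, by simpa [degree_eq_of_mem_support hf hu] using hk, rfl⟩)
      · refine mem_of_mem_sup_ofList hI hl (M := M'.toAddSubgroup) (fun a ha => ?_)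
          (fun x hx g hg => ?_) hf (hN _ (by omega) f hf)
        · change Ideal.Quotient.mk I a ∈ M
          rw [Ideal.Quotient.eq_zero_iff_mem.2 (mem_idealPiece.1 ha).1]
          exact M.zero_mem
        · obtain ⟨i, hi, rfl⟩ := List.getElem_of_mem hx
          change Ideal.Quotient.mk I (l[i] * g) ∈ M
          rw [map_mul]
          exact hM ⟨i, hi⟩ _ (ih g hg)
  refine eq_top_iff.2 fun y _ => ?_
  obtain ⟨f, rfl⟩ := Ideal.Quotient.mk_surjective y
  rw [← hM', ← sum_homogeneousComponent f]
  exact sum_mem fun k _ => hform k _ (homogeneousComponent_isHomogeneous _ _)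

/-- Multiplication by a form `x` between graded pieces of `S/A` is bijective exactly when the
dimensions agree and `S/(A + (x))` vanishes in the target degree. -/
theorem bijOn_mul_iff {A : Ideal (MvPolynomial (Fin n) K)} (hA : IsGraded A)
    {x : MvPolynomial (Fin n) K} {m i k : ℕ} (hx : x.IsHomogeneous m) (hk : m + i = k) :
    Set.BijOn (fun y => Ideal.Quotient.mk A x * y) (quotPiece A i) (quotPiece A k) ↔
      hilb A i = hilb A k ∧ hilb (A ⊔ Ideal.span {x}) k = 0 := by
  subst hk
  have hmaps : ∀ y ∈ quotPiece A i,
      LinearMap.mulLeft K (Ideal.Quotient.mk A x) y ∈ quotPiece A (m + i) := by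
    intro y hy
    obtain ⟨f, hf, rfl⟩ := mem_quotPiece.1 hy
    exact mem_quotPiece.2 ⟨x * f, hx.mul hf, map_mul _ _ _⟩
  let L : quotPiece A i →ₗ[K] quotPiece A (m + i) :=
    (LinearMap.mulLeft K (Ideal.Quotient.mk A x)).restrict hmaps
  have hbij : Set.BijOn (fun y => Ideal.Quotient.mk A x * y) (quotPiece A i)
      (quotPiece A (m + i)) ↔ Function.Bijective L := by
    constructor
    · rintro ⟨-, hinj, hsurj⟩
      refine ⟨fun a b hab => Subtype.ext (hinj a.2 b.2 (congrArg Subtype.val hab)), fun b => ?_⟩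
      obtain ⟨a, ha, hab⟩ := hsurj b.2
      exact ⟨⟨a, ha⟩, Subtype.ext hab⟩
    · rintro ⟨hinj, hsurj⟩
      refine ⟨hmaps, fun a ha b hb hab => ?_, fun b hb => ?_⟩
      · exact congrArg Subtype.val (@hinj ⟨a, ha⟩ ⟨b, hb⟩ (Subtype.ext hab))
      · obtain ⟨a, ha⟩ := hsurj ⟨b, hb⟩
        exact ⟨a, a.2, congrArg Subtype.val ha⟩
  have hsurj : Function.Surjective L ↔ hilb (A ⊔ Ideal.span {x}) (m + i) = 0 := by
    rw [hilb_eq_zero_iff, quotPiece_eq_bot_iff]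
    constructor
    · intro h f hf
      obtain ⟨⟨a, ha⟩, hab⟩ := h ⟨Ideal.Quotient.mk A f, mem_quotPiece.2 ⟨f, hf, rfl⟩⟩
      obtain ⟨g, hg, rfl⟩ := mem_quotPiece.1 ha
      have h1 : Ideal.Quotient.mk A x * Ideal.Quotient.mk A g = Ideal.Quotient.mk A f :=
        congrArg Subtype.val hab
      rw [← map_mul] at h1
      exact mem_sup_span_singleton.2 ⟨g, Ideal.Quotient.eq.1 h1.symm⟩
    · rintro h ⟨b, hb⟩
      obtain ⟨f, hf, rfl⟩ := mem_quotPiece.1 hb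
      obtain ⟨g, hg⟩ := mem_sup_span_singleton.1 (h f hf)
      have hg' := hA _ hg (m + i)
      rw [map_sub, homogeneousComponent_eq_self hf,
        homogeneousComponent_mul_of_isHomogeneous hx] at hg'
      refine ⟨⟨Ideal.Quotient.mk A (homogeneousComponent i g), mem_quotPiece.2
        ⟨_, homogeneousComponent_isHomogeneous _ _, rfl⟩⟩, Subtype.ext ?_⟩
      change Ideal.Quotient.mk A x * Ideal.Quotient.mk A _ = Ideal.Quotient.mk A f
      rw [← map_mul]
      exact (Ideal.Quotient.eq.2 hg').symm
  rw [hbij, ← hsurj]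
  constructor
  · exact fun h => ⟨(LinearEquiv.ofBijective L h).finrank_eq, h.2⟩
  · exact fun h => ⟨(LinearMap.injective_iff_surjective_of_finrank_eq_finrank h.1).2 h.2, h.2⟩

theorem hilb_eq_zero_of_le {I : Ideal (MvPolynomial (Fin n) K)} {k m : ℕ} (hkm : k ≤ m)
    (h : hilb I k = 0) : hilb I m = 0 := by
  induction m, hkm using Nat.le_induction with
  | base => exact h
  | succ m _ ih =>
    rw [hilb_eq_zero_iff, quotPiece_eq_bot_iff] at ih ⊢
    intro f hf
    rw [← support_sum_monomial_coeff f]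
    refine sum_mem fun u hu => ?_
    have hdeg := degree_eq_of_mem_support hf hu
    obtain ⟨i, hi⟩ : ∃ i, u i ≠ 0 := by
      by_contra! h0
      rw [show u = 0 from Finsupp.ext h0, map_zero] at hdeg
      omega
    obtain ⟨w, rfl⟩ := exists_add_of_le (Finsupp.single_le_iff.2 (Nat.one_le_iff_ne_zero.2 hi))
    rw [map_add, Finsupp.degree_single] at hdeg
    have hw := ih (monomial w (coeff (Finsupp.single i 1 + w) f))
      (isHomogeneous_monomial _ (by omega))
    have := Ideal.mul_mem_left I (monomial (Finsupp.single i 1) (1 : K)) hw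
    rwa [monomial_mul, one_mul] at this

theorem hasSLPIdeal_of_initialIdeal [Infinite K] {I : Ideal (MvPolynomial (Fin n) K)}
    (hI : IsGraded I) (h : HasSLPIdeal (initialIdeal I)) : HasSLPIdeal I := by
  classical
  obtain ⟨⟨d', hd', θ', ⟨hθ'lin, -⟩, hreg'⟩, d, hd, θ, ⟨hθlin, -⟩, ω, hω, s, ⟨hs, hs'⟩, hbij⟩ := h
  obtain rfl : d' = d := by
    rw [hd'] at hd
    exact_mod_cast hd
  set J := initialIdeal I
  have hJ : IsGraded J := isGraded_initialIdeal I
  have hlist : ∀ θ : Fin d' → MvPolynomial (Fin n) K, (∀ a, (θ a).IsHomogeneous 1) →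
      ∀ x ∈ List.ofFn θ, x.IsHomogeneous 1 := by
    intro θ hθ x hx
    obtain ⟨a, rfl⟩ := (List.mem_ofFn' θ x).1 hx
    exact hθ a
  have hgr : IsGraded (J ⊔ Ideal.span (Set.range θ)) := by
    rw [← ofList_ofFn]
    exact isGraded_sup_ofList hJ (hlist θ hθlin)
  have hregJ : RegSeq J (List.ofFn θ) := by
    refine regSeq_of_hasLinearRegSeq hJ (hlist θ hθlin) (N := s + 1) ?_ ?_
    · exact ⟨List.ofFn θ', by simp, hlist θ' hθ'lin,
        isWeaklyRegular_iff_regSeq.1 hreg'.toIsWeaklyRegular⟩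
    · rw [ofList_ofFn, ← quotPiece_eq_bot_iff]
      exact hs' _ (Nat.lt_succ_self s)
  have hhilbJ := (regSeq_iff_hilb hJ (hlist θ hθlin)).1 hregJ
  rw [ofList_ofFn, List.length_ofFn] at hhilbJ
  have hrange : ∀ g ∈ Set.range θ, ∃ d, g.IsHomogeneous d := by
    rintro _ ⟨a, rfl⟩
    exact ⟨1, hθlin a⟩
  have hinsert : ∀ i, ∀ g ∈ insert (ω ^ (s - 2 * i)) (Set.range θ), ∃ d, g.IsHomogeneous d := by
    rintro i g (rfl | hg)
    · exact ⟨_, hω.pow _⟩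
    · exact hrange g hg
  have hq₁ : ∀ k, ∃ q : Polynomial K, q ≠ 0 ∧ ∀ t, t ≠ 0 → q.eval t ≠ 0 → k ≤ s + 1 →
      hilb (I ⊔ Ideal.span (torusHom (s + 2) t⁻¹ '' Set.range θ)) k ≤
        hilb (J ⊔ Ideal.span (Set.range θ)) k := by
    intro k
    by_cases hk : k ≤ s + 1
    · obtain ⟨q, hq, h⟩ := hilb_sup_torusHom_le hI hrange (Nat.lt_succ_of_le hk)
      exact ⟨q, hq, fun t h0 h1 _ => h t h0 h1⟩
    · exact ⟨1, one_ne_zero, fun t _ _ h => absurd h hk⟩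
  choose q₁ hq₁ hqt₁ using hq₁
  choose q₂ hq₂ hqt₂ using fun i => hilb_sup_torusHom_le hI (hinsert i)
    (k := s - i) (B := s + 2) (by omega)
  obtain ⟨t, ht⟩ : ∃ t, (Polynomial.X * ∏ k ∈ Finset.range (s + 2), (q₁ k * q₂ k)).eval t ≠ 0 := by
    by_contra! h0
    have hne : Polynomial.X * ∏ k ∈ Finset.range (s + 2), (q₁ k * q₂ k) ≠ 0 :=
      mul_ne_zero Polynomial.X_ne_zero
        (Finset.prod_ne_zero_iff.2 fun k _ => mul_ne_zero (hq₁ k) (hq₂ k))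
    exact hne (Polynomial.funext fun r => by rw [h0, Polynomial.eval_zero])
  rw [Polynomial.eval_mul, Polynomial.eval_X, Polynomial.eval_prod] at ht
  have ht0 : t ≠ 0 := left_ne_zero_of_mul ht
  have htq : ∀ k < s + 2, (q₁ k).eval t ≠ 0 ∧ (q₂ k).eval t ≠ 0 := by
    intro k hk
    have := Finset.prod_ne_zero_iff.1 (right_ne_zero_of_mul ht) k (Finset.mem_range.2 hk)
    rw [Polynomial.eval_mul] at this
    exact ⟨left_ne_zero_of_mul this, right_ne_zero_of_mul this⟩
  set τ := torusHom (n := n) (s + 2) t⁻¹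
  let η : Fin d' → MvPolynomial (Fin n) K := fun a => τ (θ a)
  have hη : ∀ a, (η a).IsHomogeneous 1 := fun a => torusHom_isHomogeneous _ _ (hθlin a)
  have hηrange : τ '' Set.range θ = Set.range η := (Set.range_comp _ _).symm
  have hle : hilb (I ⊔ Ideal.span (Set.range η)) ≤ hilb (J ⊔ Ideal.span (Set.range θ)) := by
    have hsmall : ∀ k ≤ s + 1, hilb (I ⊔ Ideal.span (Set.range η)) k ≤
        hilb (J ⊔ Ideal.span (Set.range θ)) k := by
      intro k hk
      rw [← hηrange]
      exact hqt₁ k t ht0 (htq k (by omega)).1 hk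
    intro k
    rcases le_or_gt k (s + 1) with hk | hk
    · exact hsmall k hk
    · have h1 := hsmall (s + 1) le_rfl
      rw [hilb_eq_zero_iff.2 (hs' _ (Nat.lt_succ_self s))] at h1
      have h2 := hilb_eq_zero_of_le hk.le (Nat.le_zero.1 h1)
      exact h2.le.trans (Nat.zero_le _)
  have hhilbI := hilb_le_iterate_partialSum hI (hlist η hη)
  rw [ofList_ofFn, List.length_ofFn] at hhilbI
  have hmono := iterate_partialSum_mono hle d'
  rw [← hhilbJ] at hmono
  have hIJ : hilb I = hilb J := le_antisymm (hhilbI.trans hmono) (hilb_initialIdeal_le I)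
  have hit : hilb I = partialSum^[d'] (hilb (I ⊔ Ideal.span (Set.range η))) :=
    le_antisymm hhilbI (hmono.trans hIJ.ge)
  have heq : hilb (I ⊔ Ideal.span (Set.range η)) = hilb (J ⊔ Ideal.span (Set.range θ)) := by
    apply partialSum_injective.iterate d'
    rw [← hit, ← hhilbJ, hIJ]
  have hregI : RegSeq I (List.ofFn η) := by
    rw [regSeq_iff_hilb hI (hlist η hη), ofList_ofFn, List.length_ofFn]
    exact hit
  have hgrI : IsGraded (I ⊔ Ideal.span (Set.range η)) := by
    rw [← ofList_ofFn]
    exact isGraded_sup_ofList hI (hlist η hη)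
  have hbots : quotPiece (I ⊔ Ideal.span (Set.range η)) s ≠ ⊥ := by
    rwa [Ne, ← hilb_eq_zero_iff, heq, hilb_eq_zero_iff]
  have hbot : ∀ k, s < k → quotPiece (I ⊔ Ideal.span (Set.range η)) k = ⊥ := by
    intro k hk
    rw [← hilb_eq_zero_iff, heq, hilb_eq_zero_iff]
    exact hs' k hk
  have hne : I ⊔ Ideal.ofList (List.ofFn η) ≠ ⊤ := by
    rw [ofList_ofFn]
    intro htop
    exact hbots (quotPiece_eq_bot_iff.2 fun f _ => by rw [htop]; trivial)
  have hdim : ringKrullDim (MvPolynomial (Fin n) K ⧸ I) = d' := by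
    refine le_antisymm ?_ ?_
    · have := ringKrullDim_le_length hI (hlist η hη) (N := s) (fun k hk => by
        rw [ofList_ofFn, ← quotPiece_eq_bot_iff]
        exact hbot k hk)
      rwa [List.length_ofFn] at this
    · have := length_le_ringKrullDim hregI hne
      rwa [List.length_ofFn] at this
  have hlsop : IsLSOP I d' η := by
    refine ⟨hη, ?_⟩
    have := ringKrullDim_le_length hgrI (l := []) (by simp) (N := s) (fun k hk => by
      rw [Ideal.ofList_nil, sup_bot_eq, ← quotPiece_eq_bot_iff]
      exact hbot k hk)
    simpa using this
  refine ⟨⟨d', hdim, η, hlsop, isRegular_of_regSeq hregI hne⟩, d', hdim, η, hlsop, τ ω,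
    torusHom_isHomogeneous _ _ hω, s, ⟨hbots, hbot⟩, fun i hi => ?_⟩
  have hJi := hbij i hi
  rw [← map_pow, bijOn_mul_iff hgr (hω.pow (s - 2 * i)) (by omega)] at hJi
  rw [← map_pow, bijOn_mul_iff hgrI ((torusHom_isHomogeneous _ _ hω).pow (s - 2 * i)) (by omega),
    heq]
  refine ⟨hJi.1, Nat.le_zero.1 ?_⟩
  have h2 := hqt₂ i t ht0 (htq i (by omega)).2
  have hspan : ∀ (L : Ideal (MvPolynomial (Fin n) K)) g T,
      L ⊔ Ideal.span (insert g T) = L ⊔ Ideal.span T ⊔ Ideal.span {g} := fun L g T => by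
    rw [Set.insert_eq, Ideal.span_union, sup_comm (Ideal.span {g}), sup_assoc]
  rw [Set.image_insert_eq, hηrange, hspan, hspan, map_pow] at h2
  exact h2.trans hJi.2.le

end GradedQuotient

/-- Lemma 3.2, Wiebe, extended to arbitrary homogeneous ideals. If
`S/in(I)` has the strong Lefschetz property, where `in(I)` is the initial ideal of the
homogeneous ideal `I` w.r.t. the degree reverse lexicographic order, then `S/I` has the
strong Lefschetz property. -/
theorem stmt8 (K : Type) [Field K] (hK : Infinite K) (n : ℕ)
    (I : Ideal (MvPolynomial (Fin n) K))
    (hhom : ∀ f ∈ I, ∀ k : ℕ, MvPolynomial.homogeneousComponent k f ∈ I)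
    (h : HasSLPIdeal (initialIdeal I)) :
    HasSLPIdeal I := by
  have := hK
  exact GradedQuotient.hasSLPIdeal_of_initialIdeal hhom h
end

section
/- Let Γ be a (d−1)-dimensional simplicial complex on [n] satisfying the Link condition with respect to {i,j}, where 1 ≤ i < j ≤ n, and suppose dim C_Γ(ij) = d−1 and dim lk_Γ({i,j}) = d−3. If both C_Γ(ij) and lk_Γ({i,j}) are Cohen–Macaulay over an infinite field K, then Γ is Cohen–Macaulay over K. -/
section DepthViaExt

open CategoryTheory Abelian RingTheory.Sequence Pointwise

universe u

/-- `Ext^k(R/I, M)` vanishes for all `k < d`; for finite `M` with `I M ≠ M` over a Noetherian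
ring this says that the `I`-depth of `M` is at least `d`. -/
def DepthGE {R : Type u} [CommRing R] (I : Ideal R) (M : Type u) [AddCommGroup M] [Module R M]
    (d : ℕ) : Prop :=
  ∀ k < d, Subsingleton (Ext (ModuleCat.of R (R ⧸ I)) (ModuleCat.of R M) k)

variable {R : Type u} [CommRing R] {I : Ideal R}
variable {M₁ M₂ M₃ : Type u} [AddCommGroup M₁] [Module R M₁] [AddCommGroup M₂] [Module R M₂]
  [AddCommGroup M₃] [Module R M₃]

theorem DepthGE.mono {d e : ℕ} (h : DepthGE I M₁ d) (hed : e ≤ d) : DepthGE I M₁ e :=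
  fun k hk => h k (hk.trans_le hed)

theorem DepthGE.congr {d : ℕ} (e : M₁ ≃ₗ[R] M₂) (h : DepthGE I M₁ d) : DepthGE I M₂ d := by
  intro k hk
  have := h k hk
  refine subsingleton_of_forall_eq 0 fun x => ?_
  have hx : x.comp (Ext.mk₀ e.toModuleIso.inv) (add_zero k) = 0 := Subsingleton.elim _ _
  have hy : (x.comp (Ext.mk₀ e.toModuleIso.inv) (add_zero k)).comp
      (Ext.mk₀ e.toModuleIso.hom) (add_zero k) = x := by
    rw [Ext.comp_assoc_of_third_deg_zero, Ext.mk₀_comp_mk₀, Iso.inv_hom_id, Ext.comp_mk₀_id]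
  rw [← hy, hx, Ext.zero_comp]

theorem DepthGE.of_exact {d : ℕ} (f : M₁ →ₗ[R] M₂) (g : M₂ →ₗ[R] M₃)
    (hf : Function.Injective f) (hfg : Function.Exact f g) (hg : Function.Surjective g)
    (h₁ : DepthGE I M₁ d) (h₃ : DepthGE I M₃ d) : DepthGE I M₂ d := by
  intro k hk
  have := h₁ k hk
  have := h₃ k hk
  have hS := ModuleCat.shortComplex_shortExact
    (ModuleCat.shortComplexOfCompEqZero f g hfg.linearMap_comp_eq_zero) hfg hf hg
  refine subsingleton_of_forall_eq 0 fun x => ?_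
  obtain ⟨y, hy⟩ := Ext.covariant_sequence_exact₂ (ModuleCat.of R (R ⧸ I)) hS x
    (Subsingleton.elim _ _)
  have hy0 : y = 0 := Subsingleton.elim _ _
  rw [← hy, hy0, Ext.zero_comp]

theorem DepthGE.quotSMulTop {d : ℕ} {x : R} (hx : IsSMulRegular M₁ x)
    (h : DepthGE I M₁ (d + 1)) : DepthGE I (QuotSMulTop x M₁) d := by
  intro k hk
  have h0 := h k (by omega)
  have h1 := h (k + 1) (by omega)
  have hx' : IsSMulRegular (ModuleCat.of R M₁) x := hx
  refine subsingleton_of_forall_eq 0 fun z => ?_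
  obtain ⟨y, hy⟩ := Ext.covariant_sequence_exact₃ (ModuleCat.of R (R ⧸ I))
    hx'.smulShortComplex_shortExact z rfl (h1.elim _ _)
  have hy0 : y = 0 := h0.elim _ _
  rw [← hy, hy0, Ext.zero_comp]
  rfl

theorem depthGE_iff_exists_isRegular [IsNoetherianRing R] [Module.Finite R M₁]
    (hI : I • (⊤ : Submodule R M₁) < ⊤) (d : ℕ) :
    DepthGE I M₁ d ↔ ∃ rs : List R, rs.length = d ∧ (∀ r ∈ rs, r ∈ I) ∧ IsRegular M₁ rs := by
  have hsupp : Module.support R (R ⧸ I) = PrimeSpectrum.zeroLocus I := by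
    rw [Module.support_eq_zeroLocus, Ideal.annihilator_quotient]
  constructor
  · intro h
    exact ModuleCat.exists_isRegular_of_exists_subsingleton_ext I d (ModuleCat.of R M₁) hI
      (ModuleCat.of R (R ⧸ I)) hsupp h
  · rintro ⟨rs, rfl, hmem, hreg⟩
    exact ModuleCat.subsingleton_ext_of_exists_isRegular I (ModuleCat.of R (R ⧸ I)) hsupp.subset
      (ModuleCat.of R M₁) hI rs hmem hreg

theorem Ideal.smul_top_quotSMulTop_lt_top {x : R} (hx : x ∈ I)
    (hI : I • (⊤ : Submodule R M₁) < ⊤) : I • (⊤ : Submodule R (QuotSMulTop x M₁)) < ⊤ := by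
  refine lt_top_iff_ne_top.mpr fun eq => hI.ne ?_
  simpa [Submodule.comap_smul_top_of_surjective I _ (Submodule.mkQ_surjective _),
    Submodule.smul_mono_left ((Ideal.span_singleton_le_iff_mem I).mpr hx),
    ← Submodule.ideal_span_singleton_smul] using congrArg (Submodule.comap (Submodule.mkQ _)) eq

theorem Ideal.smul_top_quotient_lt_top {J : Ideal R} (hJ : J ≤ I) (hI : I ≠ ⊤) :
    I • (⊤ : Submodule R (R ⧸ J)) < ⊤ := by
  refine lt_top_iff_ne_top.mpr fun eq => hI ?_
  have h := congrArg (Submodule.comap (Submodule.mkQ J)) eq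
  rwa [Submodule.comap_smul_top_of_surjective I _ (Submodule.mkQ_surjective _),
    Submodule.ker_mkQ, Submodule.comap_top, smul_eq_mul, Ideal.mul_top, sup_eq_left.mpr hJ] at h

theorem DepthGE.succ_of_quotSMulTop [IsNoetherianRing R] [Module.Finite R M₁]
    (hI : I • (⊤ : Submodule R M₁) < ⊤) {d : ℕ} {x : R} (hxI : x ∈ I) (hx : IsSMulRegular M₁ x)
    (e : QuotSMulTop x M₁ ≃ₗ[R] M₂) (h : DepthGE I M₂ d) : DepthGE I M₁ (d + 1) := by
  replace h := h.congr e.symm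
  rw [depthGE_iff_exists_isRegular hI]
  obtain ⟨rs, hlen, hmem, hreg⟩ :=
    (depthGE_iff_exists_isRegular (Ideal.smul_top_quotSMulTop_lt_top hxI hI) d).mp h
  exact ⟨x :: rs, by simp [hlen], by simpa [hxI] using hmem, hreg.cons hx⟩

/-- `(R/J)/x(R/J)` is `R/(J + (x))`. -/
noncomputable def quotSMulTopQuotientEquiv (J : Ideal R) (x : R) :
    QuotSMulTop x (R ⧸ J) ≃ₗ[R] R ⧸ (J ⊔ Ideal.span {x}) :=
  (Submodule.quotEquivOfEq _ _ (by
    rw [← Submodule.ideal_span_singleton_smul, ← Submodule.range_mkQ J, ← Submodule.map_top,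
      ← Submodule.map_smul'', smul_eq_mul, Ideal.mul_top])).trans
    (Submodule.quotientQuotientEquivQuotientSup J (Ideal.span {x}))

theorem DepthGE.succ_of_quotient_sup_span [IsNoetherianRing R] {J : Ideal R} (hJ : J ≤ I)
    (hI : I ≠ ⊤) {x : R} (hxI : x ∈ I) (hx : ∀ f, x * f ∈ J → f ∈ J) {d : ℕ}
    (h : DepthGE I (R ⧸ (J ⊔ Ideal.span {x})) d) : DepthGE I (R ⧸ J) (d + 1) := by
  have hreg : IsSMulRegular (R ⧸ J) x := by
    rw [isSMulRegular_iff_right_eq_zero_of_smul]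
    intro y hy
    obtain ⟨f, rfl⟩ := Ideal.Quotient.mk_surjective y
    rw [Ideal.Quotient.eq_zero_iff_mem]
    apply hx
    rw [← Ideal.Quotient.eq_zero_iff_mem]
    exact hy
  have hlt := Ideal.smul_top_quotient_lt_top hJ hI
  exact DepthGE.succ_of_quotSMulTop hlt hxI hreg (quotSMulTopQuotientEquiv J x) h

theorem DepthGE.of_algebra {S : Type u} [CommRing S] [Algebra R S] [IsNoetherianRing R]
    [IsNoetherianRing S] {J : Ideal S} {M : Type u} [AddCommGroup M] [Module R M] [Module S M]
    [IsScalarTower R S M] [Module.Finite R M] (hIJ : I.map (algebraMap R S) ≤ J)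
    (hJ : J • (⊤ : Submodule S M) < ⊤) {d : ℕ} (h : DepthGE I M d) : DepthGE J M d := by
  have : Module.Finite S M := Module.Finite.of_restrictScalars_finite R S M
  have hI : I • (⊤ : Submodule R M) < ⊤ := by
    refine lt_top_iff_ne_top.mpr fun eq => hJ.ne ?_
    rw [eq_top_iff]
    rintro x -
    have hx : x ∈ I • (⊤ : Submodule R M) := by rw [eq]; trivial
    refine Submodule.smul_induction_on hx (fun r hr y _ => ?_) fun y z hy hz => add_mem hy hz
    rw [← algebraMap_smul S r y]
    exact Submodule.smul_mem_smul (hIJ (Ideal.mem_map_of_mem _ hr)) Submodule.mem_top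
  obtain ⟨rs, hlen, hmem, hreg⟩ := (depthGE_iff_exists_isRegular hI d).mp h
  refine (depthGE_iff_exists_isRegular hJ d).mpr
    ⟨rs.map (algebraMap R S), by simpa, ?_, ?_, ?_⟩
  · intro r hr
    obtain ⟨c, hc, rfl⟩ := List.mem_map.mp hr
    exact hIJ (Ideal.mem_map_of_mem _ (hmem c hc))
  · exact (isWeaklyRegular_map_algebraMap_iff S M rs).mpr hreg.toIsWeaklyRegular
  · intro eq
    refine hJ.not_ge (eq.le.trans (Submodule.smul_mono_left ?_))
    refine Ideal.span_le.mpr fun r hr => ?_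
    obtain ⟨c, hc, rfl⟩ := List.mem_map.mp hr
    exact hIJ (Ideal.mem_map_of_mem _ (hmem c hc))

/-- Depth bound for a ring extension `S = φ(R) + t φ(R)` modulo an ideal `J`, given by the two
short exact sequences `0 → R/φ⁻¹(J) → S/J → R/B → 0` and `0 → R/B → R/φ⁻¹(J) → R/A → 0`. -/
theorem depthGE_quotient_of_quadratic {S : Type u} [CommRing S] [IsNoetherianRing R]
    [IsNoetherianRing S] (φ : R →+* S) {I' : Ideal S} (hI' : I' ≠ ⊤) (hII' : I.map φ ≤ I')
    {J : Ideal S} (hJ : J ≤ I') (A B : Ideal R) (p : R) (t : S)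
    (hp : ∀ f, φ (p * f) ∈ J ↔ f ∈ B) (hA : J.comap φ ⊔ Ideal.span {p} = A)
    (hgen : ∀ s, ∃ a b, s = φ a + t * φ b)
    (ht : ∀ g, (∃ a, t * φ g - φ a ∈ J) ↔ g ∈ B) {d : ℕ}
    (hdA : DepthGE I (R ⧸ A) d) (hdB : DepthGE I (R ⧸ B) d) : DepthGE I' (S ⧸ J) d := by
  algebraize [φ]
  change I.map (algebraMap R S) ≤ I' at hII'
  have hsub : DepthGE I (R ⧸ J.comap φ) d := by
    have hu' : B ≤ Submodule.comap (LinearMap.lsmul R R p) (J.comap φ) :=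
      fun f hf => (hp f).mpr hf
    have hv' : J.comap φ ≤ Submodule.comap (LinearMap.id : R →ₗ[R] R) A :=
      le_sup_left.trans hA.le
    let u : R ⧸ B →ₗ[R] R ⧸ J.comap φ := Submodule.mapQ _ _ _ hu'
    let v : R ⧸ J.comap φ →ₗ[R] R ⧸ A := Submodule.mapQ _ _ _ hv'
    have hu : ∀ f : R, u (Submodule.Quotient.mk f) = Submodule.Quotient.mk (p * f) := fun _ => rfl
    have hv : ∀ f : R, v (Submodule.Quotient.mk f) = Submodule.Quotient.mk f := fun _ => rfl
    refine DepthGE.of_exact u v ?_ ?_ ?_ hdB hdA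
    · rw [← LinearMap.ker_eq_bot, LinearMap.ker_eq_bot']
      intro y hy
      obtain ⟨f, rfl⟩ := Submodule.Quotient.mk_surjective _ y
      rw [hu, Submodule.Quotient.mk_eq_zero] at hy
      exact (Submodule.Quotient.mk_eq_zero _).mpr ((hp f).mp hy)
    · intro y
      obtain ⟨f, rfl⟩ := Submodule.Quotient.mk_surjective _ y
      rw [hv, Submodule.Quotient.mk_eq_zero, ← hA]
      constructor
      · intro hf
        obtain ⟨a, ha, b, hb, rfl⟩ := Submodule.mem_sup.mp hf
        obtain ⟨c, rfl⟩ := Ideal.mem_span_singleton.mp hb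
        refine ⟨Submodule.Quotient.mk c, ?_⟩
        rw [hu, eq_comm, Submodule.Quotient.eq, add_sub_cancel_right]
        exact ha
      · rintro ⟨z, hz⟩
        obtain ⟨c, rfl⟩ := Submodule.Quotient.mk_surjective _ z
        rw [hu, Submodule.Quotient.eq] at hz
        have : f = -(p * c - f) + p * c := by ring
        rw [this]
        exact Submodule.add_mem_sup (neg_mem hz) (Ideal.mul_mem_right _ _
          (Ideal.mem_span_singleton_self p))
    · intro y
      obtain ⟨f, rfl⟩ := Submodule.Quotient.mk_surjective _ y
      exact ⟨Submodule.Quotient.mk f, rfl⟩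
  let q : S →ₗ[R] S ⧸ J := (Ideal.Quotient.mkₐ R J).toLinearMap
  have hq0 : ∀ s, q s = 0 ↔ s ∈ J := fun s => Ideal.Quotient.eq_zero_iff_mem
  have hqs : Function.Surjective q := Ideal.Quotient.mk_surjective
  let f : R ⧸ J.comap φ →ₗ[R] S ⧸ J :=
    Submodule.liftQ (J.comap φ) (q ∘ₗ Algebra.linearMap R S) fun a ha => (hq0 _).mpr ha
  have hf : ∀ a : R, f (Submodule.Quotient.mk a) = q (φ a) := fun a => rfl
  let g₀ : R →ₗ[R] S ⧸ J := q ∘ₗ LinearMap.mulLeft R t ∘ₗ Algebra.linearMap R S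
  have hg₀ : ∀ a, g₀ a = q (t * φ a) := fun a => rfl
  let g : R ⧸ B →ₗ[R] (S ⧸ J) ⧸ LinearMap.range f :=
    Submodule.liftQ B ((LinearMap.range f).mkQ ∘ₗ g₀) (by
      intro b hb
      obtain ⟨a, ha⟩ := (ht b).mpr hb
      rw [LinearMap.mem_ker, LinearMap.comp_apply, Submodule.mkQ_apply,
        Submodule.Quotient.mk_eq_zero, hg₀]
      refine ⟨Submodule.Quotient.mk a, ?_⟩
      rw [hf, eq_comm, ← sub_eq_zero, ← map_sub, hq0]
      exact ha)
  have hg : ∀ b : R, g (Submodule.Quotient.mk b) = Submodule.Quotient.mk (q (t * φ b)) :=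
    fun b => rfl
  have hgbij : Function.Bijective g := by
    constructor
    · rw [← LinearMap.ker_eq_bot, LinearMap.ker_eq_bot']
      intro y hy
      obtain ⟨b, rfl⟩ := Submodule.Quotient.mk_surjective _ y
      rw [hg, Submodule.Quotient.mk_eq_zero] at hy
      obtain ⟨z, hz⟩ := hy
      obtain ⟨a, rfl⟩ := Submodule.Quotient.mk_surjective _ z
      rw [hf, eq_comm, ← sub_eq_zero, ← map_sub, hq0] at hz
      exact (Submodule.Quotient.mk_eq_zero _).mpr ((ht b).mp ⟨a, hz⟩)
    · intro y
      obtain ⟨z, rfl⟩ := Submodule.Quotient.mk_surjective _ y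
      obtain ⟨s, rfl⟩ := hqs z
      obtain ⟨a, b, rfl⟩ := hgen s
      refine ⟨Submodule.Quotient.mk b, ?_⟩
      rw [hg, Submodule.Quotient.eq, ← map_sub]
      exact ⟨Submodule.Quotient.mk (-a), by rw [hf]; congr 1; simp⟩
  have hR : DepthGE I (S ⧸ J) d := by
    refine DepthGE.of_exact f (LinearMap.range f).mkQ ?_ ?_ (Submodule.mkQ_surjective _) hsub
      (hdB.congr (LinearEquiv.ofBijective g hgbij))
    · rw [← LinearMap.ker_eq_bot, LinearMap.ker_eq_bot']
      intro y hy
      obtain ⟨a, rfl⟩ := Submodule.Quotient.mk_surjective _ y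
      rw [hf, hq0] at hy
      exact (Submodule.Quotient.mk_eq_zero _).mpr hy
    · exact LinearMap.exact_map_mkQ_range f
  have : Module.Finite R (S ⧸ J) := by
    classical
    refine ⟨⟨{q 1, q t}, ?_⟩⟩
    rw [eq_top_iff]
    rintro y -
    obtain ⟨s, rfl⟩ := hqs y
    obtain ⟨a, b, rfl⟩ := hgen s
    have : φ a + t * φ b = a • (1 : S) + b • t := by
      rw [Algebra.smul_def, Algebra.smul_def, mul_one, mul_comm t]; rfl
    rw [this, map_add, map_smul, map_smul]
    exact add_mem (Submodule.smul_mem _ _ (Submodule.subset_span (by simp)))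
      (Submodule.smul_mem _ _ (Submodule.subset_span (by simp)))
  exact hR.of_algebra hII' (Ideal.smul_top_quotient_lt_top hJ hI')

end DepthViaExt

section LinearForms

open MvPolynomial RingTheory.Sequence Pointwise

universe u

theorem Module.supportDim_quotient_add_length_le_of_isWeaklyRegular {R : Type u} [CommRing R]
    [IsNoetherianRing R] {M : Type u} [AddCommGroup M] [Module R M] [Module.Finite R M]
    (rs : List R) (reg : IsWeaklyRegular M rs) :
    Module.supportDim R (M ⧸ Ideal.ofList rs • (⊤ : Submodule R M)) + rs.length ≤
      Module.supportDim R M := by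
  induction rs generalizing M with
  | nil =>
    rw [Ideal.ofList_nil, Submodule.bot_smul]
    simpa using (Module.supportDim_eq_of_equiv (Submodule.quotEquivOfEqBot ⊥ rfl)).le
  | cons x rs ih =>
    rw [isWeaklyRegular_cons_iff] at reg
    have h := ih reg.2
    rw [Module.supportDim_eq_of_equiv
      (Submodule.quotOfListConsSMulTopEquivQuotSMulTopInner M x _), List.length_cons,
      Nat.cast_succ, ← add_assoc]
    exact (add_le_add_left h 1).trans
      (Module.supportDim_quotSMulTop_succ_le_of_notMem_minimalPrimes
        fun _ => reg.1.notMem_of_mem_minimalPrimes)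

theorem ringKrullDim_quotient_sup_ofList_add_length_le {R : Type u} [CommRing R]
    [IsNoetherianRing R] {I : Ideal R} (rs : List R) (reg : IsWeaklyRegular (R ⧸ I) rs) :
    ringKrullDim (R ⧸ (I ⊔ Ideal.ofList rs)) + rs.length ≤ ringKrullDim (R ⧸ I) := by
  have h := Module.supportDim_quotient_add_length_le_of_isWeaklyRegular rs reg
  rw [Module.supportDim_quotient_eq_ringKrullDim] at h
  have hle : Ideal.ofList rs • (⊤ : Submodule R (R ⧸ I)) =
      Submodule.map (Submodule.mkQ I) (Ideal.ofList rs) := by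
    rw [← Submodule.range_mkQ I, ← Submodule.map_top, ← Submodule.map_smul'', smul_eq_mul,
      Ideal.mul_top]
  rwa [Module.supportDim_eq_of_equiv ((Submodule.quotEquivOfEq _ _ hle).trans
    (Submodule.quotientQuotientEquivQuotientSup I (Ideal.ofList rs))),
    Module.supportDim_quotient_eq_ringKrullDim] at h

theorem isRegular_map_mk_iff {R : Type u} [CommRing R] {I : Ideal R} (rs : List R) :
    IsRegular (R ⧸ I) (rs.map (Ideal.Quotient.mk I)) ↔ IsRegular (R ⧸ I) rs :=
  (AddEquiv.refl (R ⧸ I)).isRegular_congr <| List.forall₂_map_left_iff.mpr <|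
    List.forall₂_same.mpr fun r _ => algebraMap_smul (R ⧸ I) r

theorem depthGE_of_isRegular_map_mk {R : Type u} [CommRing R] [IsNoetherianRing R]
    {I J : Ideal R} (hJ : J ≤ I) (hI : I ≠ ⊤) (rs : List R) (hmem : ∀ r ∈ rs, r ∈ I)
    (hreg : IsRegular (R ⧸ J) (rs.map (Ideal.Quotient.mk J))) : DepthGE I (R ⧸ J) rs.length := by
  have hlt : I • (⊤ : Submodule R (R ⧸ J)) < ⊤ := Ideal.smul_top_quotient_lt_top hJ hI
  have h : IsRegular (R ⧸ J) rs := (isRegular_map_mk_iff rs).mp hreg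
  exact (depthGE_iff_exists_isRegular hlt _).mpr ⟨rs, rfl, hmem, h⟩

variable {K : Type u} [Field K] {n : ℕ}

theorem MvPolynomial.IsHomogeneous.mem_idealOfVars {f : MvPolynomial (Fin n) K}
    (hf : f.IsHomogeneous 1) : f ∈ idealOfVars (Fin n) K := by
  rw [← pow_one (idealOfVars (Fin n) K), mem_pow_idealOfVars_iff]
  intro u hu
  rw [Finsupp.degree_eq_weight_one]
  exact (hf (mem_support_iff.mp hu)).ge

theorem idealOfVars_ne_top : idealOfVars (Fin n) K ≠ ⊤ := by
  rw [Ideal.ne_top_iff_one, ← pow_one (idealOfVars (Fin n) K), mem_pow_idealOfVars_iff]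
  intro h
  have := h 0 (by simp)
  simp at this

theorem exists_linearForm_isSMulRegular [Infinite K] {M : Type u} [AddCommGroup M]
    [Module (MvPolynomial (Fin n) K) M] [Module.Finite (MvPolynomial (Fin n) K) M]
    {r : MvPolynomial (Fin n) K} (hr : r ∈ idealOfVars (Fin n) K) (hreg : IsSMulRegular M r) :
    ∃ l : MvPolynomial (Fin n) K, l.IsHomogeneous 1 ∧ IsSMulRegular M l := by
  classical
  let V := homogeneousSubmodule (Fin n) K 1
  let restr (p : Ideal (MvPolynomial (Fin n) K)) : Subspace K V :=
    (p.restrictScalars K).comap V.subtype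
  let s : Finset (Subspace K V) :=
    (associatedPrimes.finite (MvPolynomial (Fin n) K) M).toFinset.image restr
  have hunion := biUnion_associatedPrimes_eq_compl_regular (MvPolynomial (Fin n) K) M
  have hs : ⊤ ∉ s := by
    intro htop
    obtain ⟨p, hp, hpt⟩ := Finset.mem_image.mp htop
    rw [Set.Finite.mem_toFinset] at hp
    have hle : idealOfVars (Fin n) K ≤ p := by
      refine Ideal.span_le.mpr ?_
      rintro _ ⟨a, rfl⟩
      have : (⟨X a, isHomogeneous_X K a⟩ : V) ∈ restr p := by rw [hpt]; trivial
      exact this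
    have : r ∈ ({r | IsSMulRegular M r}ᶜ : Set (MvPolynomial (Fin n) K)) := by
      rw [← hunion]
      exact Set.mem_biUnion hp (hle hr)
    exact this hreg
  have hne := Subspace.biUnion_ne_univ_of_top_notMem hs
  obtain ⟨l, hl⟩ := (Set.ne_univ_iff_exists_notMem _).mp hne
  refine ⟨l, l.2, ?_⟩
  by_contra hnl
  have hmem : (l : MvPolynomial (Fin n) K) ∈
      ({r | IsSMulRegular M r}ᶜ : Set (MvPolynomial (Fin n) K)) := hnl
  rw [← hunion] at hmem
  obtain ⟨p, hp, hlp⟩ := Set.mem_iUnion₂.mp hmem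
  refine hl (Set.mem_biUnion (x := restr p) ?_ hlp)
  exact Finset.mem_image_of_mem _ ((Set.Finite.mem_toFinset _).mpr hp)

theorem exists_linearForms_isRegular [Infinite K] (d : ℕ) {M : Type u} [AddCommGroup M]
    [Module (MvPolynomial (Fin n) K) M] [Module.Finite (MvPolynomial (Fin n) K) M]
    (hM : idealOfVars (Fin n) K • (⊤ : Submodule (MvPolynomial (Fin n) K) M) < ⊤)
    (h : DepthGE (idealOfVars (Fin n) K) M d) :
    ∃ rs : List (MvPolynomial (Fin n) K), rs.length = d ∧
      (∀ r ∈ rs, r.IsHomogeneous 1) ∧ IsRegular M rs := by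
  induction d generalizing M with
  | zero =>
    have : Nontrivial M := (Submodule.nontrivial_iff _).mp (nontrivial_of_lt _ _ hM)
    exact ⟨[], rfl, by simp, IsRegular.nil _ _⟩
  | succ d ih =>
    obtain ⟨rs, hlen, hmem, hreg⟩ :=
      (depthGE_iff_exists_isRegular hM 1).mp (h.mono (by omega))
    obtain ⟨r, rfl⟩ := List.length_eq_one_iff.mp hlen
    obtain ⟨l, hl, hlreg⟩ := exists_linearForm_isSMulRegular (hmem r (by simp))
      ((isRegular_cons_iff _ _ _).mp hreg).1
    obtain ⟨ls, hlen, hhom, hls⟩ :=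
      ih (Ideal.smul_top_quotSMulTop_lt_top hl.mem_idealOfVars hM) (h.quotSMulTop hlreg)
    exact ⟨l :: ls, by simp [hlen], by simpa [hl] using hhom, hls.cons hlreg⟩

theorem IsCMIdeal.depthGE {I : Ideal (MvPolynomial (Fin n) K)} (hI : I ≤ idealOfVars (Fin n) K)
    (h : IsCMIdeal I) {d : ℕ} (hd : (d : WithBot ℕ∞) ≤ ringKrullDim (MvPolynomial (Fin n) K ⧸ I)) :
    DepthGE (idealOfVars (Fin n) K) (MvPolynomial (Fin n) K ⧸ I) d := by
  obtain ⟨e, he, θ, ⟨hθ, -⟩, hreg⟩ := h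
  rw [he] at hd
  have hde : d ≤ (List.ofFn θ).length := by rw [List.length_ofFn]; exact_mod_cast hd
  refine (depthGE_of_isRegular_map_mk hI idealOfVars_ne_top (List.ofFn θ) ?_ hreg).mono hde
  intro r hr
  obtain ⟨a, rfl⟩ := List.mem_ofFn.mp hr
  exact (hθ a).mem_idealOfVars

theorem isCMIdeal_of_depthGE [Infinite K] {I : Ideal (MvPolynomial (Fin n) K)}
    (hI : I ≤ idealOfVars (Fin n) K) {d : ℕ}
    (hd : ringKrullDim (MvPolynomial (Fin n) K ⧸ I) = d)
    (h : DepthGE (idealOfVars (Fin n) K) (MvPolynomial (Fin n) K ⧸ I) d) : IsCMIdeal I := by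
  obtain ⟨rs, rfl, hhom, hreg⟩ := exists_linearForms_isRegular d
    (Ideal.smul_top_quotient_lt_top hI idealOfVars_ne_top) h
  refine ⟨rs.length, hd, rs.get, ⟨fun a => hhom _ (List.get_mem rs a), ?_⟩, ?_⟩
  · have hle := ringKrullDim_quotient_sup_ofList_add_length_le rs hreg.toIsWeaklyRegular
    rw [hd] at hle
    have hset : Ideal.span (Set.range rs.get) = Ideal.ofList rs := by
      rw [Ideal.ofList, Set.range_list_get]
    rw [hset]
    generalize ringKrullDim (MvPolynomial (Fin n) K ⧸ (I ⊔ Ideal.ofList rs)) = x at hle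
    cases x with
    | bot => exact bot_le
    | coe x =>
      cases x with
      | top => 
        have h' : (⊤ : ℕ∞) + rs.length ≤ rs.length := by exact_mod_cast hle
        simp at h'
      | coe x =>
        have : x + rs.length ≤ rs.length := by exact_mod_cast hle
        have : x = 0 := by omega
        simp [this]
  · rw [List.ofFn_get, isRegular_map_mk_iff]
    exact hreg

end LinearForms

section StanleyReisner

open MvPolynomial

variable {K : Type*} [Field K] {n : ℕ}

theorem faceMonomial_mem_srIdeal {Δ : Set (Finset ℕ)} {F : Finset ℕ} (hF : F ⊆ Finset.Icc 1 n)
    (h : F ∉ Δ) : faceMonomial K n F ∈ srIdeal K n Δ :=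
  Ideal.subset_span ⟨F, hF, h, rfl⟩

variable (K n) in
/-- The endomorphism of the polynomial ring that kills the variables outside `F`. -/
noncomputable def restrictVars (F : Finset ℕ) :
    MvPolynomial (Fin n) K →ₐ[K] MvPolynomial (Fin n) K :=
  aeval fun a : Fin n => if (a : ℕ) + 1 ∈ F then X a else 0

theorem restrictVars_X_of_mem {F : Finset ℕ} {a : Fin n} (h : (a : ℕ) + 1 ∈ F) :
    restrictVars K n F (X a) = X a := by
  simp [restrictVars, h]

theorem restrictVars_X_of_notMem {F : Finset ℕ} {a : Fin n} (h : (a : ℕ) + 1 ∉ F) :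
    restrictVars K n F (X a) = 0 := by
  simp [restrictVars, h]

theorem map_faceMonomial_eq_zero {A : Type*} [CommRing A] {G : Finset ℕ}
    (f : MvPolynomial (Fin n) K →+* A) {a : Fin n} (ha : (a : ℕ) + 1 ∈ G) (h : f (X a) = 0) :
    f (faceMonomial K n G) = 0 := by
  rw [faceMonomial, map_prod]
  exact Finset.prod_eq_zero (Finset.mem_filter.mpr ⟨Finset.mem_univ a, ha⟩) h

theorem exists_fin_of_not_subset {F G : Finset ℕ} (hG : G ⊆ Finset.Icc 1 n) (h : ¬ G ⊆ F) :
    ∃ a : Fin n, (a : ℕ) + 1 ∈ G ∧ (a : ℕ) + 1 ∉ F := by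
  obtain ⟨x, hx, hxF⟩ := Finset.not_subset.mp h
  have hx' := Finset.mem_Icc.mp (hG hx)
  refine ⟨⟨x - 1, by omega⟩, ?_⟩
  have : x - 1 + 1 = x := by omega
  simp only [this]
  exact ⟨hx, hxF⟩

theorem coeff_restrictVars (F : Finset ℕ) (f : MvPolynomial (Fin n) K) (u : Fin n →₀ ℕ)
    (hu : ∀ a ∈ u.support, (a : ℕ) + 1 ∈ F) : coeff u (restrictVars K n F f) = coeff u f := by
  classical
  induction f using MvPolynomial.induction_on' with
  | add p q hp hq => simp [hp, hq]
  | monomial v c =>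
    by_cases hv : ∀ a ∈ v.support, (a : ℕ) + 1 ∈ F
    · congr 1
      rw [monomial_eq, map_mul, Finsupp.prod, map_prod]
      congr 1
      · simp [restrictVars]
      · refine Finset.prod_congr rfl fun a ha => ?_
        rw [map_pow, restrictVars_X_of_mem (hv a ha)]
    · push Not at hv
      obtain ⟨a, ha, haF⟩ := hv
      have hne : v ≠ u := fun h => haF (hu a (h ▸ ha))
      rw [coeff_monomial, if_neg hne, monomial_eq, map_mul, Finsupp.prod, map_prod,
        Finset.prod_eq_zero ha, mul_zero, coeff_zero]
      rw [map_pow, restrictVars_X_of_notMem haF, zero_pow (Finsupp.mem_support_iff.mp ha)]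

theorem faceMonomial_dvd_monomial (F : Finset ℕ) (u : Fin n →₀ ℕ) (c : K)
    (h : ∀ a : Fin n, (a : ℕ) + 1 ∈ F → a ∈ u.support) : faceMonomial K n F ∣ monomial u c := by
  rw [monomial_eq, Finsupp.prod]
  refine Dvd.dvd.mul_left ?_ _
  refine (Finset.prod_dvd_prod_of_subset _ u.support X fun a ha => ?_).trans
    (Finset.prod_dvd_prod_of_dvd _ _ fun a ha => ?_)
  · exact h a (Finset.mem_filter.mp ha).2
  · exact dvd_pow_self _ (Finsupp.mem_support_iff.mp ha)

theorem mem_srIdeal_iff {Δ : Set (Finset ℕ)} (hΔ : ∀ F ∈ Δ, ∀ G, G ⊆ F → G ∈ Δ)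
    (f : MvPolynomial (Fin n) K) : f ∈ srIdeal K n Δ ↔ ∀ F ∈ Δ, restrictVars K n F f = 0 := by
  constructor
  · intro hf F hF
    have hle : srIdeal K n Δ ≤ RingHom.ker (restrictVars K n F) := by
      refine Ideal.span_le.mpr ?_
      rintro _ ⟨G, hG, hGΔ, rfl⟩
      obtain ⟨a, haG, haF⟩ := exists_fin_of_not_subset hG fun h => hGΔ (hΔ F hF G h)
      exact map_faceMonomial_eq_zero (restrictVars K n F).toRingHom haG
        (restrictVars_X_of_notMem haF)
    exact hle hf
  · intro h
    rw [f.as_sum]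
    refine Ideal.sum_mem _ fun u hu => ?_
    let F : Finset ℕ := u.support.image fun a : Fin n => (a : ℕ) + 1
    have hFmem : ∀ a ∈ u.support, (a : ℕ) + 1 ∈ F := fun a ha => Finset.mem_image_of_mem _ ha
    have hF : F ∉ Δ := fun hF => by
      have := coeff_restrictVars F f u hFmem
      rw [h F hF, coeff_zero] at this
      exact mem_support_iff.mp hu this.symm
    refine Ideal.mem_of_dvd _ (faceMonomial_dvd_monomial F u _ fun a ha => ?_)
      (faceMonomial_mem_srIdeal ?_ hF)
    · obtain ⟨b, hb, hab⟩ := Finset.mem_image.mp ha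
      rwa [← Fin.ext (Nat.succ_injective hab)]
    · intro x hx
      obtain ⟨b, -, rfl⟩ := Finset.mem_image.mp hx
      have := b.2
      exact Finset.mem_Icc.mpr ⟨by omega, by omega⟩

theorem srIdeal_le_idealOfVars {Δ : Set (Finset ℕ)} (h : ∅ ∈ Δ) :
    srIdeal K n Δ ≤ idealOfVars (Fin n) K := by
  refine Ideal.span_le.mpr ?_
  rintro _ ⟨G, hG, hGΔ, rfl⟩
  obtain ⟨a, haG, -⟩ := exists_fin_of_not_subset (F := ∅) hG
    fun hs => hGΔ (by rwa [Finset.subset_empty.mp hs])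
  exact Ideal.mem_of_dvd _
    (Finset.dvd_prod_of_mem _ (Finset.mem_filter.mpr ⟨Finset.mem_univ a, haG⟩))
    (Ideal.subset_span ⟨a, rfl⟩)

theorem card_fin_subtype {F : Finset ℕ} (hF : F ⊆ Finset.Icc 1 n) :
    Nat.card {a : Fin n // (a : ℕ) + 1 ∈ F} = F.card := by
  rw [Nat.card_eq_fintype_card, Fintype.card_subtype]
  refine Finset.card_bij (fun a _ => (a : ℕ) + 1) (fun a ha => (Finset.mem_filter.mp ha).2)
    (fun a _ b _ h => Fin.ext (Nat.succ_injective h)) fun x hx => ?_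
  have hx' := Finset.mem_Icc.mp (hF hx)
  have h1 : x - 1 + 1 = x := by omega
  exact ⟨⟨x - 1, by omega⟩, Finset.mem_filter.mpr ⟨Finset.mem_univ _, by simpa [h1] using hx⟩, h1⟩

theorem ringKrullDim_mvPolynomial_face {F : Finset ℕ} (hF : F ⊆ Finset.Icc 1 n) :
    ringKrullDim (MvPolynomial {a : Fin n // (a : ℕ) + 1 ∈ F} K) = F.card := by
  rw [MvPolynomial.ringKrullDim_of_isNoetherianRing, ringKrullDim_eq_zero_of_field, zero_add,
    card_fin_subtype hF]

theorem card_le_ringKrullDim_srIdeal {Δ : Set (Finset ℕ)} (hΔ : ∀ F ∈ Δ, ∀ G, G ⊆ F → G ∈ Δ)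
    {F : Finset ℕ} (hFΔ : F ∈ Δ) (hF : F ⊆ Finset.Icc 1 n) :
    (F.card : WithBot ℕ∞) ≤ ringKrullDim (MvPolynomial (Fin n) K ⧸ srIdeal K n Δ) := by
  classical
  let f : MvPolynomial (Fin n) K →ₐ[K] MvPolynomial {a : Fin n // (a : ℕ) + 1 ∈ F} K :=
    aeval fun a => if h : (a : ℕ) + 1 ∈ F then X ⟨a, h⟩ else 0
  have hker : ∀ g ∈ srIdeal K n Δ, f.toRingHom g = 0 := by
    have hle : srIdeal K n Δ ≤ RingHom.ker f.toRingHom := by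
      refine Ideal.span_le.mpr ?_
      rintro _ ⟨G, hG, hGΔ, rfl⟩
      obtain ⟨a, haG, haF⟩ := exists_fin_of_not_subset hG fun h => hGΔ (hΔ F hFΔ G h)
      exact map_faceMonomial_eq_zero f.toRingHom haG (by simp [f, haF])
    exact fun g hg => hle hg
  rw [← ringKrullDim_mvPolynomial_face (K := K) hF]
  refine ringKrullDim_le_of_surjective (Ideal.Quotient.lift _ f.toRingHom hker)
    (Ideal.Quotient.lift_surjective_of_surjective _ _ ?_)
  change Function.Surjective f
  rw [← AlgHom.range_eq_top, eq_top_iff, ← adjoin_range_X, Algebra.adjoin_le_iff]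
  rintro _ ⟨⟨a, ha⟩, rfl⟩
  exact ⟨X a, by simp [f, ha]⟩

theorem ringKrullDim_srIdeal_le {Δ : Set (Finset ℕ)} {d : ℕ} (hd : ∀ F ∈ Δ, F.card ≤ d) :
    ringKrullDim (MvPolynomial (Fin n) K ⧸ srIdeal K n Δ) ≤ d := by
  classical
  rw [ringKrullDim_quotient, Order.krullDim_eq_iSup_coheight]
  refine iSup_le fun P => ?_
  let P' : Ideal (MvPolynomial (Fin n) K) := P.1.asIdeal
  have hprime : P'.IsPrime := P.1.isPrime
  have hle : srIdeal K n Δ ≤ P' := P.2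
  have h1 : (Order.coheight P : WithBot ℕ∞) ≤ ringKrullDim (MvPolynomial (Fin n) K ⧸ P') := by
    rw [Order.coheight_eq_krullDim_Ici, ringKrullDim_quotient]
    exact Order.krullDim_le_of_strictMono
      (fun Q => (⟨Q.1.1, Q.2⟩ : PrimeSpectrum.zeroLocus (P' : Set (MvPolynomial (Fin n) K))))
      fun Q Q' h => h
  let F : Finset ℕ :=
    (Finset.univ.filter fun a : Fin n => X a ∉ P').image fun a : Fin n => (a : ℕ) + 1
  have hFmem : ∀ a : Fin n, (a : ℕ) + 1 ∈ F ↔ X a ∉ P' := by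
    intro a
    constructor
    · intro ha
      obtain ⟨b, hb, hab⟩ := Finset.mem_image.mp ha
      rw [← Fin.ext (Nat.succ_injective hab)]
      exact (Finset.mem_filter.mp hb).2
    · exact fun ha => Finset.mem_image_of_mem _ (Finset.mem_filter.mpr ⟨Finset.mem_univ a, ha⟩)
  have hF : F ⊆ Finset.Icc 1 n := by
    intro x hx
    obtain ⟨b, -, rfl⟩ := Finset.mem_image.mp hx
    have := b.2
    exact Finset.mem_Icc.mpr ⟨by omega, by omega⟩
  have hFΔ : F ∈ Δ := by
    by_contra hF'
    have hmem := hle (faceMonomial_mem_srIdeal hF hF')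
    obtain ⟨a, ha, haP⟩ := (hprime.prod_mem_iff).mp hmem
    exact (hFmem a).mp (Finset.mem_filter.mp ha).2 haP
  let g : MvPolynomial {a : Fin n // (a : ℕ) + 1 ∈ F} K →ₐ[K] MvPolynomial (Fin n) K ⧸ P' :=
    aeval fun a => Ideal.Quotient.mk P' (X a.1)
  have hg : Function.Surjective g := by
    let q := Ideal.Quotient.mkₐ K P'
    have hq : Function.Surjective q := Ideal.Quotient.mk_surjective
    have hqg : q.range ≤ g.range := by
      rw [← Algebra.map_top, ← adjoin_range_X, AlgHom.map_adjoin, Algebra.adjoin_le_iff]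
      rintro _ ⟨_, ⟨a, rfl⟩, rfl⟩
      by_cases ha : (a : ℕ) + 1 ∈ F
      · exact ⟨X ⟨a, ha⟩, by simp [g, q]⟩
      · have hz : q (X a) = 0 :=
          Ideal.Quotient.eq_zero_iff_mem.mpr (not_not.mp fun h => ha ((hFmem a).mpr h))
        change q (X a) ∈ g.range
        rw [hz]
        exact zero_mem _
    rw [← AlgHom.range_eq_top, eq_top_iff]
    exact ((AlgHom.range_eq_top q).mpr hq).ge.trans hqg
  refine h1.trans ((ringKrullDim_le_of_surjective g.toRingHom hg).trans ?_)
  rw [ringKrullDim_mvPolynomial_face hF]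
  exact_mod_cast hd F hFΔ

end StanleyReisner

section Contraction

open MvPolynomial

universe u

variable {K : Type u} [Field K] {n : ℕ}

theorem restrictVars_restrictVars_of_subset {F G : Finset ℕ} (h : F ⊆ G)
    (f : MvPolynomial (Fin n) K) :
    restrictVars K n F (restrictVars K n G f) = restrictVars K n F f := by
  have : (restrictVars K n F).comp (restrictVars K n G) = restrictVars K n F := by
    refine algHom_ext fun c => ?_
    rw [AlgHom.comp_apply]
    by_cases hc : (c : ℕ) + 1 ∈ G
    · rw [restrictVars_X_of_mem hc]
    · rw [restrictVars_X_of_notMem hc, restrictVars_X_of_notMem fun h' => hc (h h'), map_zero]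
  exact DFunLike.congr_fun this f

theorem mem_srIdeal_of_X_mul_mem {Δ : Set (Finset ℕ)} (hΔ : ∀ F ∈ Δ, ∀ G, G ⊆ F → G ∈ Δ)
    {a : Fin n} (ha : ∀ F ∈ Δ, insert ((a : ℕ) + 1) F ∈ Δ) (f : MvPolynomial (Fin n) K)
    (hf : X a * f ∈ srIdeal K n Δ) : f ∈ srIdeal K n Δ := by
  rw [mem_srIdeal_iff hΔ] at hf ⊢
  intro F hF
  have h := hf _ (ha F hF)
  rw [map_mul, restrictVars_X_of_mem (Finset.mem_insert_self _ _)] at h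
  rw [← restrictVars_restrictVars_of_subset (Finset.subset_insert ((a : ℕ) + 1) F),
    (mul_eq_zero.mp h).resolve_left (X_ne_zero a), map_zero]

theorem X_dvd_faceMonomial {F : Finset ℕ} {a : Fin n} (ha : (a : ℕ) + 1 ∈ F) :
    X a ∣ faceMonomial K n F :=
  Finset.dvd_prod_of_mem _ (Finset.mem_filter.mpr ⟨Finset.mem_univ a, ha⟩)

theorem faceMonomial_insert {F : Finset ℕ} {a : Fin n} (ha : (a : ℕ) + 1 ∉ F) :
    faceMonomial K n (insert ((a : ℕ) + 1) F) = X a * faceMonomial K n F := by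
  classical
  rw [faceMonomial, faceMonomial, ← Finset.prod_insert (by simpa using ha)]
  refine Finset.prod_congr ?_ fun _ _ => rfl
  ext c
  simp [Fin.ext_iff]

theorem X_mem_srIdeal {Δ : Set (Finset ℕ)} (hΔ : ∀ F ∈ Δ, ∀ G, G ⊆ F → G ∈ Δ) {a : Fin n}
    (ha : ∀ F ∈ Δ, (a : ℕ) + 1 ∉ F) : X a ∈ srIdeal K n Δ :=
  (mem_srIdeal_iff hΔ _).mpr fun F hF => restrictVars_X_of_notMem (ha F hF)

theorem srIdeal_anti {Δ Δ' : Set (Finset ℕ)} (h : Δ' ⊆ Δ) : srIdeal K n Δ ≤ srIdeal K n Δ' := by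
  refine Ideal.span_mono ?_
  rintro _ ⟨F, hF, hFΔ, rfl⟩
  exact ⟨F, hF, fun hF' => hFΔ (h hF'), rfl⟩

theorem srIdeal_sup_span_X {Δ : Set (Finset ℕ)} (hΔ : ∀ F ∈ Δ, ∀ G, G ⊆ F → G ∈ Δ) (a : Fin n) :
    srIdeal K n Δ ⊔ Ideal.span {X a} = srIdeal K n {F | F ∈ Δ ∧ (a : ℕ) + 1 ∉ F} := by
  apply le_antisymm
  · refine sup_le (srIdeal_anti fun F hF => hF.1) ?_
    rw [Ideal.span_singleton_le_iff_mem]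
    refine X_mem_srIdeal ?_ fun F hF => hF.2
    exact fun F hF G hG => ⟨hΔ F hF.1 G hG, fun h => hF.2 (hG h)⟩
  · refine Ideal.span_le.mpr ?_
    rintro _ ⟨F, hF, hFΔ, rfl⟩
    by_cases ha : (a : ℕ) + 1 ∈ F
    · exact Ideal.mem_sup_right (Ideal.mem_span_singleton.mpr (X_dvd_faceMonomial ha))
    · exact Ideal.mem_sup_left (faceMonomial_mem_srIdeal hF fun h => hFΔ ⟨h, ha⟩)

/-- A Stanley–Reisner ring of a cone has depth one more than that of the base. -/
theorem depthGE_srIdeal_cone {Δ : Set (Finset ℕ)} (hΔ : ∀ F ∈ Δ, ∀ G, G ⊆ F → G ∈ Δ)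
    (h0 : ∅ ∈ Δ) {a : Fin n} (ha : ∀ F ∈ Δ, insert ((a : ℕ) + 1) F ∈ Δ) {d : ℕ}
    (h : DepthGE (idealOfVars (Fin n) K)
      (MvPolynomial (Fin n) K ⧸ srIdeal K n {F | F ∈ Δ ∧ (a : ℕ) + 1 ∉ F}) d) :
    DepthGE (idealOfVars (Fin n) K) (MvPolynomial (Fin n) K ⧸ srIdeal K n Δ) (d + 1) := by
  rw [← srIdeal_sup_span_X hΔ a] at h
  exact DepthGE.succ_of_quotient_sup_span (srIdeal_le_idealOfVars h0) idealOfVars_ne_top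
    (Ideal.subset_span ⟨a, rfl⟩) (mem_srIdeal_of_X_mul_mem hΔ ha) h

variable (K) in
/-- The endomorphism sending `x_a` and `x_b` to the elementary symmetric polynomials `x_a x_b` and
`x_a + x_b`, and fixing all other variables. -/
noncomputable def symmMap (a b : Fin n) : MvPolynomial (Fin n) K →ₐ[K] MvPolynomial (Fin n) K :=
  aeval fun c => if c = a then X a * X b else if c = b then X a + X b else X c

section symmMap

variable {a b : Fin n}

theorem symmMap_X_left : symmMap K a b (X a) = X a * X b := by simp [symmMap]

theorem symmMap_X_right (hab : a ≠ b) : symmMap K a b (X b) = X a + X b := by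
  simp [symmMap, hab.symm]

theorem symmMap_X_of_ne {c : Fin n} (ha : c ≠ a) (hb : c ≠ b) : symmMap K a b (X c) = X c := by
  simp [symmMap, ha, hb]

theorem algHom_ext_pair (a b : Fin n) {A : Type*} [CommRing A] [Algebra K A]
    {f g : MvPolynomial (Fin n) K →ₐ[K] A} (ha : f (X a) = g (X a)) (hb : f (X b) = g (X b))
    (hc : ∀ c, c ≠ a → c ≠ b → f (X c) = g (X c)) : f = g := by
  refine algHom_ext fun c => ?_
  by_cases h : c = a
  · rwa [h]
  by_cases h' : c = b
  · rwa [h']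
  exact hc c h h'

theorem restrictVars_symmMap_of_mem (hab : a ≠ b) {F : Finset ℕ} (ha : (a : ℕ) + 1 ∈ F)
    (hb : (b : ℕ) + 1 ∈ F) (f : MvPolynomial (Fin n) K) :
    restrictVars K n F (symmMap K a b f) = symmMap K a b (restrictVars K n F f) := by
  have : (restrictVars K n F).comp (symmMap K a b) =
      (symmMap K a b).comp (restrictVars K n F) := by
    refine algHom_ext_pair a b ?_ ?_ fun c hca hcb => ?_
    · simp [symmMap_X_left, restrictVars_X_of_mem, ha, hb]
    · simp [symmMap_X_right hab, restrictVars_X_of_mem, ha, hb]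
    · by_cases hc : (c : ℕ) + 1 ∈ F
      · simp [symmMap_X_of_ne hca hcb, restrictVars_X_of_mem hc]
      · simp [symmMap_X_of_ne hca hcb, restrictVars_X_of_notMem hc]
  exact DFunLike.congr_fun this f

theorem restrictVars_symmMap_of_notMem (hab : a ≠ b) {F : Finset ℕ} (ha : (a : ℕ) + 1 ∉ F)
    (f : MvPolynomial (Fin n) K) :
    restrictVars K n F (symmMap K a b f) = restrictVars K n F f := by
  have : (restrictVars K n F).comp (symmMap K a b) = restrictVars K n F := by
    refine algHom_ext_pair a b ?_ ?_ fun c hca hcb => ?_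
    · simp [symmMap_X_left, restrictVars_X_of_notMem, ha]
    · simp [symmMap_X_right hab, restrictVars_X_of_notMem, ha]
    · simp [symmMap_X_of_ne hca hcb]
  exact DFunLike.congr_fun this f

theorem restrictVars_symmMap_of_mem_of_notMem (hab : a ≠ b) {F : Finset ℕ} (ha : (a : ℕ) + 1 ∈ F)
    (hb : (b : ℕ) + 1 ∉ F) (f : MvPolynomial (Fin n) K) :
    restrictVars K n F (symmMap K a b f) =
      rename (Equiv.swap a b)
        (restrictVars K n (F.erase ((a : ℕ) + 1) ∪ {(b : ℕ) + 1}) f) := by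
  have hne : (a : ℕ) ≠ b := fun h => hab (Fin.ext h)
  have : (restrictVars K n F).comp (symmMap K a b) = (rename (Equiv.swap a b)).comp
      (restrictVars K n (F.erase ((a : ℕ) + 1) ∪ {(b : ℕ) + 1})) := by
    refine algHom_ext_pair a b ?_ ?_ fun c hca hcb => ?_
    · rw [AlgHom.comp_apply, AlgHom.comp_apply,
        restrictVars_X_of_notMem (F := F.erase ((a : ℕ) + 1) ∪ {(b : ℕ) + 1}) (by simp [hne])]
      simp [symmMap_X_left, restrictVars_X_of_notMem hb]
    · rw [AlgHom.comp_apply, AlgHom.comp_apply,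
        restrictVars_X_of_mem (F := F.erase ((a : ℕ) + 1) ∪ {(b : ℕ) + 1}) (by simp)]
      simp [symmMap_X_right hab, restrictVars_X_of_notMem hb, restrictVars_X_of_mem ha]
    · have hca' : (c : ℕ) ≠ a := fun h => hca (Fin.ext h)
      have hcb' : (c : ℕ) ≠ b := fun h => hcb (Fin.ext h)
      rw [AlgHom.comp_apply, AlgHom.comp_apply, symmMap_X_of_ne hca hcb]
      by_cases hc : (c : ℕ) + 1 ∈ F
      · rw [restrictVars_X_of_mem hc, restrictVars_X_of_mem (by simp [hca', hc]), rename_X,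
          Equiv.swap_apply_of_ne_of_ne hca hcb]
      · rw [restrictVars_X_of_notMem hc, restrictVars_X_of_notMem (by simp [hcb', hc]), map_zero]
  exact DFunLike.congr_fun this f

theorem rename_swap_symmMap (hab : a ≠ b) (f : MvPolynomial (Fin n) K) :
    rename (Equiv.swap a b) (symmMap K a b f) = symmMap K a b f := by
  have : (rename (Equiv.swap a b)).comp (symmMap K a b) = symmMap K a b := by
    refine algHom_ext_pair a b ?_ ?_ fun c hca hcb => ?_
    · simp [symmMap_X_left, mul_comm]
    · simp [symmMap_X_right hab, add_comm]
    · simp [symmMap_X_of_ne hca hcb, Equiv.swap_apply_of_ne_of_ne hca hcb]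
  exact DFunLike.congr_fun this f

theorem symmMap_injective (hab : a ≠ b) : Function.Injective (symmMap K a b) := by
  rw [injective_iff_map_eq_zero]
  intro f
  induction h : f.totalDegree using Nat.strong_induction_on generalizing f with
  | _ N ih =>
    intro hf
    let G : Finset ℕ := (Finset.Icc 1 n).erase ((a : ℕ) + 1)
    have hG : restrictVars K n G f = 0 := by
      rw [← restrictVars_symmMap_of_notMem hab (Finset.notMem_erase _ _), hf, map_zero]
    have hdvd : X a ∣ f := by
      rw [← Ideal.mem_span_singleton, ← Set.image_singleton, mem_ideal_span_X_image]
      intro u hu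
      refine ⟨a, rfl, fun hua => mem_support_iff.mp hu ?_⟩
      rw [← coeff_restrictVars G f u, hG, coeff_zero]
      intro c hc
      have := c.2
      refine Finset.mem_erase.mpr ⟨fun hca => Finsupp.mem_support_iff.mp hc ?_,
        Finset.mem_Icc.mpr ⟨by omega, by omega⟩⟩
      rwa [Fin.ext (Nat.succ_injective hca)]
    obtain ⟨g, rfl⟩ := hdvd
    by_cases hg : g = 0
    · rw [hg, mul_zero]
    rw [map_mul, symmMap_X_left] at hf
    rw [totalDegree_mul_of_isDomain (X_ne_zero a) hg, totalDegree_X] at h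
    rw [ih g.totalDegree (by omega) g rfl
      ((mul_eq_zero.mp hf).resolve_left (mul_ne_zero (X_ne_zero a) (X_ne_zero b))), mul_zero]

theorem exists_eq_symmMap_add (hab : a ≠ b) (s : MvPolynomial (Fin n) K) :
    ∃ x y, s = symmMap K a b x + X a * symmMap K a b y := by
  induction s using MvPolynomial.induction_on with
  | C c => exact ⟨C c, 0, by simp [symmMap]⟩
  | add p q hp hq =>
    obtain ⟨x, y, rfl⟩ := hp
    obtain ⟨x', y', rfl⟩ := hq
    exact ⟨x + x', y + y', by simp only [map_add]; ring⟩
  | mul_X p c hp =>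
    obtain ⟨x, y, rfl⟩ := hp
    by_cases hca : c = a
    · subst hca
      refine ⟨-(X c * y), x + X b * y, ?_⟩
      simp only [map_add, map_mul, map_neg, symmMap_X_left, symmMap_X_right hab]
      ring
    by_cases hcb : c = b
    · subst hcb
      refine ⟨x * X c + X a * y, -x, ?_⟩
      simp only [map_add, map_mul, map_neg, symmMap_X_left, symmMap_X_right hab]
      ring
    · refine ⟨x * X c, y * X c, ?_⟩
      simp only [map_mul, symmMap_X_of_ne hca hcb]
      ring

theorem symmMap_faceMonomial {F : Finset ℕ} (ha : (a : ℕ) + 1 ∉ F) (hb : (b : ℕ) + 1 ∉ F) :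
    symmMap K a b (faceMonomial K n F) = faceMonomial K n F := by
  rw [faceMonomial, map_prod]
  refine Finset.prod_congr rfl fun c hc => symmMap_X_of_ne ?_ ?_
  · rintro rfl
    exact ha (Finset.mem_filter.mp hc).2
  · rintro rfl
    exact hb (Finset.mem_filter.mp hc).2

end symmMap

theorem contraction_mem_of_subset {Γ : Set (Finset ℕ)} (hΓ : ∀ F ∈ Γ, ∀ G, G ⊆ F → G ∈ Γ)
    {i j : ℕ} (hij : i ≠ j) : ∀ F ∈ contraction Γ i j, ∀ G, G ⊆ F → G ∈ contraction Γ i j := by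
  rintro _ (⟨hF, hiF⟩ | ⟨F, hF, hiF, rfl⟩) H hH
  · exact Or.inl ⟨hΓ _ hF _ hH, fun h => hiF (hH h)⟩
  have hiH : i ∉ H := fun h => by simpa [hij] using hH h
  by_cases hjH : j ∈ H
  · refine Or.inr ⟨insert i (H.erase j), hΓ F hF _ ?_, Finset.mem_insert_self _ _, ?_⟩
    · intro x hx
      have := @hH x
      grind
    · grind
  · refine Or.inl ⟨hΓ F hF _ ?_, hiH⟩
    intro x hx
    have := @hH x
    grind

theorem linkOf_mem_of_subset {Γ : Set (Finset ℕ)} (hΓ : ∀ F ∈ Γ, ∀ G, G ⊆ F → G ∈ Γ)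
    (E : Finset ℕ) : ∀ F ∈ linkOf Γ E, ∀ G, G ⊆ F → G ∈ linkOf Γ E :=
  fun _ hF _ hG => ⟨hF.1.mono_left hG, hΓ _ hF.2 _ (Finset.union_subset_union_left hG)⟩

/-- The star of a face `E` in `Γ`. -/
def starOf (Γ : Set (Finset ℕ)) (E : Finset ℕ) : Set (Finset ℕ) :=
  {F | F ∪ E ∈ Γ}

theorem starOf_mem_of_subset {Γ : Set (Finset ℕ)} (hΓ : ∀ F ∈ Γ, ∀ G, G ⊆ F → G ∈ Γ)
    (E : Finset ℕ) : ∀ F ∈ starOf Γ E, ∀ G, G ⊆ F → G ∈ starOf Γ E :=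
  fun _ hF _ hG => hΓ _ hF _ (Finset.union_subset_union_left hG)

variable {Γ : Set (Finset ℕ)} {a b : Fin n}

theorem depthGE_srIdeal_starOf (hΓ : ∀ F ∈ Γ, ∀ G, G ⊆ F → G ∈ Γ) (hab : a ≠ b)
    (hE : {(a : ℕ) + 1, (b : ℕ) + 1} ∈ Γ) {d : ℕ}
    (h : DepthGE (idealOfVars (Fin n) K)
      (MvPolynomial (Fin n) K ⧸ srIdeal K n (linkOf Γ {(a : ℕ) + 1, (b : ℕ) + 1})) d) :
    DepthGE (idealOfVars (Fin n) K)
      (MvPolynomial (Fin n) K ⧸ srIdeal K n (starOf Γ {(a : ℕ) + 1, (b : ℕ) + 1})) (d + 2) := by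
  have hne : (a : ℕ) ≠ b := fun h => hab (Fin.ext h)
  have hst := starOf_mem_of_subset hΓ {(a : ℕ) + 1, (b : ℕ) + 1}
  have h0 : ∅ ∈ starOf Γ {(a : ℕ) + 1, (b : ℕ) + 1} := by simpa [starOf] using hE
  have hlink : {F | F ∈ {F | F ∈ starOf Γ {(a : ℕ) + 1, (b : ℕ) + 1} ∧ (a : ℕ) + 1 ∉ F} ∧
      (b : ℕ) + 1 ∉ F} = linkOf Γ {(a : ℕ) + 1, (b : ℕ) + 1} := by
    ext F
    simp only [starOf, linkOf, Set.mem_ofPred_eq, Finset.disjoint_insert_right,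
      Finset.disjoint_singleton_right]
    tauto
  refine depthGE_srIdeal_cone hst h0 (a := a) (fun F hF => ?_) ?_
  · have : insert ((a : ℕ) + 1) F ∪ {(a : ℕ) + 1, (b : ℕ) + 1} =
        F ∪ {(a : ℕ) + 1, (b : ℕ) + 1} := by grind
    simpa only [starOf, Set.mem_ofPred_eq, this] using hF
  refine depthGE_srIdeal_cone ?_ ?_ (a := b) ?_ ?_
  · exact fun F hF G hG => ⟨hst F hF.1 G hG, fun h => hF.2 (hG h)⟩
  · exact ⟨h0, by simp⟩
  · refine fun F hF => ⟨?_, by simpa [hne] using hF.2⟩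
    have : insert ((b : ℕ) + 1) F ∪ {(a : ℕ) + 1, (b : ℕ) + 1} =
        F ∪ {(a : ℕ) + 1, (b : ℕ) + 1} := by grind
    simpa only [starOf, Set.mem_ofPred_eq, this] using hF.1
  rwa [hlink]

theorem symmMap_X_mul_mem_srIdeal_iff (hΓ : ∀ F ∈ Γ, ∀ G, G ⊆ F → G ∈ Γ) (hab : a ≠ b)
    (f : MvPolynomial (Fin n) K) :
    symmMap K a b (X a * f) ∈ srIdeal K n Γ ↔
      f ∈ srIdeal K n (starOf Γ {(a : ℕ) + 1, (b : ℕ) + 1}) := by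
  rw [mem_srIdeal_iff hΓ, mem_srIdeal_iff (starOf_mem_of_subset hΓ _)]
  constructor
  · intro h F hF
    have h' := h _ hF
    rw [restrictVars_symmMap_of_mem hab (by simp) (by simp), map_mul,
      restrictVars_X_of_mem (by simp), map_mul, symmMap_X_left] at h'
    have h0 := (mul_eq_zero.mp h').resolve_left (mul_ne_zero (X_ne_zero a) (X_ne_zero b))
    rw [map_eq_zero_iff _ (symmMap_injective hab)] at h0
    rw [← restrictVars_restrictVars_of_subset Finset.subset_union_left, h0, map_zero]
  · intro h F hF
    by_cases ha : (a : ℕ) + 1 ∈ F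
    · by_cases hb : (b : ℕ) + 1 ∈ F
      · have : F ∈ starOf Γ {(a : ℕ) + 1, (b : ℕ) + 1} := by
          rwa [starOf, Set.mem_ofPred_eq, Finset.union_eq_left.mpr (by grind)]
        rw [restrictVars_symmMap_of_mem hab ha hb, map_mul, h F this, mul_zero, map_zero]
      · rw [map_mul, symmMap_X_left, map_mul, map_mul, restrictVars_X_of_notMem hb, mul_zero,
          zero_mul]
    · rw [map_mul, symmMap_X_left, map_mul, map_mul, restrictVars_X_of_notMem ha, zero_mul,
        zero_mul]

theorem comap_symmMap_srIdeal_sup_span_X (hΓ : ∀ F ∈ Γ, ∀ G, G ⊆ F → G ∈ Γ) (hab : a ≠ b) :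
    (srIdeal K n Γ).comap (symmMap K a b).toRingHom ⊔ Ideal.span {X a} =
      srIdeal K n (contraction Γ ((a : ℕ) + 1) ((b : ℕ) + 1)) := by
  have hne : (a : ℕ) + 1 ≠ b + 1 := fun h => hab (Fin.ext (Nat.succ_injective h))
  have hC := contraction_mem_of_subset hΓ hne
  apply le_antisymm
  · refine sup_le (fun f hf => ?_) ?_
    · have hf' := (mem_srIdeal_iff hΓ _).mp (Ideal.mem_comap.mp hf)
      change ∀ F ∈ Γ, restrictVars K n F (symmMap K a b f) = 0 at hf'
      rw [mem_srIdeal_iff hC]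
      rintro _ (⟨hF, haF⟩ | ⟨F, hF, haF, rfl⟩)
      · rw [← restrictVars_symmMap_of_notMem hab haF, hf' _ hF]
      by_cases hbF : (b : ℕ) + 1 ∈ F
      · rw [← restrictVars_symmMap_of_notMem hab (by simp [Fin.ext_iff.not.mp hab])]
        exact hf' _ (hΓ F hF _ (by grind))
      · have h := hf' F hF
        rw [restrictVars_symmMap_of_mem_of_notMem hab haF hbF] at h
        exact (map_eq_zero_iff _ (rename_injective _ (Equiv.swap a b).injective)).mp h
    · rw [Ideal.span_singleton_le_iff_mem]
      refine X_mem_srIdeal hC ?_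
      rintro _ (⟨hF, haF⟩ | ⟨F, hF, haF, rfl⟩)
      · exact haF
      · simp only [Finset.mem_union, Finset.mem_erase, Finset.mem_singleton]
        tauto
  · refine Ideal.span_le.mpr ?_
    rintro _ ⟨G, hG, hGC, rfl⟩
    by_cases ha : (a : ℕ) + 1 ∈ G
    · exact Ideal.mem_sup_right (Ideal.mem_span_singleton.mpr (X_dvd_faceMonomial ha))
    refine Ideal.mem_sup_left (Ideal.mem_comap.mpr ?_)
    change symmMap K a b (faceMonomial K n G) ∈ srIdeal K n Γ
    have hGΓ : G ∉ Γ := fun h => hGC (Or.inl ⟨h, ha⟩)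
    by_cases hb : (b : ℕ) + 1 ∈ G
    · have hG' : G = insert ((b : ℕ) + 1) (G.erase ((b : ℕ) + 1)) :=
        (Finset.insert_erase hb).symm
      have haG' : (a : ℕ) + 1 ∉ G.erase ((b : ℕ) + 1) := fun h => ha (Finset.mem_of_mem_erase h)
      have hmem : faceMonomial K n (insert ((a : ℕ) + 1) (G.erase ((b : ℕ) + 1))) ∈
          srIdeal K n Γ := by
        refine faceMonomial_mem_srIdeal ?_ fun h =>
          hGC (Or.inr ⟨_, h, Finset.mem_insert_self _ _, by grind⟩)
        exact Finset.insert_subset (Finset.mem_Icc.mpr ⟨by omega, a.2⟩)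
          ((Finset.erase_subset _ _).trans hG)
      have hmem' := faceMonomial_mem_srIdeal (K := K) hG hGΓ
      rw [hG', faceMonomial_insert (Finset.notMem_erase _ _)] at hmem'
      rw [faceMonomial_insert haG'] at hmem
      rw [hG', faceMonomial_insert (Finset.notMem_erase _ _), map_mul, symmMap_X_right hab,
        symmMap_faceMonomial haG' (Finset.notMem_erase _ _), add_mul]
      exact add_mem hmem hmem'
    · rw [symmMap_faceMonomial ha hb]
      exact faceMonomial_mem_srIdeal hG hGΓ

theorem mem_srIdeal_starOf_of_X_mul_symmMap_sub_mem (hΓ : ∀ F ∈ Γ, ∀ G, G ⊆ F → G ∈ Γ)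
    (hab : a ≠ b) {f g : MvPolynomial (Fin n) K}
    (h : X a * symmMap K a b g - symmMap K a b f ∈ srIdeal K n Γ) :
    g ∈ srIdeal K n (starOf Γ {(a : ℕ) + 1, (b : ℕ) + 1}) := by
  rw [mem_srIdeal_iff hΓ] at h
  rw [mem_srIdeal_iff (starOf_mem_of_subset hΓ _)]
  intro F hF
  have h1 := h _ hF
  rw [map_sub, map_mul, restrictVars_X_of_mem (by simp),
    restrictVars_symmMap_of_mem hab (by simp) (by simp),
    restrictVars_symmMap_of_mem hab (by simp) (by simp)] at h1
  have h2 := congrArg (rename (Equiv.swap a b)) h1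
  rw [map_sub, map_mul, rename_swap_symmMap hab, rename_swap_symmMap hab, rename_X,
    Equiv.swap_apply_left, map_zero] at h2
  have h3 : (X a - X b) * symmMap K a b (restrictVars K n
      (F ∪ {(a : ℕ) + 1, (b : ℕ) + 1}) g) = 0 := by linear_combination h1 - h2
  have h4 := (mul_eq_zero.mp h3).resolve_left (sub_ne_zero.mpr fun h => hab (X_injective h))
  rw [map_eq_zero_iff _ (symmMap_injective hab)] at h4
  rw [← restrictVars_restrictVars_of_subset Finset.subset_union_left, h4, map_zero]

theorem exists_X_mul_symmMap_sub_mem_srIdeal (hab : a ≠ b)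
    (hlc : LinkCondition Γ ((a : ℕ) + 1) ((b : ℕ) + 1)) {g : MvPolynomial (Fin n) K}
    (hg : g ∈ srIdeal K n (starOf Γ {(a : ℕ) + 1, (b : ℕ) + 1})) :
    ∃ f, X a * symmMap K a b g - symmMap K a b f ∈ srIdeal K n Γ := by
  induction hg using Submodule.span_induction with
  | zero => exact ⟨0, by simp⟩
  | add x y _ _ hx hy =>
    obtain ⟨p, hp⟩ := hx
    obtain ⟨q, hq⟩ := hy
    refine ⟨p + q, ?_⟩
    convert add_mem hp hq using 1
    simp only [map_add]
    ring
  | smul c x _ hx =>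
    obtain ⟨p, hp⟩ := hx
    refine ⟨c * p, ?_⟩
    convert Ideal.mul_mem_left _ (symmMap K a b c) hp using 1
    simp only [smul_eq_mul, map_mul]
    ring
  | mem x hx =>
    obtain ⟨F, hF, hFΓ, rfl⟩ := hx
    set F' := F \ {(a : ℕ) + 1, (b : ℕ) + 1} with hF'
    have haF' : (a : ℕ) + 1 ∉ F' := by simp [hF']
    have hbF' : (b : ℕ) + 1 ∉ F' := by simp [hF']
    have hF'n : F' ⊆ Finset.Icc 1 n := Finset.sdiff_subset.trans hF
    have hdvd : faceMonomial K n F' ∣ faceMonomial K n F := by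
      refine Finset.prod_dvd_prod_of_subset _ _ _ fun c hc => ?_
      rw [Finset.mem_filter] at hc ⊢
      exact ⟨hc.1, Finset.sdiff_subset hc.2⟩
    obtain ⟨c, hc⟩ := hdvd
    suffices ∃ f, X a * symmMap K a b (faceMonomial K n F') - symmMap K a b f ∈ srIdeal K n Γ by
      obtain ⟨f, hf⟩ := this
      refine ⟨c * f, ?_⟩
      convert Ideal.mul_mem_left _ (symmMap K a b c) hf using 1
      rw [hc]
      simp only [map_mul]
      ring
    by_cases ha : insert ((a : ℕ) + 1) F' ∈ Γ
    · have hb : insert ((b : ℕ) + 1) F' ∉ Γ := by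
        intro hb
        have hmem : F' ∈ linkOf Γ {(a : ℕ) + 1} ∩ linkOf Γ {(b : ℕ) + 1} :=
          ⟨⟨by simpa using haF', by rwa [Finset.union_comm]⟩,
            ⟨by simpa using hbF', by rwa [Finset.union_comm]⟩⟩
        rw [hlc] at hmem
        refine hFΓ ?_
        have h := hmem.2
        rwa [hF', Finset.sdiff_union_self_eq_union] at h
      have hmem := faceMonomial_mem_srIdeal (K := K)
        (Finset.insert_subset (Finset.mem_Icc.mpr ⟨by omega, b.2⟩) hF'n) hb
      rw [faceMonomial_insert hbF'] at hmem
      refine ⟨X b * faceMonomial K n F', ?_⟩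
      convert neg_mem hmem using 1
      rw [map_mul, symmMap_X_right hab, symmMap_faceMonomial haF' hbF']
      ring
    · refine ⟨0, ?_⟩
      rw [symmMap_faceMonomial haF' hbF', map_zero, sub_zero, ← faceMonomial_insert haF']
      exact faceMonomial_mem_srIdeal
        (Finset.insert_subset (Finset.mem_Icc.mpr ⟨by omega, a.2⟩) hF'n) ha

theorem map_symmMap_idealOfVars_le (hab : a ≠ b) :
    (idealOfVars (Fin n) K).map (symmMap K a b).toRingHom ≤ idealOfVars (Fin n) K := by
  have hX : ∀ c : Fin n, X c ∈ idealOfVars (Fin n) K := fun c => Ideal.subset_span ⟨c, rfl⟩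
  rw [Ideal.map_le_iff_le_comap, idealOfVars, Ideal.span_le]
  rintro _ ⟨c, rfl⟩
  change symmMap K a b (X c) ∈ idealOfVars (Fin n) K
  by_cases hca : c = a
  · subst hca
    rw [symmMap_X_left]
    exact Ideal.mul_mem_right _ _ (hX c)
  by_cases hcb : c = b
  · subst hcb
    rw [symmMap_X_right hab]
    exact add_mem (hX a) (hX c)
  · rw [symmMap_X_of_ne hca hcb]
    exact hX c

/-- Depth of a Stanley–Reisner ring from the contraction and the link of an edge satisfying the
Link condition. -/
theorem depthGE_srIdeal_of_contraction (hΓ : ∀ F ∈ Γ, ∀ G, G ⊆ F → G ∈ Γ) (hab : a ≠ b)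
    (hE : {(a : ℕ) + 1, (b : ℕ) + 1} ∈ Γ) (hlc : LinkCondition Γ ((a : ℕ) + 1) ((b : ℕ) + 1))
    {d : ℕ}
    (hC : DepthGE (idealOfVars (Fin n) K) (MvPolynomial (Fin n) K ⧸
      srIdeal K n (contraction Γ ((a : ℕ) + 1) ((b : ℕ) + 1))) (d + 2))
    (hL : DepthGE (idealOfVars (Fin n) K) (MvPolynomial (Fin n) K ⧸
      srIdeal K n (linkOf Γ {(a : ℕ) + 1, (b : ℕ) + 1})) d) :
    DepthGE (idealOfVars (Fin n) K) (MvPolynomial (Fin n) K ⧸ srIdeal K n Γ) (d + 2) :=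
  depthGE_quotient_of_quadratic (symmMap K a b).toRingHom idealOfVars_ne_top
    (map_symmMap_idealOfVars_le hab) (srIdeal_le_idealOfVars (hΓ _ hE _ (Finset.empty_subset _)))
    _ _ (X a) (X a) (symmMap_X_mul_mem_srIdeal_iff hΓ hab)
    (comap_symmMap_srIdeal_sup_span_X hΓ hab) (exists_eq_symmMap_add hab)
    (fun _ => ⟨fun ⟨_, hf⟩ => mem_srIdeal_starOf_of_X_mul_symmMap_sub_mem hΓ hab hf,
      exists_X_mul_symmMap_sub_mem_srIdeal hab hlc⟩)
    hC (depthGE_srIdeal_starOf hΓ hab hE hL)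

section Dimension

variable {V : Finset ℕ} {Δ : Set (Finset ℕ)}

theorem bddAbove_card_sub_one (hV : ∀ F ∈ Δ, F ⊆ V) :
    BddAbove ((fun F : Finset ℕ => (F.card : ℤ) - 1) '' Δ) := by
  refine ⟨V.card, ?_⟩
  rintro _ ⟨F, hF, rfl⟩
  have := Finset.card_le_card (hV F hF)
  dsimp only
  omega

theorem card_le_sdim (hV : ∀ F ∈ Δ, F ⊆ V) {F : Finset ℕ} (hF : F ∈ Δ) :
    (F.card : ℤ) - 1 ≤ sdim Δ :=
  le_csSup (bddAbove_card_sub_one hV) ⟨F, hF, rfl⟩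

theorem exists_card_eq_sdim (hV : ∀ F ∈ Δ, F ⊆ V) (h : Δ.Nonempty) :
    ∃ F ∈ Δ, (F.card : ℤ) - 1 = sdim Δ :=
  Int.csSup_mem (h.image _) (bddAbove_card_sub_one hV)

end Dimension

end Contraction

/-- Remark 3.3 / 4.6. Let `Γ` be a `(d-1)`-dimensional complex on `[n]`
satisfying the Link condition w.r.t. `{i,j}`, with `dim C_Γ(ij) = d-1` and
`dim lk_Γ({i,j}) = d-3`. If `C_Γ(ij)` and `lk_Γ({i,j})` are Cohen–Macaulay over an
infinite field `K`, then so is `Γ`. -/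
theorem stmt9 (K : Type) [Field K] (hK : Infinite K)
    (n d i j : ℕ) (hi : 1 ≤ i) (hij : i < j) (hj : j ≤ n)
    (Γ : Set (Finset ℕ)) (hΓ : SimplicialComplexOn (Finset.Icc 1 n) Γ)
    (hdim : sdim Γ = (d : ℤ) - 1)
    (hlc : LinkCondition Γ i j)
    (hcd : sdim (contraction Γ i j) = (d : ℤ) - 1)
    (hld : sdim (linkOf Γ {i, j}) = (d : ℤ) - 3)
    (h1 : ComplexCM K n (contraction Γ i j))
    (h2 : ComplexCM K n (linkOf Γ {i, j})) :
    ComplexCM K n Γ := by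
  obtain ⟨hV, hvert, hdown⟩ := hΓ
  obtain ⟨a, rfl⟩ : ∃ a : Fin n, (a : ℕ) + 1 = i := ⟨⟨i - 1, by omega⟩, by simp; omega⟩
  obtain ⟨b, rfl⟩ : ∃ b : Fin n, (b : ℕ) + 1 = j := ⟨⟨j - 1, by omega⟩, by simp; omega⟩
  have hab : a ≠ b := fun h => by simp [h] at hij
  have ha : {(a : ℕ) + 1} ∈ Γ := hvert _ (Finset.mem_Icc.mpr ⟨hi, a.2⟩)
  have hb : {(b : ℕ) + 1} ∈ Γ := hvert _ (Finset.mem_Icc.mpr ⟨by omega, hj⟩)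
  have hL0 : ∅ ∈ linkOf Γ {(a : ℕ) + 1, (b : ℕ) + 1} := by
    rw [← hlc]
    exact ⟨⟨by simp, by simpa using ha⟩, ⟨by simp, by simpa using hb⟩⟩
  have hE : {(a : ℕ) + 1, (b : ℕ) + 1} ∈ Γ := by simpa using hL0.2
  have h0 : ∅ ∈ Γ := hdown _ hE _ (Finset.empty_subset _)
  have hC0 : ∅ ∈ contraction Γ ((a : ℕ) + 1) ((b : ℕ) + 1) := Or.inl ⟨h0, by simp⟩
  have hLV : ∀ F ∈ linkOf Γ {(a : ℕ) + 1, (b : ℕ) + 1}, F ⊆ Finset.Icc 1 n :=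
    fun F hF => Finset.subset_union_left.trans (hV _ hF.2)
  have hCV : ∀ F ∈ contraction Γ ((a : ℕ) + 1) ((b : ℕ) + 1), F ⊆ Finset.Icc 1 n := by
    rintro _ (⟨hF, -⟩ | ⟨F, hF, -, rfl⟩)
    · exact hV _ hF
    · exact Finset.union_subset ((Finset.erase_subset _ _).trans (hV F hF)) (hV _ hb)
  obtain ⟨F, hF, hFd⟩ := exists_card_eq_sdim hV ⟨_, h0⟩
  obtain ⟨G, hG, hGd⟩ := exists_card_eq_sdim hCV ⟨_, hC0⟩
  obtain ⟨H, hH, hHd⟩ := exists_card_eq_sdim hLV ⟨_, hL0⟩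
  rw [hdim] at hFd
  rw [hcd] at hGd
  rw [hld] at hHd
  obtain rfl : d = H.card + 2 := by omega
  have hFc : F.card = H.card + 2 := by omega
  have hGc : G.card = H.card + 2 := by omega
  have hC := card_le_ringKrullDim_srIdeal (K := K)
    (contraction_mem_of_subset hdown hij.ne) hG (hCV G hG)
  have hL := card_le_ringKrullDim_srIdeal (K := K) (linkOf_mem_of_subset hdown _) hH (hLV H hH)
  rw [hGc] at hC
  have hdepth := depthGE_srIdeal_of_contraction hdown hab hE hlc
    (IsCMIdeal.depthGE (srIdeal_le_idealOfVars hC0) h1 hC)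
    (IsCMIdeal.depthGE (srIdeal_le_idealOfVars hL0) h2 hL)
  refine isCMIdeal_of_depthGE (srIdeal_le_idealOfVars h0) (le_antisymm ?_ ?_) hdepth
  · refine ringKrullDim_srIdeal_le fun F' hF' => ?_
    have := card_le_sdim hV hF'
    omega
  · rw [← hFc]
    exact card_le_ringKrullDim_srIdeal hdown hF (hV F hF)
end
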